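/- arXiv:1409.3473 — 2 statements merged into one kernel-verified Lean document; each statement's English description precedes it below -/
import Mathlib

section
/- (Hochster–Huneke) Let (A, 𝔪) be a d-dimensional complete equidimensional reduced Noetherian local ring of prime characteristic p and let I ⊆ I' be 𝔪-primary ideals of A. Then e_HK(I') = e_HK(I) if and only if I' ⊆ I^*. -/
open IsLocalRing Filter Topology
open scoped TensorProduct

/-- The Frobenius bracket power `I^{[q]}`: the ideal generated by `q`-th powers of elements of `I`. -/
def Ideal.bracketPow {R : Type*} [CommRing R] (I : Ideal R) (q : ℕ) : Ideal R :=
  Ideal.span ((fun a => a ^ q) '' (I : Set R))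

/-- `R°`: the set of elements of `R` not contained in any minimal prime ideal. -/
def ringCirc (R : Type*) [CommRing R] : Set R :=
  {c | ∀ P ∈ minimalPrimes R, c ∉ P}

/-- The tight closure of an ideal `I` in a ring of characteristic `p`:
`x ∈ I^*` iff there is `c ∈ R°` with `c * x ^ (p ^ e) ∈ I^{[p^e]}` for all sufficiently
large `e`. -/
def tightClosure {R : Type*} [CommRing R] (p : ℕ) (I : Ideal R) : Set R :=
  {x | ∃ c ∈ ringCirc R, ∃ N : ℕ, ∀ e : ℕ, N ≤ e → c * x ^ p ^ e ∈ I.bracketPow (p ^ e)}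

/-- `x` is integral over the ideal `J`: there are `n ≥ 1` and `aᵢ ∈ Jⁱ` with
`x ^ n + a₁ x ^ (n-1) + ⋯ + aₙ = 0`. -/
def IsIntegralOverIdeal {R : Type*} [CommRing R] (J : Ideal R) (x : R) : Prop :=
  ∃ n : ℕ, 0 < n ∧ ∃ a : ℕ → R, (∀ i ∈ Finset.Icc 1 n, a i ∈ J ^ i) ∧
    x ^ n + ∑ i ∈ Finset.Icc 1 n, a i * x ^ (n - i) = 0

/-- `R` is F-finite: `F_*R` is a finitely generated `R`-module, i.e. there is a finite set
of generators `s` such that every element of `R` is an `R`-linear combination of elements of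
`s` with respect to the Frobenius-twisted action `r • b = r ^ p * b`. -/
def FFinite (R : Type*) [CommRing R] (p : ℕ) : Prop :=
  ∃ s : Finset R, ∀ x : R, ∃ a : R → R, x = ∑ b ∈ s, a b ^ p * b

/-- The map `cF^e : R → F^e_* R`, `x ↦ c * x ^ (p ^ e)`, splits as an `R`-module
homomorphism: there is an additive `φ : R → R` with `φ (r ^ (p ^ e) * x) = r * φ x`
for all `r, x` and `φ c = 1`. -/
def FrobSplitsWith {R : Type*} [CommRing R] (p : ℕ) (c : R) (e : ℕ) : Prop :=
  ∃ φ : R →+ R, (∀ r x : R, φ (r ^ p ^ e * x) = r * φ x) ∧ φ c = 1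

/-- `R` is strongly F-regular: F-finite, reduced, and for every `c ∈ R°` some `cF^e` splits. -/
def StronglyFRegular (R : Type*) [CommRing R] (p : ℕ) : Prop :=
  FFinite R p ∧ IsReduced R ∧ ∀ c ∈ ringCirc R, ∃ e : ℕ, FrobSplitsWith p c e

/-- `R` is F-pure: the Frobenius map `R → F_* R` splits as an `R`-module homomorphism. -/
def FPure (R : Type*) [CommRing R] (p : ℕ) : Prop :=
  ∃ φ : R →+ R, (∀ r x : R, φ (r ^ p * x) = r * φ x) ∧ φ 1 = 1

/-- A regular local ring: a Noetherian local ring whose maximal ideal can be generated by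
`dim R` elements. -/
def IsRegularLocal (R : Type*) [CommRing R] [IsLocalRing R] : Prop :=
  IsNoetherianRing R ∧ ∃ (d : ℕ) (x : Fin d → R),
    ringKrullDim R = d ∧ IsLocalRing.maximalIdeal R = Ideal.span (Set.range x)

/-- The height of an ideal: the infimum of the heights of the primes containing it. -/
noncomputable def idealHeight {R : Type*} [CommRing R] (I : Ideal R) : ℕ∞ :=
  ⨅ (P : PrimeSpectrum R) (_ : I ≤ P.asIdeal), Order.height P

/-- A parameter ideal: an ideal generated by `ht I` elements. -/
def IsParameterIdeal {R : Type*} [CommRing R] (I : Ideal R) : Prop :=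
  ∃ n : ℕ, idealHeight I = n ∧ ∃ x : Fin n → R, I = Ideal.span (Set.range x)

/-- A local ring is F-rational if every parameter ideal is tightly closed. -/
def FRationalLocal (R : Type*) [CommRing R] [IsLocalRing R] (p : ℕ) : Prop :=
  ∀ I : Ideal R, IsParameterIdeal I → tightClosure p I = ↑I

/-- A Cohen–Macaulay local ring: every full system of parameters `x₁, …, x_d`
(`d = dim B`) is a regular sequence, i.e. `(x₁, …, xᵢ) : xᵢ₊₁ = (x₁, …, xᵢ)`. -/
def IsCohenMacaulayLocalRing (B : Type*) [CommRing B] [IsLocalRing B] : Prop :=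
  ∀ d : ℕ, ringKrullDim B = d →
    ∀ x : Fin d → B, (∀ i, x i ∈ IsLocalRing.maximalIdeal B) →
      (Ideal.span (Set.range x)).radical = IsLocalRing.maximalIdeal B →
      ∀ i : Fin d,
        Submodule.colon (Ideal.span (x '' {j | (j : ℕ) < (i : ℕ)})) (Ideal.span {x i}) =
          Ideal.span (x '' {j | (j : ℕ) < (i : ℕ)})

/-- The length `ℓ_R M` of a module, as an extended natural number: the supremum of the
lengths of chains of submodules below `⊤`. -/
noncomputable def moduleLength (R M : Type*) [Ring R] [AddCommGroup M] [Module R M] : ℕ∞ :=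
  Order.height (⊤ : Submodule R M)

/-- The Frobenius endomorphism `x ↦ x ^ p`, as a ring homomorphism, in prime
characteristic `p`. -/
noncomputable def frobeniusRingHom (R : Type*) [CommRing R] (p : ℕ) [Fact p.Prime] [CharP R p] :
    R →+* R :=
  frobenius R p


section FrobeniusBasis

theorem exists_smul_mem_span_of_mem_span {S A L K : Type*} [CommRing S] [IsDomain S] [CommRing A]
    [Algebra S A] [Field K] [Algebra S K] [IsFractionRing S K] [CommRing L] [Algebra K L]
    [Algebra S L] [IsScalarTower S K L]
    (j : A →ₐ[S] L) (hj : Function.Injective j) {n : ℕ} (v : Fin n → A) (a : A)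
    (ha : j a ∈ Submodule.span K (Set.range fun i => j (v i))) :
    ∃ s : S, s ≠ 0 ∧ s • a ∈ Submodule.span S (Set.range v) := by
  rw [Submodule.mem_span_range_iff_exists_fun] at ha
  obtain ⟨c, hc⟩ := ha
  obtain ⟨b, hb⟩ := IsLocalization.exist_integer_multiples_of_finite (nonZeroDivisors S) c
  choose t ht using hb
  refine ⟨b, nonZeroDivisors.coe_ne_zero b, ?_⟩
  rw [Submodule.mem_span_range_iff_exists_fun]
  refine ⟨t, hj ?_⟩
  rw [map_sum, map_smul, ← hc, Finset.smul_sum]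
  refine Finset.sum_congr rfl fun i _ => ?_
  rw [map_smul, ← algebraMap_smul K (t i), ht i, smul_assoc]

theorem exists_frobenius_basis (p : ℕ) [Fact p.Prime] (S A : Type*) [CommRing S] [IsDomain S]
    [CommRing A] [Algebra S A] [Module.Finite S A] [CharP S p] [CharP A p]
    (htf : ∀ (s : S) (a : A), s • a = 0 → s = 0 ∨ a = 0) :
    ∃ (e0 n : ℕ) (c : Fin n → A) (D : S), D ≠ 0 ∧
      (∀ e, LinearIndependent S (fun i => (c i ^ p ^ e0) ^ p ^ e)) ∧
      (∀ e (b : A), D ^ p ^ e • b ^ p ^ e0 ∈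
        Submodule.span S (Set.range fun i => (c i ^ p ^ e0) ^ p ^ e)) := by
  classical
  let K := FractionRing S
  let L := TensorProduct S K A
  let j : A →ₐ[S] L := Algebra.TensorProduct.includeRight
  have hloc : IsLocalizedModule (nonZeroDivisors S) (TensorProduct.mk S K A 1) := inferInstance
  have hj : Function.Injective j := by
    rw [injective_iff_map_eq_zero]
    intro a ha
    have h1 : TensorProduct.mk S K A 1 a = 0 := ha
    rw [IsLocalizedModule.eq_zero_iff (nonZeroDivisors S)] at h1
    obtain ⟨s, hs⟩ := h1
    exact (htf s a hs).resolve_left (nonZeroDivisors.coe_ne_zero s)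
  have hp : p.Prime := Fact.out
  have : CharP L p := charP_of_injective_ringHom (f := j.toRingHom) hj p
  have : ExpChar L p := ExpChar.prime hp
  have : ExpChar A p := ExpChar.prime hp
  have : ExpChar S p := ExpChar.prime hp
  -- the decreasing chain
  let V : ℕ → Submodule K L := fun e => Submodule.span K (Set.range fun a : A => j a ^ p ^ e)
  have hV : Antitone V := by
    refine antitone_nat_of_succ_le fun e => Submodule.span_mono ?_
    rintro _ ⟨a, rfl⟩
    refine ⟨a ^ p, ?_⟩
    simp only [map_pow]
    rw [← pow_mul, pow_succ']
  obtain ⟨e0, he0⟩ := IsArtinian.monotone_stabilizes (R := K) (M := L)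
    ⟨fun e => OrderDual.toDual (V e), fun a b h => hV h⟩
  replace he0 : ∀ m, e0 ≤ m → V e0 = V m := fun m hm => he0 m hm
  obtain ⟨n, hn, f, hf1, hf2, hf3⟩ : ∃ n, n = Module.finrank K (V e0) ∧ ∃ f : Fin n → L,
      (∀ i, ∃ a : A, j a ^ p ^ e0 = f i) ∧ Submodule.span K (Set.range f) = V e0 ∧
      LinearIndependent K f :=
    ⟨_, rfl, Submodule.exists_fun_fin_finrank_span_eq K
      (Set.range fun a : A => j a ^ p ^ e0)⟩
  choose c hc using hf1
  have hspan : ∀ e, Submodule.span K (Set.range fun i => f i ^ p ^ e) = V e0 := by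
    intro e
    apply le_antisymm
    · rw [he0 (e0 + e) (by omega), Submodule.span_le]
      rintro _ ⟨i, rfl⟩
      refine Submodule.subset_span ⟨c i, ?_⟩
      simp only
      rw [← hc, ← pow_mul, pow_add]
    · rw [he0 (e0 + e) (by omega), Submodule.span_le]
      rintro _ ⟨a, rfl⟩
      have h1 : j a ^ p ^ e0 ∈ Submodule.span K (Set.range f) := by
        rw [hf2]; exact Submodule.subset_span ⟨a, rfl⟩
      rw [Submodule.mem_span_range_iff_exists_fun] at h1
      obtain ⟨k, hk⟩ := h1
      simp only [SetLike.mem_coe]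
      rw [Submodule.mem_span_range_iff_exists_fun]
      refine ⟨fun i => k i ^ p ^ e, ?_⟩
      rw [pow_add, pow_mul, ← hk, sum_pow_char_pow]
      exact Finset.sum_congr rfl fun i _ => (smul_pow _ _ _).symm
  have hLI : ∀ e, LinearIndependent K (fun i => f i ^ p ^ e) := by
    intro e
    rw [linearIndependent_iff_card_eq_finrank_span, Set.finrank, hspan e, Fintype.card_fin, hn]
  have hjc : ∀ e i, j ((c i ^ p ^ e0) ^ p ^ e) = f i ^ p ^ e := by
    intro e i; rw [map_pow, map_pow, hc]
  have hden : ∀ e (a : A), ∃ s : S, s ≠ 0 ∧ s • a ^ p ^ e0 ∈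
      Submodule.span S (Set.range fun i => (c i ^ p ^ e0) ^ p ^ e) := by
    intro e a
    refine exists_smul_mem_span_of_mem_span (K := K) j hj _ _ ?_
    simp only [hjc]
    rw [hspan e, map_pow]
    exact Submodule.subset_span ⟨a, rfl⟩
  obtain ⟨G, hG⟩ := Module.Finite.fg_top (R := S) (M := A)
  choose s hs0 hs using hden
  -- common denominators
  let D1 : S := ∏ g ∈ G, s 0 g
  let D2 : S := ∏ i, s 1 (c i)
  have hD1 : D1 ≠ 0 := Finset.prod_ne_zero_iff.2 fun g _ => hs0 _ _
  have hD2 : D2 ≠ 0 := Finset.prod_ne_zero_iff.2 fun g _ => hs0 _ _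
  have hD2' : ∀ i, D2 • c i ^ p ^ e0 ∈
      Submodule.span S (Set.range fun i => (c i ^ p ^ e0) ^ p) := by
    intro i
    have h1 := hs 1 (c i)
    simp only [pow_one] at h1
    obtain ⟨t, ht⟩ : s 1 (c i) ∣ D2 := Finset.dvd_prod_of_mem _ (Finset.mem_univ i)
    rw [ht, mul_comm, mul_smul]
    exact Submodule.smul_mem _ _ h1
  have hD1' : ∀ b : A, D1 • b ^ p ^ e0 ∈
      Submodule.span S (Set.range fun i => (c i ^ p ^ e0)) := by
    intro b
    have hb : b ∈ Submodule.span S (G : Set A) := by rw [hG]; trivial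
    induction hb using Submodule.span_induction with
    | mem g hg =>
      have h1 := hs 0 g
      simp only [pow_zero, pow_one] at h1
      obtain ⟨t, ht⟩ : s 0 g ∣ D1 := Finset.dvd_prod_of_mem _ hg
      rw [ht, mul_comm, mul_smul]
      exact Submodule.smul_mem _ _ h1
    | zero =>
      rw [zero_pow (pow_ne_zero _ hp.ne_zero), smul_zero]; exact Submodule.zero_mem _
    | add x y _ _ hx hy =>
      rw [add_pow_char_pow, smul_add]; exact Submodule.add_mem _ hx hy
    | smul r x _ hx =>
      rw [smul_pow, smul_comm]; exact Submodule.smul_mem _ _ hx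
  -- powers
  have hfrob : ∀ (e : ℕ) (v : Fin n → A) (a : A), a ∈ Submodule.span S (Set.range v) →
      a ^ p ^ e ∈ Submodule.span S (Set.range fun i => v i ^ p ^ e) := by
    intro e v a ha
    rw [Submodule.mem_span_range_iff_exists_fun] at ha ⊢
    obtain ⟨k, hk⟩ := ha
    refine ⟨fun i => k i ^ p ^ e, ?_⟩
    rw [← hk, sum_pow_char_pow]
    exact Finset.sum_congr rfl fun i _ => (smul_pow _ _ _).symm
  have hstep : ∀ (e : ℕ) (i : Fin n), D2 ^ (∑ t ∈ Finset.range e, p ^ t) • c i ^ p ^ e0 ∈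
      Submodule.span S (Set.range fun i => (c i ^ p ^ e0) ^ p ^ e) := by
    intro e
    induction e with
    | zero =>
      intro i
      simp only [Finset.range_zero, Finset.sum_empty, pow_zero, one_smul, pow_one]
      exact Submodule.subset_span ⟨i, rfl⟩
    | succ e ih =>
      intro i
      rw [Finset.sum_range_succ, pow_add D2, mul_comm, mul_smul]
      have h2 : ∀ a ∈ Submodule.span S (Set.range fun i => (c i ^ p ^ e0) ^ p ^ e),
          D2 ^ p ^ e • a ∈ Submodule.span S (Set.range fun i => (c i ^ p ^ e0) ^ p ^ (e + 1)) := by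
        intro a ha
        induction ha using Submodule.span_induction with
        | mem g hg =>
          obtain ⟨i, rfl⟩ := hg
          have h3 := hfrob e _ _ (hD2' i)
          simp only [smul_pow, ← pow_mul] at h3 ⊢
          convert h3 using 4
          ring_nf
        | zero => rw [smul_zero]; exact Submodule.zero_mem _
        | add x y _ _ hx hy => rw [smul_add]; exact Submodule.add_mem _ hx hy
        | smul r x _ hx => rw [smul_comm]; exact Submodule.smul_mem _ _ hx
      exact h2 _ (ih i)
  have hgeom : ∀ e, ∑ t ∈ Finset.range e, p ^ t ≤ p ^ e := by
    intro e
    induction e with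
    | zero => simp
    | succ e ih =>
      rw [Finset.sum_range_succ, pow_succ]
      have := hp.two_le
      nlinarith [Nat.pos_of_ne_zero (pow_ne_zero e hp.ne_zero)]
  refine ⟨e0, n, c, D1 * D2, mul_ne_zero hD1 hD2, ?_, ?_⟩
  · intro e
    have h1 := (hLI e).restrict_scalars (R := S) (by
      intro a b hab
      have : (algebraMap S K a) = algebraMap S K b := by
        simpa [Algebra.smul_def] using hab
      exact IsFractionRing.injective S K this)
    refine LinearIndependent.of_comp j.toLinearMap ?_
    have h2 : (⇑j.toLinearMap ∘ fun i => (c i ^ p ^ e0) ^ p ^ e) = fun i => f i ^ p ^ e :=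
      funext fun i => hjc e i
    rw [h2]
    exact h1
  · intro e b
    have h4 : ∀ a ∈ Submodule.span S (Set.range fun i => (c i ^ p ^ e0)),
        D2 ^ p ^ e • a ∈ Submodule.span S (Set.range fun i => (c i ^ p ^ e0) ^ p ^ e) := by
      intro a ha
      induction ha using Submodule.span_induction with
      | mem g hg =>
        obtain ⟨i, rfl⟩ := hg
        obtain ⟨t, ht⟩ := pow_dvd_pow D2 (hgeom e)
        rw [ht, mul_comm, mul_smul]
        exact Submodule.smul_mem _ _ (hstep e i)
      | zero => rw [smul_zero]; exact Submodule.zero_mem _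
      | add x y _ _ hx hy => rw [smul_add]; exact Submodule.add_mem _ hx hy
      | smul r x _ hx => rw [smul_comm]; exact Submodule.smul_mem _ _ hx
    have h5 := h4 _ (hD1' b)
    obtain ⟨t, ht⟩ := dvd_pow_self D1 (pow_ne_zero e hp.ne_zero)
    rw [mul_pow, ht, mul_comm D1 t, mul_assoc, mul_smul, mul_comm, mul_smul]
    exact Submodule.smul_mem _ _ h5

/-- Core argument: applying a `p^{-e}`-linear map of the base to a relation. -/
theorem core_relation (p : ℕ) [Fact p.Prime] {S A : Type*} [CommRing S]
    [CommRing A] [Algebra S A] [CharP S p] [CharP A p]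
    (htf : ∀ (s : S) (a : A), s • a = 0 → s = 0 ∨ a = 0)
    (e0 n : ℕ) (c : Fin n → A) (D : S) (hD : D ≠ 0) (e : ℕ)
    (hLI : LinearIndependent S (fun i => (c i ^ p ^ e0) ^ p ^ e))
    (h0 : ∀ (b : A), D • b ^ p ^ e0 ∈ Submodule.span S (Set.range fun i => (c i ^ p ^ e0)))
    (h1 : ∀ (b : A), D ^ p ^ e • b ^ p ^ e0 ∈
        Submodule.span S (Set.range fun i => (c i ^ p ^ e0) ^ p ^ e))
    (σ : S →+ S) (hσ : ∀ s t, σ (s ^ p ^ e * t) = s * σ t) (f : S) (hf : IsUnit (σ f))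
    {ι : Type*} (T : Finset ι) (x : A) (r a : ι → A)
    (hrel : f • (x ^ p ^ e0) ^ p ^ e = ∑ i ∈ T, r i ^ p ^ e0 * (a i ^ p ^ e0) ^ p ^ e)
    (J : Ideal A) (ha : ∀ i ∈ T, a i ^ p ^ e0 ∈ J) : algebraMap S A D * x ^ p ^ e0 ∈ J := by
  classical
  have hp : p.Prime := Fact.out
  have : ExpChar A p := ExpChar.prime hp
  have : ExpChar S p := ExpChar.prime hp
  let val : (Fin n → S) → A := fun u => ∑ k, u k • (c k ^ p ^ e0) ^ p ^ e
  let Φ : (Fin n → S) →+ A :=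
    { toFun := fun u => ∑ k, σ (u k) • c k ^ p ^ e0
      map_zero' := by simp
      map_add' := fun u v => by simp [add_smul, Finset.sum_add_distrib] }
  have hval_inj : ∀ u v, val u = val v → u = v := by
    intro u v huv
    have := Fintype.linearIndependent_iff.1 hLI (u - v) (by
      simp only [Pi.sub_apply, sub_smul, Finset.sum_sub_distrib]
      exact sub_eq_zero.2 huv)
    funext i
    exact sub_eq_zero.1 (this i)
  have hval_add : ∀ u v, val (u + v) = val u + val v := by
    intro u v; simp [val, add_smul, Finset.sum_add_distrib]
  have hval_zero : val 0 = 0 := by simp [val]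
  -- multiplication operators
  have hT : ∀ (w : A) (u : Fin n → S), ∃ v, val v = D ^ p ^ e • ((w ^ p ^ e0) ^ p ^ e * val u) ∧
      Φ v = D • (w ^ p ^ e0 * Φ u) := by
    intro w u
    have hm : ∀ i, ∃ m : Fin n → S, ∑ k, m k • c k ^ p ^ e0 = D • (w * c i) ^ p ^ e0 := by
      intro i
      exact (Submodule.mem_span_range_iff_exists_fun S).1 (h0 (w * c i))
    choose m hm using hm
    refine ⟨fun k => ∑ i, m i k ^ p ^ e * u i, ?_, ?_⟩
    · have hq : ∀ i, ∑ k, (m i k) ^ p ^ e • (c k ^ p ^ e0) ^ p ^ e =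
          D ^ p ^ e • ((w * c i) ^ p ^ e0) ^ p ^ e := by
        intro i
        rw [← smul_pow, ← hm i, sum_pow_char_pow]
        exact Finset.sum_congr rfl fun k _ => (smul_pow _ _ _).symm
      simp only [val, Finset.sum_smul]
      rw [Finset.sum_comm, Finset.mul_sum, Finset.smul_sum]
      refine Finset.sum_congr rfl fun i _ => ?_
      calc ∑ k, (m i k ^ p ^ e * u i) • (c k ^ p ^ e0) ^ p ^ e
          = u i • ∑ k, (m i k) ^ p ^ e • (c k ^ p ^ e0) ^ p ^ e := by
            rw [Finset.smul_sum]
            exact Finset.sum_congr rfl fun k _ => by rw [mul_comm, mul_smul]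
        _ = _ := by
            rw [hq i, mul_smul_comm, smul_comm, mul_pow, mul_pow]
    · simp only [Φ, AddMonoidHom.coe_mk, ZeroHom.coe_mk, map_sum, hσ, Finset.sum_smul]
      rw [Finset.sum_comm, Finset.mul_sum, Finset.smul_sum]
      refine Finset.sum_congr rfl fun i _ => ?_
      calc ∑ k, (m i k * σ (u i)) • (c k ^ p ^ e0)
          = σ (u i) • ∑ k, (m i k) • (c k ^ p ^ e0) := by
            rw [Finset.smul_sum]
            exact Finset.sum_congr rfl fun k _ => by rw [mul_comm, mul_smul]
        _ = _ := by
            rw [hm i, mul_smul_comm, smul_comm, mul_pow]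
  -- coordinates of `r i`
  have hu : ∀ i, ∃ u : Fin n → S, val u = D ^ p ^ e • r i ^ p ^ e0 := fun i =>
    (Submodule.mem_span_range_iff_exists_fun S).1 (h1 (r i))
  choose u hu using hu
  -- coordinates of `f`
  obtain ⟨u0, hu0, hu0'⟩ : ∃ u : Fin n → S, val u = (D ^ p ^ e * f) • (1 : A) ∧
      Φ u = (D * σ f) • (1 : A) := by
    obtain ⟨m, hm⟩ := (Submodule.mem_span_range_iff_exists_fun S).1 (h0 1)
    rw [one_pow] at hm
    refine ⟨fun k => m k ^ p ^ e * f, ?_, ?_⟩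
    · have hq : ∑ k, (m k) ^ p ^ e • (c k ^ p ^ e0) ^ p ^ e = D ^ p ^ e • (1 : A) := by
        have : (D • (1 : A)) ^ p ^ e = D ^ p ^ e • (1 : A) := by rw [smul_pow, one_pow]
        rw [← this, ← hm, sum_pow_char_pow]
        exact Finset.sum_congr rfl fun k _ => (smul_pow _ _ _).symm
      rw [mul_comm, mul_smul, ← hq, Finset.smul_sum]
      exact Finset.sum_congr rfl fun k _ => by
        show (m k ^ p ^ e * f) • _ = _
        rw [mul_comm, mul_smul]
    · simp only [Φ, AddMonoidHom.coe_mk, ZeroHom.coe_mk, hσ]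
      rw [mul_comm, mul_smul, ← hm, Finset.smul_sum]
      exact Finset.sum_congr rfl fun k _ => by rw [mul_comm, mul_smul]
  obtain ⟨v0, hv0, hv0'⟩ := hT x u0
  have hv : ∀ i, ∃ v, val v = D ^ p ^ e • ((a i ^ p ^ e0) ^ p ^ e * val (u i)) ∧
      Φ v = D • (a i ^ p ^ e0 * Φ (u i)) := fun i => hT (a i) (u i)
  choose v hv hv' using hv
  have hval_sum : ∀ T : Finset ι, val (∑ i ∈ T, v i) = ∑ i ∈ T, val (v i) := by
    intro T
    induction T using Finset.induction_on with
    | empty => simpa using hval_zero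
    | insert i s his ih => rw [Finset.sum_insert his, Finset.sum_insert his, hval_add, ih]
  have heq : v0 = ∑ i ∈ T, v i := by
    apply hval_inj
    rw [hval_sum, hv0, hu0]
    simp only [hv, hu]
    rw [← Finset.smul_sum]
    congr 1
    have : ∀ i ∈ T, (a i ^ p ^ e0) ^ p ^ e * D ^ p ^ e • r i ^ p ^ e0 =
        D ^ p ^ e • (r i ^ p ^ e0 * (a i ^ p ^ e0) ^ p ^ e) := by
      intro i _
      rw [mul_smul_comm, mul_comm]
    rw [Finset.sum_congr rfl this, ← Finset.smul_sum, ← hrel, mul_smul_comm, mul_one, mul_smul]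
  have hΦ := congrArg Φ heq
  rw [map_sum, hv0', hu0'] at hΦ
  simp only [hv'] at hΦ
  rw [← Finset.smul_sum, ← sub_eq_zero, ← smul_sub] at hΦ
  have h3 := sub_eq_zero.1 ((htf _ _ hΦ).resolve_left hD)
  have h4 : algebraMap S A (σ f) * (algebraMap S A D * x ^ p ^ e0) ∈ J := by
    have : algebraMap S A (σ f) * (algebraMap S A D * x ^ p ^ e0) =
        x ^ p ^ e0 * (D * σ f) • (1 : A) := by
      rw [Algebra.smul_def, map_mul]; ring
    rw [this, h3]
    exact Ideal.sum_mem _ fun i hi => Ideal.mul_mem_right _ _ (ha i hi)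
  exact (Ideal.unit_mul_mem_iff_mem J (hf.map (algebraMap S A))).1 h4

end FrobeniusBasis

section CoefficientField

open KaehlerDifferential in
/-- Any field of characteristic `p` is formally smooth over the prime field. -/
theorem formallySmooth_of_charP (p : ℕ) [Fact p.Prime] (K : Type*) [Field K] [Algebra (ZMod p) K] :
    Algebra.FormallySmooth (ZMod p) K := by
  classical
  let F := ZMod p
  let P := MvPolynomial K F
  let π : P →ₐ[F] K := MvPolynomial.aeval id
  let : Algebra P K := π.toAlgebra
  have : IsScalarTower F P K := IsScalarTower.of_algebraMap_eq' π.comp_algebraMap.symm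
  have hsurj : Function.Surjective (algebraMap P K) := fun x =>
    ⟨MvPolynomial.X x, MvPolynomial.aeval_X _ _⟩
  refine ⟨inferInstance, ?_⟩
  rw [← Algebra.FormallySmooth.kerCotangentToTensor_injective_iff (R := F) (P := P) (A := K) hsurj,
    injective_iff_map_eq_zero]
  intro z hz
  obtain ⟨⟨f, hfI⟩, rfl⟩ := Ideal.toCotangent_surjective _ z
  rw [KaehlerDifferential.kerCotangentToTensor_toCotangent] at hz
  rw [Ideal.toCotangent_eq_zero]
  simp only at hz ⊢
  set I := RingHom.ker (algebraMap P K) with hI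
  let B := P ⧸ I ^ 2
  let J : Ideal B := I.cotangentIdeal
  have hJ : J ^ 2 = ⊥ := I.cotangentIdeal_square
  let K0 : IntermediateField F K := IntermediateField.adjoin F (f.vars : Set K)
  have : Algebra.EssFiniteType F K0 := by
    rw [IntermediateField.essFiniteType_iff]
    exact ⟨f.vars, rfl⟩
  have : Algebra.FormallySmooth F K0 := inferInstance
  -- the projection `B → K`
  let q : B →ₐ[F] K := Ideal.Quotient.liftₐ (I ^ 2) π (fun a ha =>
    (Ideal.pow_le_self two_ne_zero ha : a ∈ I))
  have hqs : Function.Surjective q := fun x => by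
    obtain ⟨y, hy⟩ := hsurj x
    exact ⟨Ideal.Quotient.mk _ y, hy⟩
  have hqker : ∀ b, q b = 0 → b ∈ J := by
    intro b hb
    obtain ⟨y, rfl⟩ := Ideal.Quotient.mk_surjective b
    have : y ∈ I := hb
    exact I.mk_mem_cotangentIdeal.2 this
  have hnil : IsNilpotent (RingHom.ker (q : B →+* K)) := by
    refine ⟨2, ?_⟩
    rw [Submodule.zero_eq_bot, eq_bot_iff, ← hJ]
    exact Ideal.pow_right_mono (fun b hb => hqker b hb) 2
  let s : K0 →ₐ[F] B := Algebra.FormallySmooth.liftOfSurjective K0.val q hqs hnil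
  have hs : ∀ x, q (s x) = x := fun x =>
    Algebra.FormallySmooth.liftOfSurjective_apply K0.val q hqs hnil x
  let v0 : K → K0 := fun a => if h : a ∈ K0 then ⟨a, h⟩ else 0
  let val : K → B := fun a => if a ∈ f.vars then s (v0 a) else Ideal.Quotient.mk _ (MvPolynomial.X a)
  have hv0 : ∀ a ∈ f.vars, (v0 a : K) = a := by
    intro a ha
    have : a ∈ K0 := IntermediateField.subset_adjoin _ _ ha
    simp [v0, this]
  have hval : ∀ a, q (val a) = a := by
    intro a
    by_cases h : a ∈ f.vars
    · simp only [val, h, if_true, hs, hv0]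
    · simp only [val, h, if_false]
      exact MvPolynomial.aeval_X _ _
  let φ : P →ₐ[F] B := MvPolynomial.aeval val
  have hφq : q.comp φ = π := by
    apply MvPolynomial.algHom_ext
    intro a
    simp [φ, π, hval]
  let δ : Derivation F P J := derivationToSquareZeroOfLift J hJ φ (by
    apply MvPolynomial.algHom_ext
    intro a
    have h1 : φ (MvPolynomial.X a) - Ideal.Quotient.mk _ (MvPolynomial.X a) ∈ J := by
      apply hqker
      rw [map_sub, sub_eq_zero]
      exact congr($hφq (MvPolynomial.X a))
    exact (Ideal.Quotient.eq).2 h1)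
  have hδ : δ f = 0 := by
    have hex : Function.Exact (I.subtype) (Algebra.linearMap P K) := by
      intro y
      constructor
      · intro hy; exact ⟨⟨y, hy⟩, rfl⟩
      · rintro ⟨⟨y, hy⟩, rfl⟩; exact hy
    have hex2 := rTensor_exact (Ω[P⁄F]) hex hsurj
    have h1 : (LinearMap.rTensor (Ω[P⁄F]) (Algebra.linearMap P K)) ((1 : P) ⊗ₜ D F P f) = 0 := by
      rw [LinearMap.rTensor_tmul]
      simpa using hz
    obtain ⟨t, ht⟩ := (hex2 _).1 h1
    have h2 : ∀ t : I ⊗[P] Ω[P⁄F], δ.liftKaehlerDifferential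
        (TensorProduct.lid P _ (LinearMap.rTensor (Ω[P⁄F]) I.subtype t)) = 0 := by
      intro t
      induction t using TensorProduct.induction_on with
      | zero => simp
      | add x y hx hy => simp only [map_add, hx, hy, add_zero]
      | tmul x y =>
        simp only [LinearMap.rTensor_tmul, TensorProduct.lid_tmul, map_smul]
        ext
        generalize δ.liftKaehlerDifferential y = w
        have : Ideal.Quotient.mk (I ^ 2) (x : P) * (w : B) ∈ J ^ 2 := by
          rw [pow_two J]
          exact Ideal.mul_mem_mul (I.mk_mem_cotangentIdeal.2 x.2) w.2
        rw [hJ] at this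
        exact this
    have h3 := h2 t
    rw [ht, TensorProduct.lid_tmul, one_smul, Derivation.liftKaehlerDifferential_comp_D] at h3
    exact h3
  have h4 : φ f = 0 := by
    have h5 : φ f = s (MvPolynomial.aeval v0 f) := by
      rw [← AlgHom.comp_apply, MvPolynomial.comp_aeval]
      exact MvPolynomial.eval₂Hom_congr' rfl (fun i hi _ => by simp [val, hi]) rfl
    have h6 : (MvPolynomial.aeval v0 f : K0) = 0 := by
      apply Subtype.ext
      have : K0.val (MvPolynomial.aeval v0 f) = π f := by
        rw [← AlgHom.comp_apply, MvPolynomial.comp_aeval]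
        exact MvPolynomial.eval₂Hom_congr' rfl (fun i hi _ => by simp [hv0 i hi]) rfl
      exact this.trans hfI
    rw [h5, h6, map_zero]
  have h7 : (δ f : B) = φ f - Ideal.Quotient.mk _ f := rfl
  rw [hδ, h4, zero_sub] at h7
  exact Ideal.Quotient.eq_zero_iff_mem.1 (neg_eq_zero.1 h7.symm)

/-- Existence of a coefficient field. -/
theorem exists_coefficientField (p : ℕ) [Fact p.Prime] (A : Type*) [CommRing A] [IsLocalRing A]
    [CharP A p] (hcomp : IsAdicComplete (IsLocalRing.maximalIdeal A) A) :
    ∃ g : ResidueField A →+* A, ∀ x, residue A (g x) = x := by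
  let : Algebra (ZMod p) A := ZMod.algebra A p
  have : Algebra.FormallySmooth (ZMod p) (ResidueField A) := formallySmooth_of_charP p _
  obtain ⟨g, hg⟩ := Algebra.FormallySmooth.exists_mkₐ_comp_eq_of_isAdicComplete
    (I := maximalIdeal A) (AlgHom.id (ZMod p) (ResidueField A) : _ →ₐ[ZMod p] A ⧸ maximalIdeal A)
  exact ⟨g.toRingHom, fun x => congr($hg x)⟩

end CoefficientField

section PowerSeriesBase

theorem length_ne_top_of_radical_eq {A : Type*} [CommRing A] [IsLocalRing A] [IsNoetherianRing A]
    (J : Ideal A) (hJ : maximalIdeal A ≤ J.radical) : Module.length A (A ⧸ J) ≠ ⊤ := by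
  by_cases hJ1 : J = ⊤
  · have : Subsingleton (A ⧸ J) := Ideal.Quotient.subsingleton_iff.2 hJ1
    simp [Module.length_eq_zero]
  have hle : J ≤ maximalIdeal A := le_maximalIdeal hJ1
  have h1 : maximalIdeal A ∈ J.minimalPrimes := by
    refine ⟨⟨inferInstance, hle⟩, fun P hP hP2 => ?_⟩
    exact hJ.trans ((Ideal.IsPrime.radical_le_iff hP.1).2 hP.2)
  have : IsArtinianRing (A ⧸ J) := quotient_artinian_of_mem_minimalPrimes_of_isLocalRing _ h1
  rw [Module.length_eq_of_surjective (R := A ⧸ J) (S := A) Ideal.Quotient.mk_surjective]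
  exact Module.length_ne_top

theorem length_field_eq {k A : Type*} [Field k] [CommRing A] [IsLocalRing A] [Algebra k A]
    (hres : Function.Surjective (algebraMap k (ResidueField A)))
    (M : Type*) [AddCommGroup M] [Module A M] [Module k M] [IsScalarTower k A M] :
    Module.length k M = Module.length A M := by
  have : IsLocalHom (algebraMap k A) := ⟨fun a ha => by
    refine isUnit_iff_ne_zero.2 ?_
    rintro rfl
    rw [map_zero] at ha
    exact not_isUnit_zero ha⟩
  rw [IsLocalRing.length_restrictScalars k A M]
  have h1 : Function.Surjective (algebraMap (ResidueField k) (ResidueField A)) := by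
    intro y
    obtain ⟨c, hc⟩ := hres y
    exact ⟨residue k c, hc⟩
  rw [Module.length_eq_of_surjective (S := ResidueField k) (R := ResidueField A) h1,
    Module.length_eq_one (ResidueField A) (ResidueField A), mul_one]

theorem exists_powerSeries_hom {k A : Type*} [Field k] [CommRing A] [IsLocalRing A] [Algebra k A]
    (hcomp : IsAdicComplete (maximalIdeal A) A) {d : ℕ} (x : Fin d → A)
    (hx : ∀ i, x i ∈ maximalIdeal A) :
    ∃ ψ : MvPowerSeries (Fin d) k →+* A, (∀ c, ψ (MvPowerSeries.C c) = algebraMap k A c) ∧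
      ∀ i, ψ (MvPowerSeries.X i) = x i := by
  let : WithIdeal A := ⟨maximalIdeal A⟩
  let : UniformSpace k := ⊥
  have : DiscreteTopology k := ⟨rfl⟩
  have : IsUniformAddGroup k := inferInstance
  have hadic : IsAdic (maximalIdeal A) := rfl
  obtain ⟨h1, h2⟩ := hadic.isAdicComplete_iff.1 hcomp
  have hφ : Continuous (algebraMap k A) := continuous_of_discreteTopology
  have ha : MvPowerSeries.HasEval x := ⟨fun i => WithIdeal.isTopologicallyNilpotent_of_mem (hx i),
    by rw [Filter.cofinite_eq_bot]; exact Filter.tendsto_bot⟩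
  refine ⟨MvPowerSeries.eval₂Hom hφ ha, fun c => ?_, fun i => ?_⟩
  · rw [MvPowerSeries.coe_eval₂Hom, MvPowerSeries.eval₂_C]
  · rw [MvPowerSeries.coe_eval₂Hom, MvPowerSeries.eval₂_X]

theorem isPrecomplete_pi {S : Type*} [CommRing S] (I : Ideal S) [IsPrecomplete I S] (m : ℕ) :
    IsPrecomplete I (Fin m → S) := by
  have hmem : ∀ (n : ℕ) (z : Fin m → S), z ∈ (I ^ n • ⊤ : Submodule S (Fin m → S)) ↔
      ∀ i, z i ∈ I ^ n := by
    intro n z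
    constructor
    · intro hz i
      refine Submodule.smul_induction_on (p := fun z => z i ∈ I ^ n) hz ?_ ?_
      · intro r hr y _
        exact Ideal.mul_mem_right _ _ hr
      · intro x y hx hy
        exact Ideal.add_mem _ hx hy
    · intro hz
      rw [pi_eq_sum_univ' z]
      exact Submodule.sum_mem _ fun i _ => Submodule.smul_mem_smul (hz i) trivial
  refine ⟨fun f hf => ?_⟩
  have : ∀ i, ∃ L : S, ∀ n, f n i ≡ L [SMOD (I ^ n • ⊤ : Submodule S S)] := by
    intro i
    refine IsPrecomplete.prec inferInstance (f := fun n => f n i) fun {m n} hmn => ?_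
    have := hf hmn
    rw [SModEq.sub_mem] at this ⊢
    rw [hmem] at this
    simpa using this i
  choose L hL using this
  refine ⟨L, fun n => ?_⟩
  rw [SModEq.sub_mem, hmem]
  intro i
  have := hL i n
  rw [SModEq.sub_mem] at this
  simpa using this

theorem finite_over_powerSeries {k A : Type*} [Field k] [CommRing A] [IsLocalRing A]
    [IsNoetherianRing A] [Algebra k A]
    (hres : Function.Surjective (algebraMap k (ResidueField A)))
    (hcomp : IsAdicComplete (maximalIdeal A) A) {d : ℕ} (x : Fin d → A)
    (hx : ∀ i, x i ∈ maximalIdeal A) (hrad : maximalIdeal A ≤ (Ideal.span (Set.range x)).radical)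
    [Algebra (MvPowerSeries (Fin d) k) A]
    (hC : ∀ c, algebraMap (MvPowerSeries (Fin d) k) A (MvPowerSeries.C c) = algebraMap k A c)
    (hX : ∀ i, algebraMap (MvPowerSeries (Fin d) k) A (MvPowerSeries.X i) = x i) :
    Module.Finite (MvPowerSeries (Fin d) k) A := by
  classical
  let S := MvPowerSeries (Fin d) k
  let I : Ideal S := Ideal.span (Set.range MvPowerSeries.X)
  have hmap : I.map (algebraMap S A) = Ideal.span (Set.range x) := by
    rw [Ideal.map_span, ← Set.range_comp]
    congr 2
    funext i
    exact hX i
  have hle : Ideal.span (Set.range x) ≤ maximalIdeal A := by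
    rw [Ideal.span_le]; rintro _ ⟨i, rfl⟩; exact hx i
  have hhaus : IsHausdorff I A := by
    rw [← IsHausdorff.map_algebraMap_iff (S := A), hmap]
    refine ⟨fun y hy => ?_⟩
    refine hcomp.toIsHausdorff.haus y fun n => ?_
    exact (hy n).mono (Submodule.smul_mono_left (Ideal.pow_right_mono hle n))
  have hfin : Module.Finite k (A ⧸ Ideal.span (Set.range x)) := by
    have h1 := length_ne_top_of_radical_eq _ hrad
    rw [← length_field_eq (k := k) hres, Module.length_ne_top_iff,
      isFiniteLength_iff_isNoetherian_isArtinian] at h1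
    have := h1.1
    infer_instance
  obtain ⟨m, s, hs⟩ := Module.Finite.exists_fin (R := k) (M := A ⧸ Ideal.span (Set.range x))
  choose t ht using fun i => Ideal.Quotient.mk_surjective (s i)
  have hprec : IsPrecomplete I (Fin m → S) := isPrecomplete_pi I m
  have hsurj := surjective_of_mkQ_comp_surjective (I := I) (M := Fin m → S) (N := A)
    (f := Fintype.linearCombination S t) (by
      intro y
      obtain ⟨y, rfl⟩ := Submodule.mkQ_surjective _ y
      have hy : Ideal.Quotient.mk (Ideal.span (Set.range x)) y ∈ Submodule.span k (Set.range s) := by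
        rw [hs]; trivial
      rw [Submodule.mem_span_range_iff_exists_fun] at hy
      obtain ⟨c, hc⟩ := hy
      refine ⟨fun i => MvPowerSeries.C (c i), ?_⟩
      rw [LinearMap.comp_apply, Submodule.mkQ_apply, Submodule.mkQ_apply, Submodule.Quotient.eq,
        Ideal.smul_top_eq_map, Submodule.restrictScalars_mem, hmap, ← Ideal.Quotient.eq, ← hc,
        Fintype.linearCombination_apply, map_sum]
      refine Finset.sum_congr rfl fun i _ => ?_
      rw [← ht i, Algebra.smul_def, hC, map_mul, Algebra.smul_def]
      rfl)
  exact Module.Finite.of_surjective _ hsurj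

end PowerSeriesBase

section TorsionFree

theorem exists_sop (B : Type*) [CommRing B] [IsLocalRing B] [IsNoetherianRing B] :
    ∃ n : ℕ, ringKrullDim B = n ∧ ∃ x : Fin n → B, (∀ i, x i ∈ maximalIdeal B) ∧
      maximalIdeal B ≤ (Ideal.span (Set.range x)).radical := by
  obtain ⟨s, hs, hcard⟩ := (maximalIdeal B).exists_finset_card_eq_height_of_isNoetherianRing
  refine ⟨s.card, ?_, fun i => (s.equivFin.symm i : B), fun i => ?_, ?_⟩
  · rw [← IsLocalRing.maximalIdeal_height_eq_ringKrullDim, ← hcard]; rfl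
  · exact hs.1.2 (Ideal.subset_span (s.equivFin.symm i).2)
  · have hr : Set.range (fun i => (s.equivFin.symm i : B)) = (s : Set B) := by
      ext b
      constructor
      · rintro ⟨i, rfl⟩; exact (s.equivFin.symm i).2
      · intro hb; exact ⟨s.equivFin ⟨b, hb⟩, by simp⟩
    rw [hr, Ideal.radical_eq_sInf]
    refine le_sInf fun P hP => ?_
    exact hs.2 ⟨hP.2, hP.1⟩ (le_maximalIdeal hP.2.ne_top)

theorem ringKrullDim_le_of_sop {B : Type*} [CommRing B] [IsLocalRing B] [IsNoetherianRing B]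
    {n : ℕ} (x : Fin n → B) (hx : ∀ i, x i ∈ maximalIdeal B)
    (hrad : maximalIdeal B ≤ (Ideal.span (Set.range x)).radical) : ringKrullDim B ≤ n := by
  classical
  rw [← IsLocalRing.maximalIdeal_height_eq_ringKrullDim]
  have h1 : (maximalIdeal B).height ≤ ((Finset.univ.image x).card : ℕ∞) := by
    refine Ideal.height_le_card_of_mem_minimalPrimes_span_finset ?_
    rw [Finset.coe_image, Finset.coe_univ, Set.image_univ]
    refine ⟨⟨inferInstance, ?_⟩, fun P hP hP2 => ?_⟩
    · rw [Ideal.span_le]; rintro _ ⟨i, rfl⟩; exact hx i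
    · exact hrad.trans ((Ideal.IsPrime.radical_le_iff hP.1).2 hP.2)
  have h2 : ((Finset.univ.image x).card : ℕ∞) ≤ (n : ℕ∞) := by
    have := Finset.card_image_le (s := (Finset.univ : Finset (Fin n))) (f := x)
    simp only [Finset.card_univ, Fintype.card_fin] at this
    exact_mod_cast this
  exact_mod_cast h1.trans h2

theorem mem_span_X_of_constantCoeff {k : Type*} [Field k] {d : ℕ} (s : MvPowerSeries (Fin d) k)
    (hs : MvPowerSeries.constantCoeff s = 0) :
    s ∈ Ideal.span (Set.range (MvPowerSeries.X : Fin d → MvPowerSeries (Fin d) k)) := by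
  classical
  have hpick : ∀ n : Fin d →₀ ℕ, ∃ i : Option (Fin d), (n = 0 → i = none) ∧
      (n ≠ 0 → ∃ j, i = some j ∧ n j ≠ 0) := by
    intro n
    by_cases hn : n = 0
    · exact ⟨none, fun _ => rfl, fun h => absurd hn h⟩
    · obtain ⟨j, hj⟩ := Finsupp.ne_iff.1 hn
      exact ⟨some j, fun h => absurd h hn, fun _ => ⟨j, rfl, hj⟩⟩
  choose pick hp0 hp1 using hpick
  let t : Fin d → MvPowerSeries (Fin d) k := fun i m =>
    if pick (m + Finsupp.single i 1) = some i then
      MvPowerSeries.coeff (m + Finsupp.single i 1) s else 0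
  have ht : ∀ i m, MvPowerSeries.coeff m (t i) = if pick (m + Finsupp.single i 1) = some i then
      MvPowerSeries.coeff (m + Finsupp.single i 1) s else 0 := fun i m => rfl
  have : s = ∑ i, MvPowerSeries.X i * t i := by
    ext n
    rw [map_sum]
    simp only [MvPowerSeries.X, MvPowerSeries.coeff_monomial_mul, one_mul, ht]
    by_cases hn : n = 0
    · subst hn
      rw [MvPowerSeries.coeff_zero_eq_constantCoeff_apply, hs]
      symm
      refine Finset.sum_eq_zero fun i _ => ?_
      rw [if_neg]
      intro h
      have := h i
      simp at this
    · obtain ⟨j, hj, hnj⟩ := hp1 n hn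
      have hle : ∀ i, Finsupp.single i 1 ≤ n ↔ n i ≠ 0 := by
        intro i
        rw [Finsupp.single_le_iff]
        omega
      rw [Finset.sum_eq_single j]
      · rw [if_pos ((hle j).2 hnj), tsub_add_cancel_of_le ((hle j).2 hnj), if_pos hj]
      · intro i _ hij
        by_cases h : Finsupp.single i 1 ≤ n
        · rw [if_pos h, tsub_add_cancel_of_le h, if_neg]
          rw [hj]
          intro h2
          exact hij (Option.some.inj h2).symm
        · rw [if_neg h]
      · intro h; exact absurd (Finset.mem_univ j) h
  rw [this]
  exact Ideal.sum_mem _ fun i _ => Ideal.mul_mem_right _ _ (Ideal.subset_span ⟨i, rfl⟩)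

theorem maximalIdeal_mvPowerSeries {k : Type*} [Field k] {d : ℕ} :
    maximalIdeal (MvPowerSeries (Fin d) k) = Ideal.span (Set.range MvPowerSeries.X) := by
  apply le_antisymm
  · intro s hs
    refine mem_span_X_of_constantCoeff s ?_
    by_contra h
    exact hs (MvPowerSeries.isUnit_iff_constantCoeff.2 (isUnit_iff_ne_zero.2 h))
  · rw [Ideal.span_le]
    rintro _ ⟨i, rfl⟩
    intro h
    have := MvPowerSeries.isUnit_iff_constantCoeff.1 h
    simp at this

theorem injective_to_quotient {k A : Type*} [Field k] [CommRing A] [IsLocalRing A]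
    [IsNoetherianRing A] {d : ℕ} (x : Fin d → A)
    (hx : ∀ i, x i ∈ maximalIdeal A) (hrad : maximalIdeal A ≤ (Ideal.span (Set.range x)).radical)
    [Algebra (MvPowerSeries (Fin d) k) A]
    (hX : ∀ i, algebraMap (MvPowerSeries (Fin d) k) A (MvPowerSeries.X i) = x i)
    (P : Ideal A) [P.IsPrime] (hP : ringKrullDim (A ⧸ P) = d)
    (f : MvPowerSeries (Fin d) k) (hf : algebraMap (MvPowerSeries (Fin d) k) A f ∈ P) : f = 0 := by
  classical
  by_contra hf0
  let S := MvPowerSeries (Fin d) k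
  let B := A ⧸ P
  have : IsLocalRing B := IsLocalRing.of_surjective' (Ideal.Quotient.mk P) Ideal.Quotient.mk_surjective
  let π : S →+* B := (Ideal.Quotient.mk P).comp (algebraMap S A)
  have hmB : maximalIdeal B = (maximalIdeal A).map (Ideal.Quotient.mk P) := by
    symm
    apply IsLocalRing.eq_maximalIdeal
    exact Ideal.IsMaximal.map_of_surjective_of_ker_le Ideal.Quotient.mk_surjective (by
      rw [Ideal.mk_ker]; exact le_maximalIdeal (Ideal.IsPrime.ne_top inferInstance))
  have hmS : (maximalIdeal S).map π ≤ maximalIdeal B := by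
    rw [maximalIdeal_mvPowerSeries, Ideal.map_span, Ideal.span_le, hmB]
    rintro _ ⟨_, ⟨i, rfl⟩, rfl⟩
    refine Ideal.mem_map_of_mem _ ?_
    rw [hX]
    exact hx i
  have hfu : ¬ IsUnit f := by
    intro h
    exact (Ideal.IsPrime.ne_top (inferInstance : P.IsPrime)) (Ideal.eq_top_of_isUnit_mem _ hf (h.map _))
  let T := S ⧸ Ideal.span {f}
  have hne : Ideal.span {f} ≠ (⊤ : Ideal S) := by
    rw [Ne, Ideal.span_singleton_eq_top]; exact hfu
  have : Nontrivial T := Ideal.Quotient.nontrivial_iff.2 hne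
  have : IsLocalRing T := IsLocalRing.of_surjective' (Ideal.Quotient.mk _) Ideal.Quotient.mk_surjective
  have hloc : IsLocalHom (Ideal.Quotient.mk (Ideal.span {f})) :=
    IsLocalHom.of_surjective _ Ideal.Quotient.mk_surjective
  obtain ⟨n, hn, t, htm, htr⟩ := exists_sop T
  have hdimS : ringKrullDim S ≤ d := by
    refine ringKrullDim_le_of_sop (B := S) MvPowerSeries.X (fun i => ?_) ?_
    · rw [maximalIdeal_mvPowerSeries]; exact Ideal.subset_span ⟨i, rfl⟩
    · rw [← maximalIdeal_mvPowerSeries]; exact Ideal.le_radical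
  have hdimT : ringKrullDim T + 1 ≤ ringKrullDim S :=
    ringKrullDim_quotient_succ_le_of_nonZeroDivisor (mem_nonZeroDivisors_of_ne_zero hf0)
  let θ : T →+* B := Ideal.Quotient.lift _ π (by
    intro a ha
    obtain ⟨b, rfl⟩ := Ideal.mem_span_singleton'.1 ha
    rw [map_mul]
    have : π f = 0 := Ideal.Quotient.eq_zero_iff_mem.2 hf
    rw [this, mul_zero])
  have hmT : ∀ z ∈ maximalIdeal T, θ z ∈ maximalIdeal B := by
    intro z hz
    obtain ⟨y, rfl⟩ := Ideal.Quotient.mk_surjective z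
    refine hmS (Ideal.mem_map_of_mem _ ?_ : π y ∈ _)
    intro hy
    exact hz (hy.map _)
  have hle : ringKrullDim B ≤ n := by
    refine ringKrullDim_le_of_sop (fun i => θ (t i)) (fun i => hmT _ (htm i)) ?_
    have h1 : maximalIdeal B ≤ (Ideal.span (Set.range fun i => π (MvPowerSeries.X i))).radical := by
      rw [hmB, Ideal.map_le_iff_le_comap]
      intro a ha
      obtain ⟨N, hN⟩ := hrad ha
      refine ⟨N, ?_⟩
      rw [← map_pow]
      have := Ideal.mem_map_of_mem (Ideal.Quotient.mk P) hN
      rw [Ideal.map_span, ← Set.range_comp] at this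
      convert this using 4
      exact congrArg (Ideal.Quotient.mk P) (hX _)
    refine h1.trans ?_
    rw [Ideal.radical_le_radical_iff, Ideal.span_le]
    rintro _ ⟨i, rfl⟩
    have h2 : Ideal.Quotient.mk (Ideal.span {f}) (MvPowerSeries.X i) ∈ maximalIdeal T := by
      have h3 : (MvPowerSeries.X i : S) ∈ maximalIdeal S := by
        rw [maximalIdeal_mvPowerSeries]; exact Ideal.subset_span ⟨i, rfl⟩
      intro h
      exact h3 ((isUnit_map_iff (Ideal.Quotient.mk (Ideal.span {f})) _).1 h)
    obtain ⟨N, hN⟩ := htr h2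
    refine ⟨N, ?_⟩
    have := Ideal.mem_map_of_mem θ hN
    rw [Ideal.map_span, ← Set.range_comp, map_pow] at this
    exact this
  have h5 : ringKrullDim B = d := hP
  rw [h5] at hle
  rw [hn] at hdimT
  have h6 := hdimT.trans hdimS
  have h7 : n + 1 ≤ d := by exact_mod_cast h6
  have h8 : d ≤ n := by exact_mod_cast hle
  omega

theorem torsionFree_of_equidim {k A : Type*} [Field k] [CommRing A] [IsLocalRing A]
    [IsNoetherianRing A] [IsReduced A] {d : ℕ} (x : Fin d → A)
    (hx : ∀ i, x i ∈ maximalIdeal A) (hrad : maximalIdeal A ≤ (Ideal.span (Set.range x)).radical)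
    [Algebra (MvPowerSeries (Fin d) k) A]
    (hX : ∀ i, algebraMap (MvPowerSeries (Fin d) k) A (MvPowerSeries.X i) = x i)
    (hequi : ∀ P ∈ minimalPrimes A, ringKrullDim (A ⧸ P) = d) :
    (∀ s : MvPowerSeries (Fin d) k, s ≠ 0 → algebraMap _ A s ∈ ringCirc A) ∧
    ∀ (s : MvPowerSeries (Fin d) k) (a : A), s • a = 0 → s = 0 ∨ a = 0 := by
  have h1 : ∀ s : MvPowerSeries (Fin d) k, s ≠ 0 → algebraMap _ A s ∈ ringCirc A := by
    intro s hs P hP hsP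
    have : P.IsPrime := hP.1.1
    exact hs (injective_to_quotient x hx hrad hX P (hequi P hP) s hsP)
  refine ⟨h1, fun s a hsa => ?_⟩
  by_contra! h
  apply h.2
  have h2 : a ∈ sInf (minimalPrimes A) := by
    rw [Submodule.mem_sInf]
    intro (P : Ideal A) hP
    have hPp : P.IsPrime := hP.1.1
    rw [Algebra.smul_def] at hsa
    have : algebraMap _ A s * a ∈ P := by rw [hsa]; exact P.zero_mem
    exact (hPp.mem_or_mem this).resolve_left (h1 s h.1 P hP)
  have h3 : sInf (minimalPrimes A) = (⊥ : Ideal A) := by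
    rw [minimalPrimes, Ideal.sInf_minimalPrimes]
    exact (nilradical_eq_zero A)
  rw [h3] at h2
  exact h2

end TorsionFree

section Sigma

theorem exists_frobenius_functional (p : ℕ) [Fact p.Prime] (k : Type*) [Field k] [CharP k p]
    (e : ℕ) (c : k) (hc : c ≠ 0) :
    ∃ l : k →+ k, (∀ a b, l (a ^ p ^ e * b) = a * l b) ∧ l c ≠ 0 := by
  have : ExpChar k p := ExpChar.prime Fact.out
  let φ : k →+* k := iterateFrobenius k p e
  let F := φ.fieldRange
  have h : ∃ g : Module.Dual F k, g c ≠ 0 := by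
    by_contra! h
    exact hc ((Module.forall_dual_apply_eq_zero_iff F c).1 h)
  obtain ⟨g, hg⟩ := h
  have hs : ∀ y : F, ∃ a : k, φ a = y := fun y => y.2
  choose ψ hψ using hs
  have hφ : Function.Injective φ := φ.injective
  refine ⟨⟨⟨fun b => ψ (g b), ?_⟩, ?_⟩, ?_, ?_⟩
  · apply hφ
    rw [hψ]; simp
  · intro a b
    apply hφ
    rw [map_add, hψ, hψ, hψ]; simp
  · intro a b
    apply hφ
    change φ (ψ _) = φ (a * ψ _)
    rw [map_mul φ, hψ, hψ]
    have : a ^ p ^ e * b = (⟨φ a, a, rfl⟩ : F) • b := by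
      rw [Subfield.smul_def]
      simp [φ, iterateFrobenius_def]
    rw [this, map_smul]
    rfl
  · intro h
    apply hg
    have h1 : ψ (g c) = 0 := h
    have := hψ (g c)
    rw [h1, map_zero] at this
    exact Subtype.ext this.symm

theorem coeff_pow_charP (p : ℕ) [Fact p.Prime] {k : Type*} [Field k] [CharP k p] {d : ℕ} (e : ℕ)
    (s : MvPowerSeries (Fin d) k) (m : Fin d →₀ ℕ) :
    MvPowerSeries.coeff (p ^ e • m) (s ^ p ^ e) = MvPowerSeries.coeff m s ^ p ^ e := by
  have : ExpChar k p := ExpChar.prime Fact.out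
  rw [← MvPowerSeries.map_iterateFrobenius_expand p (Fact.out : p.Prime).ne_zero]
  rw [MvPowerSeries.coeff_map, MvPowerSeries.coeff_expand_smul, iterateFrobenius_def]

theorem coeff_pow_charP_zero (p : ℕ) [Fact p.Prime] {k : Type*} [Field k] [CharP k p] {d : ℕ} (e : ℕ)
    (s : MvPowerSeries (Fin d) k) (m : Fin d →₀ ℕ) (hm : ∀ m', m ≠ p ^ e • m') :
    MvPowerSeries.coeff m (s ^ p ^ e) = 0 := by
  have : ExpChar k p := ExpChar.prime Fact.out
  rw [← MvPowerSeries.map_iterateFrobenius_expand p (Fact.out : p.Prime).ne_zero]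
  have h : ∃ i, ¬ p ^ e ∣ m i := by
    by_contra! h
    choose t ht using h
    refine hm (Finsupp.equivFunOnFinite.symm t) ?_
    ext i
    simp [ht i]
  obtain ⟨i, hi⟩ := h
  rw [MvPowerSeries.coeff_map, MvPowerSeries.coeff_expand_of_not_dvd _ _ _ hi, map_zero]

theorem exists_sigma (p : ℕ) [Fact p.Prime] {k : Type*} [Field k] [CharP k p] {d : ℕ} (e : ℕ)
    (f : MvPowerSeries (Fin d) k) (α : Fin d →₀ ℕ) (hα : ∀ i, α i < p ^ e)
    (hf : MvPowerSeries.coeff α f ≠ 0) :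
    ∃ σ : MvPowerSeries (Fin d) k →+ MvPowerSeries (Fin d) k,
      (∀ s t, σ (s ^ p ^ e * t) = s * σ t) ∧ IsUnit (σ f) := by
  classical
  obtain ⟨l, hl, hlf⟩ := exists_frobenius_functional p k e _ hf
  let σ : MvPowerSeries (Fin d) k →+ MvPowerSeries (Fin d) k :=
    { toFun := fun t β => l (MvPowerSeries.coeff (α + p ^ e • β) t)
      map_zero' := by funext β; simp; rfl
      map_add' := fun a b => by funext β; simp only [map_add]; rfl }
  have hσ : ∀ t β, MvPowerSeries.coeff β (σ t) = l (MvPowerSeries.coeff (α + p ^ e • β) t) :=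
    fun t β => rfl
  refine ⟨σ, fun s t => ?_, ?_⟩
  · ext β
    rw [hσ, MvPowerSeries.coeff_mul, MvPowerSeries.coeff_mul, map_sum]
    symm
    refine Finset.sum_of_injOn (fun u => (p ^ e • u.1, α + p ^ e • u.2)) ?_ ?_ ?_ ?_
    · rintro ⟨u, v⟩ _ ⟨u', v'⟩ _ h
      have hp : p ^ e ≠ 0 := pow_ne_zero _ (Fact.out : p.Prime).ne_zero
      simp only [Prod.mk.injEq] at h
      have h1 := h.1
      have h2 := add_left_cancel h.2
      ext i
      · have := DFunLike.congr_fun h1 i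
        simpa [hp, (Fact.out : p.Prime).ne_zero] using this
      · have := DFunLike.congr_fun h2 i
        simpa [hp, (Fact.out : p.Prime).ne_zero] using this
    · rintro ⟨u, v⟩ h
      have h' : u + v = β := Finset.HasAntidiagonal.mem_antidiagonal.1 h
      refine Finset.mem_coe.2 (Finset.HasAntidiagonal.mem_antidiagonal.2 ?_)
      change p ^ e • u + (α + p ^ e • v) = α + p ^ e • β
      rw [← h', smul_add]; abel
    · rintro ⟨u, v⟩ h hn
      replace h : u + v = α + p ^ e • β := Finset.HasAntidiagonal.mem_antidiagonal.1 h
      by_cases hu : ∃ u', u = p ^ e • u'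
      · obtain ⟨u', rfl⟩ := hu
        exfalso
        apply hn
        have hle : u' ≤ β := by
          intro i
          have h1 := DFunLike.congr_fun h i
          simp only [Finsupp.add_apply, Finsupp.smul_apply, smul_eq_mul] at h1
          have h2 := hα i
          by_contra! h3
          have : p ^ e * (β i + 1) ≤ p ^ e * u' i := Nat.mul_le_mul_left _ h3
          rw [mul_add] at this
          omega
        obtain ⟨v', rfl⟩ := exists_add_of_le hle
        refine ⟨(u', v'), by simp, ?_⟩
        simp only [Prod.mk.injEq, true_and]
        rw [smul_add] at h
        have : p ^ e • u' + v = p ^ e • u' + (α + p ^ e • v') := by rw [h]; abel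
        exact (add_left_cancel this).symm
      · push Not at hu
        rw [coeff_pow_charP_zero p e s u hu, zero_mul, map_zero]
    · rintro ⟨u, v⟩ h
      rw [coeff_pow_charP, hl, hσ]
  · rw [MvPowerSeries.isUnit_iff_constantCoeff, ← MvPowerSeries.coeff_zero_eq_constantCoeff_apply, hσ]
    simpa using hlf

end Sigma

section Forward

theorem bracketPow_mono {A : Type*} [CommRing A] {I I' : Ideal A} (h : I ≤ I') (q : ℕ) :
    I.bracketPow q ≤ I'.bracketPow q :=
  Ideal.span_mono (Set.image_mono h)

theorem pow_mem_bracketPow {A : Type*} [CommRing A] {I : Ideal A} {a : A} (h : a ∈ I) (q : ℕ) :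
    a ^ q ∈ I.bracketPow q :=
  Ideal.subset_span ⟨a, h, rfl⟩

theorem radical_bracketPow {A : Type*} [CommRing A] [IsLocalRing A] {I : Ideal A}
    (h : maximalIdeal A ≤ I.radical) (q : ℕ) : maximalIdeal A ≤ (I.bracketPow q).radical := by
  intro a ha
  obtain ⟨n, hn⟩ := h ha
  exact ⟨n * q, by rw [pow_mul]; exact pow_mem_bracketPow hn q⟩

theorem mem_bracketPow {A : Type*} [CommRing A] {I : Ideal A} {q : ℕ} {y : A}
    (h : y ∈ I.bracketPow q) : ∃ (n : ℕ) (r a : Fin n → A), (∀ i, a i ∈ I) ∧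
      y = ∑ i, r i * a i ^ q := by
  obtain ⟨n, r, g, hg⟩ := Submodule.mem_span_set'.1 h
  have h2 : ∀ i, ∃ a ∈ I, a ^ q = (g i : A) := fun i => (g i).2
  choose a ha1 ha2 using h2
  refine ⟨n, r, a, ha1, ?_⟩
  rw [← hg]
  exact Finset.sum_congr rfl fun i _ => by rw [ha2]; rfl

/-- The colon ideal `(K : y)`. -/
noncomputable def colonKer {A : Type*} [CommRing A] (K : Ideal A) (y : A) : Ideal A :=
  LinearMap.ker (LinearMap.toSpanSingleton A (A ⧸ K) (Ideal.Quotient.mk K y))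

theorem mem_colonKer {A : Type*} [CommRing A] {K : Ideal A} {y a : A} :
    a ∈ colonKer K y ↔ a * y ∈ K := by
  rw [colonKer, LinearMap.mem_ker, LinearMap.toSpanSingleton_apply, Algebra.smul_def,
    ← Ideal.Quotient.eq_zero_iff_mem, map_mul]
  rfl

theorem length_colon {A : Type*} [CommRing A] {K K' : Ideal A} (h : K ≤ K') {y : A} (hy : y ∈ K') :
    Module.length A (A ⧸ colonKer K y) + Module.length A (A ⧸ K') ≤ Module.length A (A ⧸ K) := by
  let g : (A ⧸ K) →ₗ[A] (A ⧸ K') := Submodule.factor h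
  have hg : Function.Surjective g := Submodule.factor_surjective h
  rw [Module.length_eq_add_of_exact (LinearMap.ker g).subtype g (Submodule.subtype_injective _) hg
    (LinearMap.exact_subtype_ker_map g)]
  gcongr
  let φ : A →ₗ[A] LinearMap.ker g :=
    (LinearMap.toSpanSingleton A (A ⧸ K) (Ideal.Quotient.mk K y)).codRestrict _ (by
      intro a
      rw [LinearMap.mem_ker, LinearMap.toSpanSingleton_apply, map_smul]
      have : g (Ideal.Quotient.mk K y) = 0 := Ideal.Quotient.eq_zero_iff_mem.2 hy
      rw [this, smul_zero])
  have hk : LinearMap.ker φ = colonKer K y := LinearMap.ker_codRestrict _ _ _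
  rw [← hk]
  exact Module.length_le_of_injective ((LinearMap.ker φ).liftQ φ le_rfl)
    (LinearMap.ker_eq_bot.1 (Submodule.ker_liftQ_eq_bot _ _ _ le_rfl))

theorem exists_series_mem {k A : Type*} [Field k] [CommRing A] [IsLocalRing A] [Algebra k A]
    (hres : Function.Surjective (algebraMap k (ResidueField A))) {d : ℕ} (x : Fin d → A)
    [Algebra (MvPowerSeries (Fin d) k) A]
    (hC : ∀ c, algebraMap (MvPowerSeries (Fin d) k) A (MvPowerSeries.C c) = algebraMap k A c)
    (hX : ∀ i, algebraMap (MvPowerSeries (Fin d) k) A (MvPowerSeries.X i) = x i)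
    (J : Ideal A) (N : ℕ) (hlen : Module.length A (A ⧸ J) < ((N ^ d : ℕ) : ℕ∞)) :
    ∃ (f : MvPowerSeries (Fin d) k) (α : Fin d →₀ ℕ), (∀ i, α i < N) ∧
      MvPowerSeries.coeff α f ≠ 0 ∧ algebraMap _ A f ∈ J := by
  classical
  let ι := Fin d → Fin N
  let em : ι → (Fin d →₀ ℕ) := fun m => Finsupp.equivFunOnFinite.symm fun i => (m i : ℕ)
  have hem : Function.Injective em := by
    intro m m' h
    funext i
    have := DFunLike.congr_fun h i
    exact Fin.ext this
  let v : ι → A ⧸ J := fun m => Ideal.Quotient.mk J (∏ i, x i ^ (m i : ℕ))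
  have hv : ¬ LinearIndependent k v := by
    intro hv
    have h1 : Module.length k (ι → k) ≤ Module.length k (A ⧸ J) :=
      Module.length_le_of_injective (Fintype.linearCombination k v)
        (LinearMap.ker_eq_bot.1 (LinearMap.ker_eq_bot'.2 fun g hg => by
          funext i
          exact Fintype.linearIndependent_iff.1 hv g hg i))
    rw [length_field_eq hres (A ⧸ J), Module.length_pi, Module.length_eq_one k k] at h1
    have h2 : ENat.card ι = ((N ^ d : ℕ) : ℕ∞) := by
      simp [ι]
    rw [h2, mul_one] at h1
    exact absurd hlen (not_lt.2 h1)
  obtain ⟨g, hg, m, hm⟩ := Fintype.not_linearIndependent_iff.1 hv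
  refine ⟨∑ m, MvPowerSeries.monomial (em m) (g m), em m, fun i => (m i).2, ?_, ?_⟩
  · rw [map_sum, Finset.sum_eq_single m]
    · rwa [MvPowerSeries.coeff_monomial_same]
    · intro m' _ hmm
      exact MvPowerSeries.coeff_monomial_ne (fun h => hmm (hem h).symm) _
    · intro h; exact absurd (Finset.mem_univ m) h
  · rw [← Ideal.Quotient.eq_zero_iff_mem, ← hg, map_sum, map_sum]
    refine Finset.sum_congr rfl fun m _ => ?_
    rw [MvPowerSeries.monomial_eq', map_mul, hC, Finsupp.prod_fintype _ _ (by simp), map_prod,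
      map_mul, Algebra.smul_def]
    simp only [map_pow, hX]
    simp only [v, map_prod, map_pow]
    rfl

theorem forward_main {k A : Type*} [Field k] [CommRing A] [IsLocalRing A] [IsNoetherianRing A]
    [IsReduced A] (p : ℕ) [Fact p.Prime] [CharP A p] [Algebra k A]
    (hres : Function.Surjective (algebraMap k (ResidueField A)))
    (hcomp : IsAdicComplete (IsLocalRing.maximalIdeal A) A)
    (d : ℕ) (hd : ringKrullDim A = d)
    (hequi : ∀ P ∈ minimalPrimes A, ringKrullDim (A ⧸ P) = d)
    (I : Ideal A) (x : A)
    (hlen : ∀ m : ℕ, ∃ e : ℕ, Module.length A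
      (A ⧸ colonKer (I.bracketPow (p ^ (m + e))) (x ^ p ^ (m + e))) < (((p ^ e) ^ d : ℕ) : ℕ∞)) :
    x ∈ tightClosure p I := by
  classical
  obtain ⟨d', hd', t, htm, htr⟩ := exists_sop A
  obtain rfl : d' = d := by
    rw [hd] at hd'
    exact_mod_cast hd'.symm
  obtain ⟨ψ, hψC, hψX⟩ := exists_powerSeries_hom (k := k) hcomp t htm
  let : Algebra (MvPowerSeries (Fin d') k) A := ψ.toAlgebra
  have hC : ∀ c, algebraMap (MvPowerSeries (Fin d') k) A (MvPowerSeries.C c) = algebraMap k A c := hψC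
  have hX : ∀ i, algebraMap (MvPowerSeries (Fin d') k) A (MvPowerSeries.X i) = t i := hψX
  have hfin : Module.Finite (MvPowerSeries (Fin d') k) A :=
    finite_over_powerSeries hres hcomp t htm htr hC hX
  obtain ⟨hcirc, htf⟩ := torsionFree_of_equidim (k := k) t htm htr hX hequi
  have hk : CharP k p := (algebraMap k A).charP (algebraMap k A).injective p
  have hS : CharP (MvPowerSeries (Fin d') k) p :=
    charP_of_injective_ringHom (f := (MvPowerSeries.C : k →+* MvPowerSeries (Fin d') k))
      (RingHom.injective _) p
  have hdom : IsDomain (MvPowerSeries (Fin d') k) := NoZeroDivisors.to_isDomain _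
  have hEA : ExpChar A p := ExpChar.prime Fact.out
  obtain ⟨e0, n, c, D, hD, hLI, hspan⟩ := exists_frobenius_basis p (MvPowerSeries (Fin d') k) A htf
  refine ⟨_, hcirc D hD, e0, fun e1 he1 => ?_⟩
  obtain ⟨e, rfl⟩ := Nat.exists_eq_add_of_le he1
  obtain ⟨e2, he2⟩ := hlen (e + e0)
  obtain ⟨f, α, hα, hfα, hfJ⟩ := exists_series_mem hres t hC hX _ _ he2
  rw [mem_colonKer] at hfJ
  obtain ⟨m, r, a, ha, hsum⟩ := mem_bracketPow hfJ
  obtain ⟨σ, hσ, hσu⟩ := exists_sigma p (e0 + e2) (f ^ p ^ e0) (p ^ e0 • α) (fun i => by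
    rw [pow_add]
    exact Nat.mul_lt_mul_of_pos_left (hα i) (pow_pos (Fact.out : p.Prime).pos _)) (by
    rw [coeff_pow_charP]
    exact pow_ne_zero _ hfα)
  have key := core_relation p htf e0 n c D hD (e0 + e2) (hLI _) (by simpa using hspan 0)
    (hspan _) σ hσ (f ^ p ^ e0) hσu Finset.univ (x ^ p ^ e) r (fun i => a i ^ p ^ e) (by
      have h1 := congrArg (fun z => z ^ p ^ e0) hsum
      simp only [mul_pow, sum_pow_char_pow] at h1
      rw [Algebra.smul_def, map_pow]
      convert h1 using 2
      · simp only [← pow_mul, ← pow_add]; congr 2; ring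
      · congr 1; simp only [← pow_mul, ← pow_add]; congr 2; ring) (I.bracketPow (p ^ (e0 + e)))
    (fun i _ => by
      have := pow_mem_bracketPow (ha i) (p ^ (e0 + e))
      rw [add_comm, pow_add, pow_mul] at this
      rwa [add_comm, pow_add])
  rwa [← pow_mul, ← pow_add, add_comm e e0] at key

end Forward

section Backward

theorem length_quot_anti {A : Type*} [CommRing A] {K K' : Ideal A} (h : K ≤ K') :
    Module.length A (A ⧸ K') ≤ Module.length A (A ⧸ K) :=
  Module.length_le_of_surjective (Submodule.factor h) (Submodule.factor_surjective h)

theorem length_le_add {A : Type*} [CommRing A] (K : Ideal A) (c y : A) (hcy : c * y ∈ K) :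
    Module.length A (A ⧸ K) ≤
      Module.length A (A ⧸ (K ⊔ Ideal.span {y})) + Module.length A (A ⧸ (K ⊔ Ideal.span {c})) := by
  have h : K ≤ K ⊔ Ideal.span {y} := le_sup_left
  let g : (A ⧸ K) →ₗ[A] (A ⧸ (K ⊔ Ideal.span {y})) := Submodule.factor h
  have hg : Function.Surjective g := Submodule.factor_surjective h
  rw [Module.length_eq_add_of_exact (LinearMap.ker g).subtype g (Submodule.subtype_injective _) hg
    (LinearMap.exact_subtype_ker_map g), add_comm]
  gcongr
  have hy : y ∈ K ⊔ Ideal.span {y} := Ideal.mem_sup_right (Ideal.mem_span_singleton_self y)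
  let φ : A →ₗ[A] LinearMap.ker g :=
    (LinearMap.toSpanSingleton A (A ⧸ K) (Ideal.Quotient.mk K y)).codRestrict _ (by
      intro a
      rw [LinearMap.mem_ker, LinearMap.toSpanSingleton_apply, map_smul]
      have : g (Ideal.Quotient.mk K y) = 0 := Ideal.Quotient.eq_zero_iff_mem.2 hy
      rw [this, smul_zero])
  have hφ : Function.Surjective φ := by
    rintro ⟨z, hz⟩
    obtain ⟨a, rfl⟩ := Ideal.Quotient.mk_surjective z
    have ha : a ∈ K ⊔ Ideal.span {y} := Ideal.Quotient.eq_zero_iff_mem.1 hz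
    obtain ⟨u, hu, v, hv, rfl⟩ := Submodule.mem_sup.1 ha
    obtain ⟨b, rfl⟩ := Ideal.mem_span_singleton'.1 hv
    refine ⟨b, Subtype.ext ?_⟩
    change b • Ideal.Quotient.mk K y = Ideal.Quotient.mk K (u + b * y)
    rw [Algebra.smul_def, map_add, Ideal.Quotient.eq_zero_iff_mem.2 hu, zero_add, map_mul]
    rfl
  have hle : K ⊔ Ideal.span {c} ≤ LinearMap.ker φ := by
    have hk : LinearMap.ker φ = colonKer K y := LinearMap.ker_codRestrict _ _ _
    rw [hk, sup_le_iff, Ideal.span_singleton_le_iff_mem]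
    exact ⟨fun a ha => mem_colonKer.2 (Ideal.mul_mem_right _ _ ha), mem_colonKer.2 hcy⟩
  refine Module.length_le_of_surjective (Submodule.liftQ _ φ hle) ?_
  intro z
  obtain ⟨a, rfl⟩ := hφ z
  exact ⟨Submodule.Quotient.mk a, rfl⟩

theorem length_pow_le {A : Type*} [CommRing A] (K : Ideal A) (y : A) (q : ℕ) :
    Module.length A (A ⧸ (K ⊔ Ideal.span {y ^ q})) ≤
      q * Module.length A (A ⧸ (K ⊔ Ideal.span {y})) := by
  induction q with
  | zero =>
    have : K ⊔ Ideal.span {y ^ 0} = ⊤ := by simp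
    have h2 : Subsingleton (A ⧸ (K ⊔ Ideal.span {y ^ 0})) := Ideal.Quotient.subsingleton_iff.2 this
    rw [Module.length_eq_zero]
    exact zero_le
  | succ q ih =>
    refine (length_le_add _ y (y ^ q) ?_).trans ?_
    · rw [← pow_succ']
      exact Ideal.mem_sup_right (Ideal.mem_span_singleton_self _)
    · push_cast
      rw [add_mul, one_mul]
      gcongr
      · refine le_trans (length_quot_anti ?_) ih
        exact sup_le_sup_right le_sup_left _
      · refine length_quot_anti ?_
        exact sup_le_sup_right le_sup_left _

theorem length_pows_le {A ι : Type*} [CommRing A] [DecidableEq ι] (x : ι → A) (q : ℕ)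
    (s : Finset ι) (K : Ideal A) :
    Module.length A (A ⧸ (K ⊔ s.sup fun i => Ideal.span {x i ^ q})) ≤
      (q ^ s.card : ℕ) * Module.length A (A ⧸ (K ⊔ s.sup fun i => Ideal.span {x i})) := by
  induction s using Finset.induction_on generalizing K with
  | empty =>
    rw [Finset.sup_empty, Finset.sup_empty]
    simp
  | insert i s hi ih =>
    rw [Finset.sup_insert, Finset.sup_insert, Finset.card_insert_of_notMem hi, ← sup_assoc]
    refine (ih _).trans ?_
    have h := length_pow_le (K ⊔ s.sup fun i => Ideal.span {x i}) (x i) q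
    have e1 : K ⊔ Ideal.span {x i ^ q} ⊔ (s.sup fun i => Ideal.span {x i}) =
      (K ⊔ s.sup fun i => Ideal.span {x i}) ⊔ Ideal.span {x i ^ q} := by
      rw [sup_assoc, sup_assoc, sup_comm (Ideal.span {x i ^ q})]
    have e2 : K ⊔ (Ideal.span {x i} ⊔ (s.sup fun i => Ideal.span {x i})) =
      (K ⊔ s.sup fun i => Ideal.span {x i}) ⊔ Ideal.span {x i} := by
      rw [sup_assoc, sup_comm (Ideal.span {x i})]
    rw [e1, e2, pow_succ]
    push_cast
    rw [mul_assoc]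
    gcongr

theorem length_gens_le {A ι : Type*} [CommRing A] [DecidableEq ι] (y : ι → A) (c : A)
    (s : Finset ι) (K : Ideal A) (hc : ∀ i ∈ s, c * y i ∈ K) :
    Module.length A (A ⧸ K) ≤ Module.length A (A ⧸ (K ⊔ s.sup fun i => Ideal.span {y i})) +
      s.card * Module.length A (A ⧸ (K ⊔ Ideal.span {c})) := by
  induction s using Finset.induction_on generalizing K with
  | empty =>
    rw [Finset.sup_empty, sup_bot_eq]
    simp
  | insert i s hi ih =>
    rw [Finset.sup_insert, Finset.card_insert_of_notMem hi, ← sup_assoc]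
    refine (length_le_add K c (y i) (hc i (Finset.mem_insert_self _ _))).trans ?_
    push_cast
    rw [add_mul, one_mul, ← add_assoc]
    gcongr
    refine (ih (K ⊔ Ideal.span {y i}) fun j hj =>
      Ideal.mem_sup_left (hc j (Finset.mem_insert_of_mem hj))).trans ?_
    gcongr
    exact length_quot_anti (sup_le_sup_right le_sup_left _)

theorem length_bound {A : Type*} [CommRing A] [IsLocalRing A] [IsNoetherianRing A] (d : ℕ)
    (hd : ringKrullDim A = d) (I : Ideal A) (hI : maximalIdeal A ≤ I.radical) (c : A)
    (hc : c ∈ nonZeroDivisors A) :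
    ∃ C : ℕ, ∀ q : ℕ, 0 < q →
      q * Module.length A (A ⧸ (I.bracketPow q ⊔ Ideal.span {c})) ≤ ((C * q ^ d : ℕ) : ℕ∞) := by
  classical
  by_cases hcu : IsUnit c
  · refine ⟨0, fun q _ => ?_⟩
    have h1 : I.bracketPow q ⊔ Ideal.span {c} = ⊤ := by
      rw [Ideal.span_singleton_eq_top.2 hcu, sup_top_eq]
    have h2 : Subsingleton (A ⧸ (I.bracketPow q ⊔ Ideal.span {c})) :=
      Ideal.Quotient.subsingleton_iff.2 h1
    simp [Module.length_eq_zero]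
  have hne : Ideal.span {c} ≠ (⊤ : Ideal A) := by
    rw [Ne, Ideal.span_singleton_eq_top]; exact hcu
  have : Nontrivial (A ⧸ Ideal.span {c}) := Ideal.Quotient.nontrivial_iff.2 hne
  have : IsLocalRing (A ⧸ Ideal.span {c}) :=
    IsLocalRing.of_surjective' (Ideal.Quotient.mk _) Ideal.Quotient.mk_surjective
  have hloc : IsLocalHom (Ideal.Quotient.mk (Ideal.span {c})) :=
    IsLocalHom.of_surjective _ Ideal.Quotient.mk_surjective
  obtain ⟨n, hn, t, htm, htr⟩ := exists_sop (A ⧸ Ideal.span {c})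
  have hdim := ringKrullDim_quotient_succ_le_of_nonZeroDivisor hc
  rw [hn, hd] at hdim
  have hnd : n + 1 ≤ d := by exact_mod_cast hdim
  choose x hx using fun i => Ideal.Quotient.mk_surjective (t i)
  have hxm : ∀ i, x i ∈ maximalIdeal A := by
    intro i h
    refine htm i ?_
    rw [← hx]
    exact h.map _
  choose N hN using fun i => hI (hxm i)
  let y : Fin n → A := fun i => x i ^ N i
  let L : Ideal A := Ideal.span {c} ⊔ Finset.univ.sup fun i => Ideal.span {y i}
  have hL : maximalIdeal A ≤ L.radical := by
    intro a ha
    have h1 : Ideal.Quotient.mk (Ideal.span {c}) a ∈ maximalIdeal (A ⧸ Ideal.span {c}) := by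
      intro h
      exact ha ((isUnit_map_iff (Ideal.Quotient.mk (Ideal.span {c})) _).1 h)
    obtain ⟨M, hM⟩ := htr h1
    have h2 : Ideal.span (Set.range t) ≤ L.radical.map (Ideal.Quotient.mk (Ideal.span {c})) := by
      rw [Ideal.span_le]
      rintro _ ⟨i, rfl⟩
      rw [← hx]
      refine Ideal.mem_map_of_mem _ ⟨N i, ?_⟩
      refine Ideal.mem_sup_right ?_
      exact (Finset.le_sup (f := fun i => Ideal.span {y i}) (Finset.mem_univ i))
        (Ideal.mem_span_singleton_self _)
    have h3 := h2 hM
    rw [← map_pow, ← Ideal.mem_comap, Ideal.comap_map_of_surjective _ Ideal.Quotient.mk_surjective,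
      ← RingHom.ker_eq_comap_bot, Ideal.mk_ker] at h3
    have h4 : Ideal.span {c} ≤ L.radical := le_trans le_sup_left Ideal.le_radical
    rw [sup_eq_left.2 h4] at h3
    rw [← Ideal.radical_idem]
    exact ⟨M, h3⟩
  have hfin := length_ne_top_of_radical_eq L hL
  obtain ⟨C, hC⟩ := ENat.ne_top_iff_exists.1 hfin
  refine ⟨C, fun q hq => ?_⟩
  have h1 : Module.length A (A ⧸ (I.bracketPow q ⊔ Ideal.span {c})) ≤ (q ^ n : ℕ) * (C : ℕ∞) := by
    have := length_pows_le y q Finset.univ (Ideal.span {c})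
    rw [Finset.card_univ, Fintype.card_fin] at this
    rw [hC]
    refine (length_quot_anti ?_).trans this
    refine sup_le le_sup_right ((Finset.sup_le fun i _ => ?_).trans le_sup_left)
    rw [Ideal.span_singleton_le_iff_mem]
    exact pow_mem_bracketPow (hN i) q
  calc (q : ℕ∞) * Module.length A (A ⧸ (I.bracketPow q ⊔ Ideal.span {c}))
      ≤ q * ((q ^ n : ℕ) * (C : ℕ∞)) := by gcongr
    _ = ((C * q ^ (n + 1) : ℕ) : ℕ∞) := by push_cast; ring
    _ ≤ _ := by
      have := Nat.pow_le_pow_right hq hnd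
      exact_mod_cast Nat.mul_le_mul_left C this

theorem ringCirc_nonZeroDivisors {A : Type*} [CommRing A] [IsReduced A] {c : A}
    (hc : c ∈ ringCirc A) : c ∈ nonZeroDivisors A := by
  rw [mem_nonZeroDivisors_iff_right]
  intro a hsa
  have h2 : a ∈ sInf (minimalPrimes A) := by
    rw [Submodule.mem_sInf]
    intro (P : Ideal A) hP
    have hPp : P.IsPrime := hP.1.1
    have : a * c ∈ P := by rw [hsa]; exact P.zero_mem
    exact (hPp.mem_or_mem this).resolve_right (hc P hP)
  have h3 : sInf (minimalPrimes A) = (⊥ : Ideal A) := by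
    rw [minimalPrimes, Ideal.sInf_minimalPrimes]
    exact (nilradical_eq_zero A)
  rw [h3] at h2
  exact h2

theorem backward_main {A : Type*} [CommRing A] [IsLocalRing A] [IsNoetherianRing A]
    [IsReduced A] (p : ℕ) [Fact p.Prime] [CharP A p]
    (d : ℕ) (hd : ringKrullDim A = d) (I I' : Ideal A) (hI : maximalIdeal A ≤ I.radical)
    (h : (I' : Set A) ⊆ tightClosure p I) :
    ∃ C N : ℕ, ∀ e, N ≤ e → p ^ e * Module.length A (A ⧸ I.bracketPow (p ^ e)) ≤
      p ^ e * Module.length A (A ⧸ I'.bracketPow (p ^ e)) + ((C * (p ^ e) ^ d : ℕ) : ℕ∞) := by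
  classical
  have hEA : ExpChar A p := ExpChar.prime Fact.out
  obtain ⟨T, hT⟩ := (IsNoetherian.noetherian I' : I'.FG)
  have hT' : ∀ t : A, ∃ c ∈ ringCirc A, ∃ N : ℕ, t ∈ T → ∀ e : ℕ, N ≤ e →
      c * t ^ p ^ e ∈ I.bracketPow (p ^ e) := by
    intro t
    by_cases ht : t ∈ T
    · obtain ⟨c, hc, N, hN⟩ := h (show t ∈ (I' : Set A) by rw [← hT]; exact Submodule.subset_span ht)
      exact ⟨c, hc, N, fun _ => hN⟩
    · refine ⟨1, fun P hP h1 => ?_, 0, fun h => absurd h ht⟩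
      have hPp : P.IsPrime := hP.1.1
      exact hPp.ne_top ((Ideal.eq_top_iff_one _).2 h1)
  choose c hc N hN using hT'
  have hcirc : ∏ t ∈ T, c t ∈ ringCirc A := by
    intro P hP hmem
    have hPp : P.IsPrime := hP.1.1
    obtain ⟨t, _, ht⟩ := (Ideal.IsPrime.prod_mem_iff (p := P)).1 hmem
    exact hc t P hP ht
  obtain ⟨C, hC⟩ := length_bound d hd I hI _ (ringCirc_nonZeroDivisors hcirc)
  refine ⟨T.card * C, T.sup N, fun e he => ?_⟩
  have hq : 0 < p ^ e := pow_pos (Fact.out : p.Prime).pos _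
  have h1 := length_gens_le (fun t : A => t ^ p ^ e) (∏ t ∈ T, c t) T (I.bracketPow (p ^ e)) (by
    intro t ht
    have := hN t ht e ((Finset.le_sup ht).trans he)
    rw [← Finset.mul_prod_erase T c ht]
    have h2 := Ideal.mul_mem_left _ (∏ t ∈ T.erase t, c t) this
    convert h2 using 1
    ring)
  have h2 : I'.bracketPow (p ^ e) ≤ I.bracketPow (p ^ e) ⊔ T.sup fun t => Ideal.span {t ^ p ^ e} := by
    refine le_trans ?_ le_sup_right
    have h3 : I' ≤ (T.sup fun t => Ideal.span {t ^ p ^ e}).comap (iterateFrobenius A p e) := by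
      rw [← hT]
      refine Submodule.span_le.2 fun t ht => ?_
      change iterateFrobenius A p e t ∈ T.sup fun t => Ideal.span {t ^ p ^ e}
      rw [iterateFrobenius_def]
      exact (Finset.le_sup (f := fun t : A => Ideal.span {t ^ p ^ e}) ht)
        (Ideal.mem_span_singleton_self _)
    refine Ideal.span_le.2 ?_
    rintro _ ⟨a, ha, rfl⟩
    have := h3 ha
    rwa [Ideal.mem_comap, iterateFrobenius_def] at this
  have h4 := h1.trans (add_le_add_left (length_quot_anti h2) _)
  calc (p ^ e : ℕ∞) * Module.length A (A ⧸ I.bracketPow (p ^ e))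
      ≤ p ^ e * (Module.length A (A ⧸ I'.bracketPow (p ^ e)) + T.card *
          Module.length A (A ⧸ (I.bracketPow (p ^ e) ⊔ Ideal.span {∏ t ∈ T, c t}))) := by gcongr
    _ = p ^ e * Module.length A (A ⧸ I'.bracketPow (p ^ e)) + T.card * ((p ^ e : ℕ) *
          Module.length A (A ⧸ (I.bracketPow (p ^ e) ⊔ Ideal.span {∏ t ∈ T, c t}))) := by
        push_cast; ring
    _ ≤ p ^ e * Module.length A (A ⧸ I'.bracketPow (p ^ e)) + T.card * ((C * (p ^ e) ^ d : ℕ) : ℕ∞) := by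
        gcongr
        exact hC _ hq
    _ = _ := by push_cast; ring

end Backward

theorem forward_dir {A : Type*} [CommRing A] [IsLocalRing A] [IsNoetherianRing A]
    [IsReduced A] (p : ℕ) [Fact p.Prime] [CharP A p]
    (hcomp : IsAdicComplete (IsLocalRing.maximalIdeal A) A)
    (d : ℕ) (hd : ringKrullDim A = d)
    (hequi : ∀ P ∈ minimalPrimes A, ringKrullDim (A ⧸ P) = d)
    {k : Type*} [Field k] (g : k →+* A)
    (hres : ∀ y : ResidueField A, ∃ c : k, residue A (g c) = y)
    (I : Ideal A) (x : A)
    (hlen : ∀ m : ℕ, ∃ e : ℕ, Module.length A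
      (A ⧸ colonKer (I.bracketPow (p ^ (m + e))) (x ^ p ^ (m + e))) < (((p ^ e) ^ d : ℕ) : ℕ∞)) :
    x ∈ tightClosure p I := by
  let : Algebra k A := g.toAlgebra
  refine forward_main (k := k) p (fun y => ?_) hcomp d hd hequi I x hlen
  obtain ⟨c, hc⟩ := hres y
  exact ⟨c, hc⟩

/-- **Hochster–Huneke.** For `𝔪`-primary ideals `I ⊆ I'` of a `d`-dimensional complete
equidimensional reduced Noetherian local ring of characteristic `p`, one has
`e_HK(I') = e_HK(I)` if and only if `I' ⊆ I^*`. -/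
theorem hilbert_kunz_eq_iff_tight_closure (A : Type*) [CommRing A] [IsLocalRing A]
    [IsNoetherianRing A] [IsReduced A] (p : ℕ) [Fact p.Prime] [CharP A p]
    (hcomp : IsAdicComplete (IsLocalRing.maximalIdeal A) A)
    (d : ℕ) (hd : ringKrullDim A = d)
    (hequi : ∀ P ∈ minimalPrimes A, ringKrullDim (A ⧸ P) = d)
    (I I' : Ideal A) (hII' : I ≤ I')
    (hI : I.radical = IsLocalRing.maximalIdeal A)
    (hI' : I'.radical = IsLocalRing.maximalIdeal A)
    (eHK eHK' : ℝ)
    (heHK : Filter.Tendsto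
      (fun e : ℕ =>
        ((moduleLength A (A ⧸ I.bracketPow (p ^ e))).toNat : ℝ) / (p : ℝ) ^ (e * d))
      Filter.atTop (nhds eHK))
    (heHK' : Filter.Tendsto
      (fun e : ℕ =>
        ((moduleLength A (A ⧸ I'.bracketPow (p ^ e))).toNat : ℝ) / (p : ℝ) ^ (e * d))
      Filter.atTop (nhds eHK')) :
    eHK' = eHK ↔ (I' : Set A) ⊆ tightClosure p I := by
  have hp : p.Prime := Fact.out
  have hp0 : (0 : ℝ) < p := by exact_mod_cast hp.pos
  have hrI : maximalIdeal A ≤ I.radical := hI.ge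
  have hrI' : maximalIdeal A ≤ I'.radical := hI'.ge
  have hml : ∀ K : Ideal A, moduleLength A (A ⧸ K) = Module.length A (A ⧸ K) :=
    fun K => (Module.length_eq_height A (A ⧸ K)).symm
  have hfin : ∀ e, ∃ n : ℕ, (n : ℕ∞) = Module.length A (A ⧸ I.bracketPow (p ^ e)) := fun e =>
    ENat.ne_top_iff_exists.1 (length_ne_top_of_radical_eq _ (radical_bracketPow hrI _))
  have hfin' : ∀ e, ∃ n : ℕ, (n : ℕ∞) = Module.length A (A ⧸ I'.bracketPow (p ^ e)) := fun e =>
    ENat.ne_top_iff_exists.1 (length_ne_top_of_radical_eq _ (radical_bracketPow hrI' _))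
  choose L hL using hfin
  choose L' hL' using hfin'
  simp only [hml, ← hL, ENat.toNat_natCast] at heHK
  simp only [hml, ← hL', ENat.toNat_natCast] at heHK'
  have hdiff := heHK.sub heHK'
  constructor
  · intro heq x hx
    rw [heq, sub_self] at hdiff
    obtain ⟨g, hg⟩ := exists_coefficientField p A hcomp
    refine forward_dir p hcomp d hd hequi g (fun y => ⟨y, hg y⟩) I x fun m => ?_
    have hpos : (0 : ℝ) < 1 / (p : ℝ) ^ (m * d) := by positivity
    obtain ⟨E, hE⟩ := eventually_atTop.1 (hdiff.eventually (gt_mem_nhds hpos))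
    refine ⟨E, ?_⟩
    have h1 := hE (m + E) (Nat.le_add_left _ _)
    have h2 := length_colon (bracketPow_mono hII' (p ^ (m + E))) (pow_mem_bracketPow hx (p ^ (m + E)))
    rw [← hL, ← hL'] at h2
    have h3 : Module.length A (A ⧸ colonKer (I.bracketPow (p ^ (m + E))) (x ^ p ^ (m + E))) ≠ ⊤ := by
      intro h
      rw [h, top_add] at h2
      exact absurd h2 (by simp)
    obtain ⟨l, hl⟩ := ENat.ne_top_iff_exists.1 h3
    rw [← hl] at h2 ⊢
    have h4 : l + L' (m + E) ≤ L (m + E) := by exact_mod_cast h2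
    have h5 : (l : ℝ) + L' (m + E) ≤ L (m + E) := by exact_mod_cast h4
    rw [← sub_div, div_lt_div_iff₀ (by positivity) (by positivity), one_mul, add_mul, pow_add,
      mul_comm ((p : ℝ) ^ (m * d))] at h1
    have h6 : (L (m + E) : ℝ) - L' (m + E) < (p : ℝ) ^ (E * d) :=
      lt_of_mul_lt_mul_right h1 (by positivity)
    have h7 : (l : ℝ) < (p : ℝ) ^ (E * d) := by linarith
    rw [← pow_mul]
    exact_mod_cast h7
  · intro h
    obtain ⟨C, N, hCN⟩ := backward_main p d hd I I' hrI h
    have hz : Tendsto (fun e : ℕ => (L e : ℝ) / (p : ℝ) ^ (e * d) - (L' e : ℝ) / (p : ℝ) ^ (e * d))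
        atTop (𝓝 0) := by
      have hlim : Tendsto (fun e : ℕ => (C : ℝ) * ((p : ℝ)⁻¹) ^ e) atTop (𝓝 0) := by
        have := (tendsto_pow_atTop_nhds_zero_of_lt_one (r := (p : ℝ)⁻¹) (by positivity)
          (inv_lt_one_of_one_lt₀ (by exact_mod_cast hp.one_lt))).const_mul (C : ℝ)
        rwa [mul_zero] at this
      refine tendsto_of_tendsto_of_tendsto_of_le_of_le' tendsto_const_nhds hlim ?_ ?_
      · refine Eventually.of_forall fun e => ?_
        have h1 := length_quot_anti (bracketPow_mono hII' (p ^ e))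
        rw [← hL, ← hL'] at h1
        have h2 : (L' e : ℝ) ≤ L e := by exact_mod_cast h1
        rw [← sub_div]
        exact div_nonneg (sub_nonneg.2 h2) (by positivity)
      · filter_upwards [eventually_ge_atTop N] with e he
        have h1 := hCN e he
        rw [← hL, ← hL'] at h1
        have h2 : p ^ e * L e ≤ p ^ e * L' e + C * (p ^ e) ^ d := by exact_mod_cast h1
        have h3 : (p : ℝ) ^ e * L e ≤ (p : ℝ) ^ e * L' e + C * ((p : ℝ) ^ e) ^ d := by
          exact_mod_cast h2
        rw [← sub_div, div_le_iff₀ (by positivity), inv_pow, pow_mul]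
        have h4 : (0 : ℝ) < (p : ℝ) ^ e := by positivity
        rw [mul_assoc, mul_comm ((p : ℝ) ^ e)⁻¹, ← mul_assoc, ← div_eq_mul_inv, le_div_iff₀ h4]
        linarith
    have := tendsto_nhds_unique hdiff hz
    linarith
end

section
/- (Watanabe–Yoshida, Huneke–Yao) Let (A, 𝔪) be a d-dimensional complete Noetherian local ring of prime characteristic p that is unmixed, i.e., dim A/𝔭 = d for every associated prime 𝔭 of A. Then A is a regular local ring if and only if e_HK(A) = 1, where e_HK(A) = lim_{e→∞} ℓ_A(A/𝔪^{[p^e]})/p^{ed}. -/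
open IsLocalRing Filter Topology
open scoped TensorProduct

universe u
set_option linter.all false

/-- The multiplicity symbol of a list of elements on a module. -/
noncomputable def chiSym {R : Type u} [CommRing R] :
    List R → (M : Type u) → [AddCommGroup M] → [Module R M] → ℤ
  | [], M, _, _ => ((Module.length R M).toNat : ℤ)
  | x :: xs, M, _, _ =>
      chiSym xs (M ⧸ LinearMap.range (LinearMap.lsmul R M x)) -
        chiSym xs (LinearMap.ker (LinearMap.lsmul R M x))

/-- The list `xs` is primary on the module `M`. -/
def ChiCond {R : Type u} [CommRing R] [IsLocalRing R] (xs : List R)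
    (M : Type u) [AddCommGroup M] [Module R M] : Prop :=
  maximalIdeal R ≤ (Ideal.span {x | x ∈ xs} ⊔ Module.annihilator R M).radical

section chi

variable {R : Type u} [CommRing R] [IsLocalRing R] [IsNoetherianRing R]

theorem ChiCond.mono {xs : List R} {M N : Type u} [AddCommGroup M] [Module R M]
    [AddCommGroup N] [Module R N] (h : ChiCond xs M)
    (hMN : Module.annihilator R M ≤ Module.annihilator R N) : ChiCond xs N :=
  h.trans (Ideal.radical_mono (sup_le_sup_left hMN _))

theorem ChiCond.of_inj {xs : List R} {M N : Type u} [AddCommGroup M] [Module R M]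
    [AddCommGroup N] [Module R N] (h : ChiCond xs M) (f : N →ₗ[R] M)
    (hf : Function.Injective f) : ChiCond xs N :=
  h.mono (LinearMap.annihilator_le_of_injective f hf)

theorem ChiCond.of_surj {xs : List R} {M N : Type u} [AddCommGroup M] [Module R M]
    [AddCommGroup N] [Module R N] (h : ChiCond xs M) (f : M →ₗ[R] N)
    (hf : Function.Surjective f) : ChiCond xs N :=
  h.mono (LinearMap.annihilator_le_of_surjective f hf)

theorem ChiCond.tail {x : R} {xs : List R} {M : Type u} [AddCommGroup M] [Module R M]
    (h : ChiCond (x :: xs) M) (hx : x ∈ Module.annihilator R M) : ChiCond xs M := by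
  refine h.trans (Ideal.radical_mono (sup_le ?_ le_sup_right))
  rw [Ideal.span_le]
  intro y hy
  rcases List.mem_cons.1 hy with rfl | hy
  · exact Ideal.mem_sup_right hx
  · exact Ideal.mem_sup_left (Ideal.subset_span hy)

theorem ChiCond.quot {x : R} {xs : List R} {M : Type u} [AddCommGroup M] [Module R M]
    (h : ChiCond (x :: xs) M) :
    ChiCond xs (M ⧸ LinearMap.range (LinearMap.lsmul R M x)) := by
  refine (h.of_surj _ (Submodule.mkQ_surjective _)).tail ?_
  rw [Module.mem_annihilator]
  intro m
  obtain ⟨m, rfl⟩ := Submodule.mkQ_surjective _ m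
  rw [← map_smul, Submodule.mkQ_apply, Submodule.Quotient.mk_eq_zero]
  exact ⟨m, rfl⟩

theorem ChiCond.ker {x : R} {xs : List R} {M : Type u} [AddCommGroup M] [Module R M]
    (h : ChiCond (x :: xs) M) :
    ChiCond xs (LinearMap.ker (LinearMap.lsmul R M x)) := by
  refine (h.of_inj _ (Submodule.subtype_injective _)).tail ?_
  rw [Module.mem_annihilator]
  rintro ⟨m, hm⟩
  exact Subtype.ext hm

theorem artinian_quot {I : Ideal R} (h : maximalIdeal R ≤ I.radical) : IsArtinianRing (R ⧸ I) := by
  by_cases hI : I = ⊤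
  · subst hI
    have : Subsingleton (R ⧸ (⊤ : Ideal R)) := Ideal.Quotient.subsingleton_iff.2 rfl
    infer_instance
  apply IsLocalRing.quotient_artinian_of_mem_minimalPrimes_of_isLocalRing
  refine ⟨⟨inferInstance, le_maximalIdeal hI⟩, ?_⟩
  rintro Q ⟨hQ, hIQ⟩ -
  exact h.trans (hQ.radical_le_iff.2 hIQ)

theorem ChiCond.length_ne_top {M : Type u} [AddCommGroup M] [Module R M] [IsNoetherian R M]
    (h : ChiCond ([] : List R) M) : Module.length R M ≠ ⊤ := by
  have h' : maximalIdeal R ≤ (Module.annihilator R M).radical := by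
    refine h.trans (Ideal.radical_mono (sup_le ?_ le_rfl))
    rw [Ideal.span_le]; intro y hy; simp at hy
  have := artinian_quot h'
  letI : Module (R ⧸ Module.annihilator R M) M := (Module.isTorsionBySet_annihilator R M).module
  haveI : IsScalarTower R (R ⧸ Module.annihilator R M) M :=
    Module.IsTorsionBySet.isScalarTower (Module.isTorsionBySet_annihilator R M)
  haveI : Module.Finite (R ⧸ Module.annihilator R M) M :=
    Module.Finite.of_restrictScalars_finite R _ M
  have h3 : IsArtinian R M := isArtinian_of_surjective_algebraMap
    (R := R ⧸ Module.annihilator R M) Ideal.Quotient.mk_surjective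
  exact Module.length_ne_top

theorem chi_six
    {chi : (M : Type u) → [AddCommGroup M] → [Module R M] → ℤ}
    {cond : (M : Type u) → [AddCommGroup M] → [Module R M] → Prop}
    (hadd : ∀ (A B C : Type u) [AddCommGroup A] [Module R A] [AddCommGroup B] [Module R B]
      [AddCommGroup C] [Module R C] [IsNoetherian R B] (f : A →ₗ[R] B) (g : B →ₗ[R] C),
      cond B → Function.Injective f → Function.Exact f g → Function.Surjective g →
        chi B = chi A + chi C)
    (A B C D E F : Type u) [AddCommGroup A] [Module R A] [AddCommGroup B] [Module R B]
      [AddCommGroup C] [Module R C] [AddCommGroup D] [Module R D] [AddCommGroup E] [Module R E]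
      [AddCommGroup F] [Module R F] [IsNoetherian R B] [IsNoetherian R C] [IsNoetherian R D]
      [IsNoetherian R E]
    (f : A →ₗ[R] B) (g : B →ₗ[R] C) (h : C →ₗ[R] D) (i : D →ₗ[R] E) (j : E →ₗ[R] F)
    (hB : cond B) (hC : cond C) (hD : cond D) (hE : cond E)
    (hf : Function.Injective f) (hfg : Function.Exact f g) (hgh : Function.Exact g h)
    (hhi : Function.Exact h i) (hij : Function.Exact i j) (hj : Function.Surjective j) :
    chi A - chi B + chi C - chi D + chi E - chi F = 0 := by
  have h1 : chi B = chi A + chi (LinearMap.range g) :=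
    hadd A B _ f g.rangeRestrict hB hf
      (by intro y; rw [← hfg y]; simp [Subtype.ext_iff]) g.surjective_rangeRestrict
  have h2 : chi C = chi (LinearMap.range g) + chi (LinearMap.range h) :=
    hadd _ C _ (LinearMap.range g).subtype h.rangeRestrict hC (Submodule.subtype_injective _)
      (by intro y; have := hgh y; simp only [Set.mem_range] at this
          simp [Subtype.ext_iff, this]) h.surjective_rangeRestrict
  have h3 : chi D = chi (LinearMap.range h) + chi (LinearMap.range i) :=
    hadd _ D _ (LinearMap.range h).subtype i.rangeRestrict hD (Submodule.subtype_injective _)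
      (by intro y; have := hhi y; simp only [Set.mem_range] at this
          simp [Subtype.ext_iff, this]) i.surjective_rangeRestrict
  have h4 : chi E = chi (LinearMap.range i) + chi F :=
    hadd _ E _ (LinearMap.range i).subtype j hE (Submodule.subtype_injective _)
      (by intro y; have := hij y; simp only [Set.mem_range] at this
          simp [this]) hj
  omega

theorem chi_add (xs : List R) : ∀ (A B C : Type u) [AddCommGroup A] [Module R A] [AddCommGroup B]
      [Module R B] [AddCommGroup C] [Module R C] [IsNoetherian R B] (f : A →ₗ[R] B)
      (g : B →ₗ[R] C), ChiCond xs B → Function.Injective f → Function.Exact f g →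
      Function.Surjective g → chiSym xs B = chiSym xs A + chiSym xs C := by
  induction xs with
  | nil =>
    intro A B C _ _ _ _ _ _ _ f g hB hf hfg hg
    have h1 := Module.length_eq_add_of_exact f g hf hg hfg
    have hB' := hB.length_ne_top
    have hA := (hB.of_inj f hf)
    have : IsNoetherian R A := isNoetherian_of_injective f hf
    have : IsNoetherian R C := isNoetherian_of_surjective g (LinearMap.range_eq_top.2 hg)
    have hA' := hA.length_ne_top
    have hC' := (hB.of_surj g hg).length_ne_top
    simp only [chiSym]
    rw [h1, ENat.toNat_add hA' hC']
    push_cast; rfl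
  | cons x xs ih =>
    intro A B C _ _ _ _ _ _ _ f g hB hf hfg hg
    have : IsNoetherian R A := isNoetherian_of_injective f hf
    have : IsNoetherian R C := isNoetherian_of_surjective g (LinearMap.range_eq_top.2 hg)
    have hA := hB.of_inj f hf
    have hC := hB.of_surj g hg
    let lA := LinearMap.lsmul R A x
    let lB := LinearMap.lsmul R B x
    let lC := LinearMap.lsmul R C x
    let kf : LinearMap.ker lA →ₗ[R] LinearMap.ker lB := f.restrict (by
      intro a ha; simp only [lA, lB, LinearMap.mem_ker, LinearMap.lsmul_apply] at ha ⊢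
      rw [← map_smul, ha, map_zero])
    let kg : LinearMap.ker lB →ₗ[R] LinearMap.ker lC := g.restrict (by
      intro a ha; simp only [lC, lB, LinearMap.mem_ker, LinearMap.lsmul_apply] at ha ⊢
      rw [← map_smul, ha, map_zero])
    let cf : (A ⧸ LinearMap.range lA) →ₗ[R] (B ⧸ LinearMap.range lB) :=
      Submodule.mapQ _ _ f (by rintro _ ⟨a, rfl⟩; exact ⟨f a, by simp [lA, lB]⟩)
    let cg : (B ⧸ LinearMap.range lB) →ₗ[R] (C ⧸ LinearMap.range lC) :=
      Submodule.mapQ _ _ g (by rintro _ ⟨a, rfl⟩; exact ⟨g a, by simp [lC, lB]⟩)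
    have hAB : f.comp lA = lB.comp f := by ext; simp [lA, lB]
    have hBC : g.comp lB = lC.comp g := by ext; simp [lC, lB]
    let δ := SnakeLemma.δ' lA lB lC f g hfg f g hfg hAB hBC
      (LinearMap.ker lC).subtype (LinearMap.exact_subtype_ker_map lC)
      (LinearMap.range lA).mkQ (LinearMap.exact_map_mkQ_range lA) hg hf
    have e2 : Function.Exact kg δ :=
      SnakeLemma.exact_δ'_right lA lB lC f g hfg f g hfg hAB hBC
      (LinearMap.ker lB).subtype (LinearMap.exact_subtype_ker_map lB)
      (LinearMap.ker lC).subtype (LinearMap.exact_subtype_ker_map lC)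
      (LinearMap.range lA).mkQ (LinearMap.exact_map_mkQ_range lA) hg hf kg
      (by ext; rfl) (Submodule.subtype_injective _)
    have e3 : Function.Exact δ cf :=
      SnakeLemma.exact_δ'_left lA lB lC f g hfg f g hfg hAB hBC
      (LinearMap.ker lC).subtype (LinearMap.exact_subtype_ker_map lC)
      (LinearMap.range lA).mkQ (LinearMap.exact_map_mkQ_range lA)
      (LinearMap.range lB).mkQ (LinearMap.exact_map_mkQ_range lB) hg hf cf
      (by ext; rfl) (Submodule.mkQ_surjective _)
    have := chi_six (chi := fun M => chiSym xs M) (cond := fun M => ChiCond xs M) ih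
      _ _ _ _ _ _ kf kg δ cf cg hB.ker hC.ker hA.quot hB.quot
      (by
        intro a b hab
        apply Subtype.ext
        apply hf
        exact congrArg Subtype.val hab)
      (by
        intro b
        constructor
        · intro h
          have : g b = 0 := congrArg Subtype.val h
          obtain ⟨a, ha⟩ := (hfg _).1 this
          refine ⟨⟨a, ?_⟩, Subtype.ext ha⟩
          apply hf
          have := b.2
          simp only [lA, lB, LinearMap.mem_ker, LinearMap.lsmul_apply] at this ⊢
          rw [map_smul, ha, this, map_zero]
        · rintro ⟨a, rfl⟩
          exact Subtype.ext (hfg.apply_apply_eq_zero _))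
      e2 e3
      (by
        intro b
        obtain ⟨b, rfl⟩ := Submodule.mkQ_surjective _ b
        constructor
        · intro h
          have h : (LinearMap.range lC).mkQ (g b) = 0 := h
          rw [Submodule.mkQ_apply, Submodule.Quotient.mk_eq_zero] at h
          obtain ⟨c, hc⟩ := h
          obtain ⟨b', rfl⟩ := hg c
          have : g (b - x • b') = 0 := by
            rw [map_sub, ← hc]; simp [lC]
          obtain ⟨a, ha⟩ := (hfg _).1 this
          refine ⟨Submodule.mkQ _ a, ?_⟩
          change Submodule.mkQ _ (f a) = _
          rw [ha, map_sub, sub_eq_self, Submodule.mkQ_apply, Submodule.Quotient.mk_eq_zero]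
          exact ⟨b', rfl⟩
        · rintro ⟨a, ha⟩
          obtain ⟨a, rfl⟩ := Submodule.mkQ_surjective _ a
          rw [← ha]
          change Submodule.mkQ _ (g (f a)) = _
          rw [hfg.apply_apply_eq_zero, map_zero])
      (by
        intro c
        obtain ⟨c, rfl⟩ := Submodule.mkQ_surjective _ c
        obtain ⟨b, rfl⟩ := hg c
        exact ⟨Submodule.mkQ _ b, rfl⟩)
    simp only [chiSym]
    simp only [lA, lB, lC] at this
    omega

end chi

section chi2

variable {R : Type u} [CommRing R] [IsLocalRing R] [IsNoetherianRing R]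

theorem ChiCond.of_mem {xs ys : List R} {M : Type u} [AddCommGroup M] [Module R M]
    (h : ChiCond xs M)
    (hxy : ∀ x ∈ xs, x ∈ (Ideal.span {x | x ∈ ys} ⊔ Module.annihilator R M).radical) :
    ChiCond ys M := by
  unfold ChiCond at h ⊢
  rw [← Ideal.radical_idem (Ideal.span {x | x ∈ ys} ⊔ Module.annihilator R M)]
  refine h.trans (Ideal.radical_mono (sup_le ?_ (le_sup_right.trans Ideal.le_radical)))
  rw [Ideal.span_le]
  exact hxy

theorem chi_subsingleton (xs : List R) (M : Type u) [AddCommGroup M] [Module R M]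
    [Subsingleton M] : chiSym xs M = 0 := by
  have : ChiCond xs M := by
    unfold ChiCond
    rw [Module.annihilator_eq_top_iff.2 inferInstance, sup_top_eq, Ideal.radical_top]
    exact le_top
  have := chi_add xs M M M (0 : M →ₗ[R] M) 0 this (fun a b _ => Subsingleton.elim _ _)
    (fun a => ⟨fun _ => ⟨0, Subsingleton.elim _ _⟩, fun _ => rfl⟩)
    (fun a => ⟨0, Subsingleton.elim _ _⟩)
  omega

theorem chi_iso (xs : List R) {M N : Type u} [AddCommGroup M] [Module R M]
    [AddCommGroup N] [Module R N] [IsNoetherian R M] (hM : ChiCond xs M) (e : M ≃ₗ[R] N) :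
    chiSym xs M = chiSym xs N := by
  have hs : Subsingleton (LinearMap.ker (e : M →ₗ[R] N)) := by
    rw [LinearEquiv.ker]; infer_instance
  have := chi_add xs _ M N (LinearMap.ker (e : M →ₗ[R] N)).subtype (e : M →ₗ[R] N) hM
    (Submodule.subtype_injective _) (LinearMap.exact_subtype_ker_map _) e.surjective
  rw [chi_subsingleton xs (LinearMap.ker (e : M →ₗ[R] N)), zero_add] at this
  exact this

theorem chi_quot (xs : List R) {M : Type u} [AddCommGroup M] [Module R M]
    [IsNoetherian R M] (hM : ChiCond xs M) (K : Submodule R M) :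
    chiSym xs M = chiSym xs K + chiSym xs (M ⧸ K) :=
  chi_add xs _ M _ K.subtype K.mkQ hM
    (Submodule.subtype_injective _) (LinearMap.exact_subtype_mkQ K) (Submodule.mkQ_surjective _)

theorem chi_kill_one (x : R) (xs : List R) {M : Type u} [AddCommGroup M] [Module R M]
    [IsNoetherian R M] (hM : ChiCond (x :: xs) M) (hx : ∀ m : M, x • m = 0) :
    chiSym (x :: xs) M = 0 := by
  have hM' : ChiCond xs M := hM.tail (Module.mem_annihilator.2 hx)
  have h1 : LinearMap.lsmul R M x = 0 := by ext m; simp [hx]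
  have hr : LinearMap.range (LinearMap.lsmul R M x) = ⊥ := by rw [h1, LinearMap.range_zero]
  have hk : LinearMap.ker (LinearMap.lsmul R M x) = ⊤ := by rw [h1, LinearMap.ker_zero]
  simp only [chiSym]
  rw [← chi_iso xs hM' (Submodule.quotEquivOfEqBot _ hr).symm,
    ← chi_iso xs hM' (LinearEquiv.ofTop _ hk).symm, sub_self]

theorem chi_kill_pow (x : R) (xs : List R) (N : ℕ) : ∀ {M : Type u} [AddCommGroup M] [Module R M]
    [IsNoetherian R M], ChiCond (x :: xs) M → (∀ m : M, x ^ N • m = 0) →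
    chiSym (x :: xs) M = 0 := by
  induction N with
  | zero =>
    intro M _ _ _ hM hx
    have : Subsingleton M := ⟨fun a b => by
      have ha := hx a; have hb := hx b; simp at ha hb; rw [ha, hb]⟩
    exact chi_subsingleton _ _
  | succ N ih =>
    intro M _ _ _ hM hx
    rw [chi_quot _ hM (LinearMap.ker (LinearMap.lsmul R M x)),
      ih (hM.of_surj _ (Submodule.mkQ_surjective _)),
      chi_kill_one _ _ (hM.of_inj _ (Submodule.subtype_injective _)), add_zero]
    · rintro ⟨m, hm⟩
      exact Subtype.ext hm
    · intro m
      obtain ⟨m, rfl⟩ := Submodule.mkQ_surjective _ m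
      rw [← map_smul, Submodule.mkQ_apply, Submodule.Quotient.mk_eq_zero]
      simp [← mul_smul, ← pow_succ, ← pow_succ', hx]

theorem chi_inj (x : R) (xs : List R) {M : Type u} [AddCommGroup M] [Module R M]
    (hx : ∀ m : M, x • m = 0 → m = 0) :
    chiSym (x :: xs) M = chiSym xs (M ⧸ LinearMap.range (LinearMap.lsmul R M x)) := by
  have : Subsingleton (LinearMap.ker (LinearMap.lsmul R M x)) := by
    rw [Submodule.subsingleton_iff_eq_bot, LinearMap.ker_eq_bot']
    exact hx
  simp only [chiSym]
  rw [chi_subsingleton xs (LinearMap.ker (LinearMap.lsmul R M x)), sub_zero]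

theorem chi_nonneg (xs : List R) : ∀ {M : Type u} [AddCommGroup M] [Module R M]
    [IsNoetherian R M], ChiCond xs M → 0 ≤ chiSym xs M := by
  induction xs with
  | nil => intro M _ _ _ _; simp [chiSym]
  | cons x xs ih =>
    intro M _ _ _ hM
    let F : ℕ →o Submodule R M :=
      { toFun := fun n => LinearMap.ker (LinearMap.lsmul R M (x ^ n))
        monotone' := by
          intro a b hab m hm
          simp only [LinearMap.mem_ker, LinearMap.lsmul_apply] at hm ⊢
          obtain ⟨c, rfl⟩ := Nat.exists_eq_add_of_le hab
          rw [pow_add, mul_comm, mul_smul, hm, smul_zero] }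
    obtain ⟨N, hN⟩ := monotone_stabilizes_iff_noetherian.2 (inferInstance : IsNoetherian R M) F
    rw [chi_quot _ hM (F N), chi_kill_pow x xs N (hM.of_inj _ (Submodule.subtype_injective _)),
      zero_add, chi_inj]
    · exact ih (hM.of_surj _ (Submodule.mkQ_surjective _)).quot
    · intro m hm
      obtain ⟨m, rfl⟩ := Submodule.mkQ_surjective _ m
      rw [← map_smul, Submodule.mkQ_apply, Submodule.Quotient.mk_eq_zero] at hm
      rw [Submodule.mkQ_apply, Submodule.Quotient.mk_eq_zero, hN (N + 1) (by omega)]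
      change x ^ N • x • m = 0 at hm
      change x ^ (N + 1) • m = 0
      rw [pow_succ, mul_smul, hm]
    · rintro ⟨m, hm⟩
      exact Subtype.ext hm

theorem chi_mul (x y : R) (xs : List R) {M : Type u} [AddCommGroup M] [Module R M]
    [IsNoetherian R M] (hM : ChiCond ((x * y) :: xs) M) :
    chiSym ((x * y) :: xs) M = chiSym (x :: xs) M + chiSym (y :: xs) M := by
  have hx : ChiCond (x :: xs) M := hM.of_mem (by
    intro z hz
    apply Ideal.le_radical
    apply Ideal.mem_sup_left
    rcases List.mem_cons.1 hz with rfl | hz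
    · exact Ideal.mul_mem_right _ _ (Ideal.subset_span (by simp))
    · exact Ideal.subset_span (by simp [hz]))
  have hy : ChiCond (y :: xs) M := hM.of_mem (by
    intro z hz
    apply Ideal.le_radical
    apply Ideal.mem_sup_left
    rcases List.mem_cons.1 hz with rfl | hz
    · exact Ideal.mul_mem_left _ _ (Ideal.subset_span (by simp))
    · exact Ideal.subset_span (by simp [hz]))
  let lx := LinearMap.lsmul R M x
  let ly := LinearMap.lsmul R M y
  let l := LinearMap.lsmul R M (x * y)
  let f : LinearMap.ker lx →ₗ[R] LinearMap.ker l := Submodule.inclusion (by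
    intro m hm
    change x • m = 0 at hm
    change (x * y) • m = 0
    rw [mul_comm, mul_smul, hm, smul_zero])
  let g : LinearMap.ker l →ₗ[R] LinearMap.ker ly := lx.restrict (by
    intro m hm
    change (x * y) • m = 0 at hm
    change y • x • m = 0
    rw [← mul_smul, mul_comm, hm])
  let h : LinearMap.ker ly →ₗ[R] (M ⧸ LinearMap.range lx) :=
    (LinearMap.range lx).mkQ.comp (LinearMap.ker ly).subtype
  let i : (M ⧸ LinearMap.range lx) →ₗ[R] (M ⧸ LinearMap.range l) :=
    Submodule.mapQ _ _ ly (by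
      rintro _ ⟨a, rfl⟩
      exact ⟨a, by simp [l, lx, ly, ← mul_smul, mul_comm]⟩)
  let j : (M ⧸ LinearMap.range l) →ₗ[R] (M ⧸ LinearMap.range ly) :=
    Submodule.factor (by
      rintro _ ⟨a, rfl⟩
      exact ⟨x • a, by simp [l, ly, ← mul_smul, mul_comm]⟩)
  have := chi_six (chi := fun M => chiSym xs M) (cond := fun M => ChiCond xs M) (chi_add xs)
      _ _ _ _ _ _ f g h i j hM.ker hy.ker hx.quot hM.quot
      (Submodule.inclusion_injective _)
      (by
        intro b
        constructor
        · intro hb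
          exact ⟨⟨b.1, congrArg Subtype.val hb⟩, rfl⟩
        · rintro ⟨a, rfl⟩
          exact Subtype.ext a.2)
      (by
        intro b
        constructor
        · intro hb
          have hb : (LinearMap.range lx).mkQ b.1 = 0 := hb
          rw [Submodule.mkQ_apply, Submodule.Quotient.mk_eq_zero] at hb
          obtain ⟨a, ha⟩ := hb
          change x • a = b.1 at ha
          refine ⟨⟨a, ?_⟩, Subtype.ext ha⟩
          have h2 : y • b.1 = 0 := b.2
          change (x * y) • a = 0
          rw [mul_comm, mul_smul, ha, h2]
        · rintro ⟨a, rfl⟩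
          change (LinearMap.range lx).mkQ (x • a.1) = 0
          rw [Submodule.mkQ_apply, Submodule.Quotient.mk_eq_zero]
          exact ⟨a.1, rfl⟩)
      (by
        intro b
        obtain ⟨b, rfl⟩ := Submodule.mkQ_surjective _ b
        constructor
        · intro hb
          have hb : (LinearMap.range l).mkQ (y • b) = 0 := hb
          rw [Submodule.mkQ_apply, Submodule.Quotient.mk_eq_zero] at hb
          obtain ⟨a, ha⟩ := hb
          change (x * y) • a = y • b at ha
          refine ⟨⟨b - x • a, ?_⟩, ?_⟩
          · change y • (b - x • a) = 0
            rw [smul_sub, ← ha, ← mul_smul, mul_comm, sub_self]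
          · change (LinearMap.range lx).mkQ (b - x • a) = _
            rw [map_sub, sub_eq_self, Submodule.mkQ_apply, Submodule.Quotient.mk_eq_zero]
            exact ⟨a, rfl⟩
        · rintro ⟨a, ha⟩
          rw [← ha]
          have h2 : y • a.1 = 0 := a.2
          change (LinearMap.range l).mkQ (y • a.1) = 0
          rw [h2, map_zero])
      (by
        intro b
        obtain ⟨b, rfl⟩ := Submodule.mkQ_surjective _ b
        constructor
        · intro hb
          have hb : (LinearMap.range ly).mkQ b = 0 := hb
          rw [Submodule.mkQ_apply, Submodule.Quotient.mk_eq_zero] at hb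
          obtain ⟨a, ha⟩ := hb
          exact ⟨(LinearMap.range lx).mkQ a, by rw [← ha]; rfl⟩
        · rintro ⟨a, ha⟩
          obtain ⟨a, rfl⟩ := Submodule.mkQ_surjective _ a
          rw [← ha]
          change (LinearMap.range ly).mkQ (y • a) = 0
          rw [Submodule.mkQ_apply, Submodule.Quotient.mk_eq_zero]
          exact ⟨a, rfl⟩)
      (by
        intro b
        obtain ⟨b, rfl⟩ := Submodule.mkQ_surjective _ b
        exact ⟨(LinearMap.range l).mkQ b, rfl⟩)
  simp only [chiSym]
  simp only [lx, ly, l] at this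
  omega

theorem ChiCond.pow_head {x : R} {xs : List R} {M : Type u} [AddCommGroup M] [Module R M]
    (h : ChiCond (x :: xs) M) (n : ℕ) : ChiCond (x ^ n :: xs) M := h.of_mem (by
  intro z hz
  rcases List.mem_cons.1 hz with rfl | hz
  · exact ⟨n, Ideal.mem_sup_left (Ideal.subset_span (by simp))⟩
  · exact Ideal.le_radical (Ideal.mem_sup_left (Ideal.subset_span (by simp [hz]))))

theorem chi_pow (x : R) (xs : List R) {M : Type u} [AddCommGroup M] [Module R M]
    [IsNoetherian R M] (hM : ChiCond (x :: xs) M) (n : ℕ) :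
    chiSym (x ^ n :: xs) M = n * chiSym (x :: xs) M := by
  induction n with
  | zero =>
    rw [chi_inj]
    · have : Subsingleton (M ⧸ LinearMap.range (LinearMap.lsmul R M (x ^ 0))) := by
        rw [Submodule.Quotient.subsingleton_iff, LinearMap.range_eq_top]
        intro m; exact ⟨m, by simp⟩
      rw [chi_subsingleton]; simp
    · intro m hm; simpa using hm
  | succ n ih =>
    have := hM.pow_head (n + 1)
    rw [pow_succ] at this ⊢
    rw [chi_mul _ _ _ this, ih]
    push_cast; ring

theorem ChiCond.map_pow {xs : List R} {M : Type u} [AddCommGroup M] [Module R M]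
    (h : ChiCond xs M) (n : ℕ) : ChiCond (xs.map (· ^ n)) M := h.of_mem (by
  intro z hz
  exact ⟨n, Ideal.mem_sup_left (Ideal.subset_span (List.mem_map.2 ⟨z, hz, rfl⟩))⟩)

theorem chi_map_pow (n : ℕ) (xs : List R) : ∀ {M : Type u} [AddCommGroup M] [Module R M]
    [IsNoetherian R M], ChiCond xs M →
    chiSym (xs.map (· ^ n)) M = (n : ℤ) ^ xs.length * chiSym xs M := by
  induction xs with
  | nil => intro M _ _ _ _; simp
  | cons x xs ih =>
    intro M _ _ _ hM
    rw [List.map_cons, chi_pow]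
    · simp only [chiSym]
      rw [ih hM.quot, ih hM.ker]
      simp only [List.length_cons]
      ring
    · refine hM.of_mem ?_
      intro z hz
      rcases List.mem_cons.1 hz with rfl | hz
      · exact Ideal.le_radical (Ideal.mem_sup_left (Ideal.subset_span (by simp)))
      · exact ⟨n, Ideal.mem_sup_left (Ideal.subset_span
          (List.mem_cons_of_mem _ (List.mem_map.2 ⟨z, hz, rfl⟩)))⟩

end chi2

section chain

variable {R : Type u} [CommRing R] [IsLocalRing R] [IsNoetherianRing R]

/-- Chains of successive quotients by nonzerodivisors and saturations. -/
inductive Ch : List R → Ideal R → Ideal R → Prop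
  | nil (a : Ideal R) : Ch [] a a
  | nzd (x : R) (xs : List R) (a J : Ideal R) (hx : ∀ r, x * r ∈ a → r ∈ a)
      (h : Ch xs (a ⊔ Ideal.span {x}) J) : Ch (x :: xs) a J
  | sat (v : R) (xs : List R) (a a' J : Ideal R) (haa' : a ≤ a') (N : ℕ)
      (hN : ∀ w ∈ a', v ^ N * w ∈ a) (h : Ch (v :: xs) a' J) : Ch (v :: xs) a J

/-- Iterated quotient. -/
noncomputable def quotQuot (a : Ideal R) (x : R) :
    ((R ⧸ a) ⧸ LinearMap.range (LinearMap.lsmul R (R ⧸ a) x)) ≃ₗ[R]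
      (R ⧸ (a ⊔ Ideal.span {x})) := by
  let f : R →ₗ[R] ((R ⧸ a) ⧸ LinearMap.range (LinearMap.lsmul R (R ⧸ a) x)) :=
    (LinearMap.range (LinearMap.lsmul R (R ⧸ a) x)).mkQ.comp (Submodule.mkQ a)
  have hf : Function.Surjective f :=
    (Submodule.mkQ_surjective _).comp (Submodule.mkQ_surjective _)
  have hk : LinearMap.ker f = a ⊔ Ideal.span {x} := by
    ext r
    rw [LinearMap.mem_ker]
    simp only [f, LinearMap.comp_apply, Submodule.mkQ_apply]
    rw [Submodule.Quotient.mk_eq_zero, Submodule.mem_sup]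
    constructor
    · rintro ⟨m, hm⟩
      obtain ⟨m, rfl⟩ := Submodule.mkQ_surjective _ m
      change Submodule.Quotient.mk (x • m) = _ at hm
      rw [eq_comm, Submodule.Quotient.eq] at hm
      exact ⟨_, hm, x * m, Ideal.mem_span_singleton'.2 ⟨m, mul_comm _ _⟩, by simp⟩
    · rintro ⟨s, hs, t, ht, rfl⟩
      obtain ⟨m, rfl⟩ := Ideal.mem_span_singleton'.1 ht
      refine ⟨Submodule.Quotient.mk m, ?_⟩
      change Submodule.Quotient.mk (x • m) = _
      rw [eq_comm, Submodule.Quotient.eq]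
      simpa [mul_comm] using hs
  exact ((Submodule.quotEquivOfEq _ _ hk.symm).trans (f.quotKerEquivOfSurjective hf)).symm

theorem chiCond_quot_iff {xs : List R} {a : Ideal R} :
    ChiCond xs (R ⧸ a) ↔ maximalIdeal R ≤ (Ideal.span {x | x ∈ xs} ⊔ a).radical := by
  unfold ChiCond
  rw [Ideal.annihilator_quotient]

theorem chi_sat (v : R) (xs : List R) (a a' : Ideal R) (haa' : a ≤ a') (N : ℕ)
    (hN : ∀ w ∈ a', v ^ N * w ∈ a) (hc : ChiCond (v :: xs) (R ⧸ a)) :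
    chiSym (v :: xs) (R ⧸ a) = chiSym (v :: xs) (R ⧸ a') := by
  let g : (R ⧸ a) →ₗ[R] (R ⧸ a') := Submodule.factor haa'
  have hg : Function.Surjective g := by
    intro r
    obtain ⟨r, rfl⟩ := Submodule.mkQ_surjective _ r
    exact ⟨Submodule.mkQ _ r, rfl⟩
  rw [chi_add _ _ _ _ (LinearMap.ker g).subtype g hc (Submodule.subtype_injective _)
    (LinearMap.exact_subtype_ker_map _) hg,
    chi_kill_pow v xs N (hc.of_inj _ (Submodule.subtype_injective _)), zero_add]
  rintro ⟨m, hm⟩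
  apply Subtype.ext
  obtain ⟨r, rfl⟩ := Submodule.mkQ_surjective _ m
  have hm : Submodule.mkQ a' r = 0 := hm
  rw [Submodule.mkQ_apply, Submodule.Quotient.mk_eq_zero] at hm
  change Submodule.mkQ a (v ^ N * r) = 0
  rw [Submodule.mkQ_apply, Submodule.Quotient.mk_eq_zero]
  exact hN r hm

theorem span_cons_sup (x : R) (xs : List R) (a : Ideal R) :
    Ideal.span {y | y ∈ x :: xs} ⊔ a = Ideal.span {y | y ∈ xs} ⊔ (a ⊔ Ideal.span {x}) := by
  have : {y | y ∈ x :: xs} = {x} ∪ {y | y ∈ xs} := by ext; simp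
  rw [this, Ideal.span_union, sup_comm a, ← sup_assoc, sup_comm (Ideal.span {x})]

theorem ch_eq {xs : List R} {a J : Ideal R} (h : Ch xs a J)
    (hc : maximalIdeal R ≤ (Ideal.span {x | x ∈ xs} ⊔ a).radical) :
    chiSym xs (R ⧸ a) = ((Module.length R (R ⧸ J)).toNat : ℤ) := by
  induction h with
  | nil a => rfl
  | nzd x xs a J hx h ih =>
    have hc' := chiCond_quot_iff.2 hc
    rw [chi_inj, chi_iso _ hc'.quot (quotQuot a x)]
    · apply ih
      rwa [← span_cons_sup]
    · intro m hm
      obtain ⟨m, rfl⟩ := Submodule.mkQ_surjective _ m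
      rw [← map_smul, Submodule.mkQ_apply, Submodule.Quotient.mk_eq_zero] at hm
      rw [Submodule.mkQ_apply, Submodule.Quotient.mk_eq_zero]
      exact hx _ hm
  | sat v xs a a' J haa' N hN h ih =>
    have hc' := chiCond_quot_iff.2 hc
    rw [chi_sat v xs a a' haa' N hN hc']
    exact ih (hc.trans (Ideal.radical_mono (sup_le_sup_left haa' _)))

theorem ch_le {xs : List R} {a J : Ideal R} (h : Ch xs a J) (φ : R →+* R) (q : ℕ)
    (hφ : ∀ x, φ x = x ^ q)
    (hc : maximalIdeal R ≤ (Ideal.span {x | x ∈ xs.map (· ^ q)} ⊔ a.map φ).radical) :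
    chiSym (xs.map (· ^ q)) (R ⧸ a.map φ) ≤ ((Module.length R (R ⧸ J.map φ)).toNat : ℤ) := by
  induction h with
  | nil a => exact le_rfl
  | nzd x xs a J hx h ih =>
    have hc' := chiCond_quot_iff.2 hc
    rw [List.map_cons] at hc' hc ⊢
    simp only [chiSym]
    have h1 : (a ⊔ Ideal.span {x}).map φ = a.map φ ⊔ Ideal.span {x ^ q} := by
      rw [Ideal.map_sup, Ideal.map_span, Set.image_singleton, hφ]
    rw [chi_iso _ hc'.quot (quotQuot (a.map φ) (x ^ q))]
    rw [h1] at ih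
    have := ih (by rwa [← span_cons_sup])
    have := chi_nonneg _ hc'.ker
    omega
  | sat v xs a a' J haa' N hN h ih =>
    have hc' := chiCond_quot_iff.2 hc
    rw [List.map_cons] at hc' hc ih ⊢
    rw [chi_sat _ _ _ _ (Ideal.map_mono haa') N ?_ hc']
    · exact ih (hc.trans (Ideal.radical_mono (sup_le_sup_left (Ideal.map_mono haa') _)))
    · have : a'.map φ ≤ (a.map φ).colon (Ideal.span {(v ^ q) ^ N}) := by
        rw [Ideal.map_le_iff_le_comap]
        intro w hw
        rw [Ideal.mem_comap, Submodule.mem_colon]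
        intro s hs
        obtain ⟨t, rfl⟩ := Ideal.mem_span_singleton'.1 hs
        have := Ideal.mem_map_of_mem φ (hN w hw)
        rw [map_mul, map_pow, hφ v] at this
        rw [smul_eq_mul, show φ w * (t * (v ^ q) ^ N) = t * ((v ^ q) ^ N * φ w) by ring]
        exact Ideal.mul_mem_left _ _ this
      intro w hw
      have := Submodule.mem_colon.1 (this hw) _ (Ideal.mem_span_singleton_self _)
      rwa [smul_eq_mul, mul_comm] at this

theorem ch_main {xs : List R} {J : Ideal R} (h : Ch xs ⊥ J)
    (hc : maximalIdeal R ≤ (Ideal.span {x | x ∈ xs}).radical) (φ : R →+* R) (q : ℕ)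
    (hφ : ∀ x, φ x = x ^ q) :
    q ^ xs.length * (Module.length R (R ⧸ J)).toNat ≤ (Module.length R (R ⧸ J.map φ)).toNat := by
  have hc0 : maximalIdeal R ≤ (Ideal.span {x | x ∈ xs} ⊔ ⊥).radical := by rwa [sup_bot_eq]
  have hc' := (chiCond_quot_iff.2 hc0).map_pow q
  have h1 := ch_eq h hc0
  have h2 := ch_le h φ q hφ (by rw [Ideal.map_bot]; exact chiCond_quot_iff.1 hc')
  rw [Ideal.map_bot, chi_map_pow _ _ (chiCond_quot_iff.2 hc0), h1] at h2
  exact_mod_cast h2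

end chain

section len

variable {R : Type u} [CommRing R]

/-- colength of an ideal -/
noncomputable def colen (I : Ideal R) : ℕ∞ := Module.length R (R ⧸ I)

theorem colen_anti {I J : Ideal R} (h : I ≤ J) : colen J ≤ colen I := by
  apply Module.length_le_of_surjective (Submodule.factor h)
  intro r
  obtain ⟨r, rfl⟩ := Submodule.mkQ_surjective _ r
  exact ⟨Submodule.mkQ _ r, rfl⟩

theorem colen_top : colen (⊤ : Ideal R) = 0 := by
  unfold colen
  rw [Module.length_eq_zero_iff]
  exact Ideal.Quotient.subsingleton_iff.2 rfl

theorem colen_max [IsLocalRing R] : colen (maximalIdeal R) = 1 := by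
  unfold colen
  rw [Module.length_eq_one_iff, isSimpleModule_iff_isCoatom]
  exact (IsLocalRing.maximalIdeal.isMaximal R).1

theorem colen_colon {I C : Ideal R} {g : R} (h : ∀ r, r ∈ C ↔ r * g ∈ I) :
    colen I = colen (I ⊔ Ideal.span {g}) + colen C := by
  let f : (R ⧸ C) →ₗ[R] (R ⧸ I) := Submodule.mapQ C I (LinearMap.lsmul R R g) (by
    intro r hr
    have := (h r).1 hr
    simpa [mul_comm] using this)
  let k : (R ⧸ I) →ₗ[R] (R ⧸ (I ⊔ Ideal.span {g})) := Submodule.factor le_sup_left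
  have hk : Function.Surjective k := by
    intro r
    obtain ⟨r, rfl⟩ := Submodule.mkQ_surjective _ r
    exact ⟨Submodule.mkQ _ r, rfl⟩
  rw [add_comm]
  refine Module.length_eq_add_of_exact f k ?_ hk ?_
  · rw [← LinearMap.ker_eq_bot, LinearMap.ker_eq_bot']
    intro m hm
    obtain ⟨m, rfl⟩ := Submodule.mkQ_surjective _ m
    change Submodule.mkQ I (g * m) = 0 at hm
    rw [Submodule.mkQ_apply, Submodule.Quotient.mk_eq_zero] at hm ⊢
    rw [h, mul_comm]; exact hm
  · intro m
    obtain ⟨m, rfl⟩ := Submodule.mkQ_surjective _ m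
    constructor
    · intro hm
      change Submodule.mkQ (I ⊔ Ideal.span {g}) m = 0 at hm
      rw [Submodule.mkQ_apply, Submodule.Quotient.mk_eq_zero, Submodule.mem_sup] at hm
      obtain ⟨y, hy, z, hz, rfl⟩ := hm
      obtain ⟨t, rfl⟩ := Ideal.mem_span_singleton'.1 hz
      refine ⟨Submodule.mkQ _ t, ?_⟩
      change Submodule.mkQ I (g * t) = _
      rw [eq_comm, Submodule.mkQ_apply, Submodule.mkQ_apply, Submodule.Quotient.eq]
      simpa [mul_comm] using hy
    · rintro ⟨t, ht⟩
      obtain ⟨t, rfl⟩ := Submodule.mkQ_surjective _ t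
      rw [← ht]
      change Submodule.mkQ (I ⊔ Ideal.span {g}) (g * t) = 0
      rw [Submodule.mkQ_apply, Submodule.Quotient.mk_eq_zero]
      exact Ideal.mem_sup_right (Ideal.mem_span_singleton'.2 ⟨t, mul_comm _ _⟩)

theorem colen_le_add {I C : Ideal R} {g : R} (h : ∀ r ∈ C, r * g ∈ I) :
    colen I ≤ colen (I ⊔ Ideal.span {g}) + colen C := by
  let D : Ideal R := Submodule.comap (LinearMap.mulRight R g) I
  have hD : ∀ r, r ∈ D ↔ r * g ∈ I := fun r => Iff.rfl
  rw [colen_colon hD]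
  gcongr
  exact colen_anti h

theorem filtration [IsLocalRing R] [IsNoetherianRing R] (K : Ideal R) (s : ℕ) (I : Ideal R) :
    I ≤ K → maximalIdeal R ^ s ≤ I → ∃ k : ℕ, colen I = colen K + k ∧
      ∀ (φ : R →+* R), colen (I.map φ) ≤
        colen (K.map φ) + k * colen ((maximalIdeal R).map φ) := by
  induction I using WellFoundedGT.induction with
  | ind I ih =>
  intro hIK hs
  by_cases hEq : I = K
  · subst hEq; exact ⟨0, by simp, by simp⟩
  have hex : ∃ t, K * maximalIdeal R ^ t ≤ I := ⟨s, Ideal.mul_le_right.trans hs⟩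
  classical
  obtain ⟨u, huK, huI, hu⟩ : ∃ u ∈ K, u ∉ I ∧ ∀ r ∈ maximalIdeal R, r * u ∈ I := by
    have h1 := Nat.find_spec hex
    have h2 := fun {n} => Nat.find_min (m := n) hex
    cases ht : Nat.find hex with
    | zero =>
      rw [ht, pow_zero, Ideal.one_eq_top, Ideal.mul_top] at h1
      exact absurd (le_antisymm hIK h1) hEq
    | succ t =>
      have h2 := h2 (n := t) (by omega)
      obtain ⟨u, hu, huI⟩ := SetLike.not_le_iff_exists.1 h2
      refine ⟨u, Ideal.mul_le_left (I := K) hu, huI, fun r hr => ?_⟩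
      apply h1
      rw [ht, pow_succ, ← mul_assoc, mul_comm r]
      exact Ideal.mul_mem_mul hu hr
  have hlt : I < I ⊔ Ideal.span {u} := lt_of_le_of_ne le_sup_left (by
    intro h; apply huI; rw [h]; exact Ideal.mem_sup_right (Ideal.mem_span_singleton_self u))
  obtain ⟨k, hk1, hk2⟩ := ih _ hlt
    (sup_le hIK ((Ideal.span_singleton_le_iff_mem _).2 huK)) (hs.trans le_sup_left)
  refine ⟨k + 1, ?_, ?_⟩
  · rw [colen_colon (C := maximalIdeal R) (g := u), hk1, colen_max]
    · push_cast; rw [add_assoc]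
    · intro r
      refine ⟨hu r, fun h => ?_⟩
      by_contra hr
      have : IsUnit r := by simpa using hr
      exact huI ((Ideal.unit_mul_mem_iff_mem _ this).1 h)
  · intro φ
    refine (colen_le_add (C := (maximalIdeal R).map φ) (g := φ u) ?_).trans ?_
    · have : (maximalIdeal R).map φ ≤ Submodule.comap (LinearMap.mulRight R (φ u)) (I.map φ) := by
        refine Ideal.map_le_iff_le_comap.2 ?_
        intro r hr
        change φ r * φ u ∈ I.map φ
        rw [← map_mul]
        exact Ideal.mem_map_of_mem _ (hu r hr)
      intro r hr
      exact this hr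
    · have := hk2 φ
      rw [Ideal.map_sup, Ideal.map_span, Set.image_singleton] at this
      refine (add_le_add this le_rfl).trans ?_
      push_cast
      rw [add_mul, one_mul, add_assoc]

end len

section lech

variable {R : Type u} [CommRing R] {ι : Type} [Fintype ι] [DecidableEq ι]

/-- Lech independence -/
def LechInd (f : ι → R) : Prop :=
  ∀ a : ι → R, ∑ i, a i * f i = 0 → ∀ i, a i ∈ Ideal.span (Set.range f)

theorem span_update_le {f : ι → R} {i₀ : ι} {g : R} {J : Ideal R} (hg : g ∈ J)
    (h : ∀ i, i ≠ i₀ → f i ∈ J) : Ideal.span (Set.range (Function.update f i₀ g)) ≤ J := by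
  rw [Ideal.span_le]
  rintro _ ⟨i, rfl⟩
  by_cases hi : i = i₀
  · subst hi; simpa using hg
  · simpa [Function.update_of_ne hi] using h i hi

theorem mem_span_update (f : ι → R) {i₀ i : ι} (g : R) (hi : i ≠ i₀) :
    f i ∈ Ideal.span (Set.range (Function.update f i₀ g)) :=
  Ideal.subset_span ⟨i, by simp [Function.update_of_ne hi]⟩

theorem mem_span_update_self (f : ι → R) (i₀ : ι) (g : R)  :
    g ∈ Ideal.span (Set.range (Function.update f i₀ g)) :=
  Ideal.subset_span ⟨i₀, by simp⟩

theorem span_sup_update (f : ι → R) (i₀ : ι) (g h : R) (hf : f i₀ = g * h) :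
    Ideal.span (Set.range f) ⊔ Ideal.span {g} =
      Ideal.span (Set.range (Function.update f i₀ g)) := by
  apply le_antisymm
  · apply sup_le
    · rw [Ideal.span_le]
      rintro _ ⟨i, rfl⟩
      by_cases hi : i = i₀
      · subst hi; rw [hf]; exact Ideal.mul_mem_right _ _ (mem_span_update_self _ _ _)
      · exact mem_span_update f g hi
    · rw [Ideal.span_singleton_le_iff_mem]
      exact mem_span_update_self _ _ _
  · exact span_update_le (Ideal.mem_sup_right (Ideal.mem_span_singleton_self g))
      (fun i _ => Ideal.mem_sup_left (Ideal.subset_span ⟨i, rfl⟩))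

theorem update_mul_mem (f : ι → R) (i₀ : ι) (g h : R) (hf : f i₀ = g * h) {r : R}
    (hr : r ∈ Ideal.span (Set.range (Function.update f i₀ h))) :
    r * g ∈ Ideal.span (Set.range f) := by
  have : Ideal.span (Set.range (Function.update f i₀ h)) ≤
      Submodule.comap (LinearMap.mulRight R g) (Ideal.span (Set.range f)) := by
    apply span_update_le
    · change h * g ∈ Ideal.span (Set.range f)
      rw [mul_comm, ← hf]
      exact Ideal.subset_span ⟨i₀, rfl⟩
    · intro i _
      exact Ideal.mul_mem_right _ (Ideal.span (Set.range f)) (Ideal.subset_span (Set.mem_range_self i))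
  exact this hr

theorem LechInd.colon {f : ι → R} (H : LechInd f) (i₀ : ι) (g h : R) (hf : f i₀ = g * h) {r : R}
    (hr : r * g ∈ Ideal.span (Set.range f)) :
    r ∈ Ideal.span (Set.range (Function.update f i₀ h)) := by
  obtain ⟨a, ha⟩ := Ideal.mem_span_range_iff_exists_fun.1 hr
  have h1 := H (Function.update (fun i => -h * a i) i₀ (r - a i₀ * h)) (by
    have : ∀ i, Function.update (fun i => -h * a i) i₀ (r - a i₀ * h) i * f i =
        -h * (a i * f i) + (if i = i₀ then r * g * h else 0) := by
      intro i
      by_cases hi : i = i₀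
      · subst hi; simp [hf]; ring
      · simp [Function.update_of_ne hi, hi]; ring
    simp only [this, Finset.sum_add_distrib, ← Finset.mul_sum, ha]
    simp; ring) i₀
  rw [Function.update_self] at h1
  have h2 : Ideal.span (Set.range f) ≤ Ideal.span (Set.range (Function.update f i₀ h)) := by
    rw [← span_sup_update f i₀ h g (by rw [hf, mul_comm])]; exact le_sup_left
  have := Ideal.add_mem _ (h2 h1) (Ideal.mul_mem_left _ (a i₀) (mem_span_update_self f i₀ h))
  simpa using this

theorem LechInd.update {f : ι → R} (H : LechInd f) (i₀ : ι) (g h : R) (hf : f i₀ = g * h) :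
    LechInd (Function.update f i₀ h) := by
  intro a ha
  have h1 := H (Function.update (fun i => g * a i) i₀ (a i₀)) (by
    have : ∀ i, Function.update (fun i => g * a i) i₀ (a i₀) i * f i =
        g * (a i * Function.update f i₀ h i) := by
      intro i
      by_cases hi : i = i₀
      · subst hi; simp [hf]; ring
      · simp [Function.update_of_ne hi]; ring
    simp only [this, ← Finset.mul_sum, ha, mul_zero])
  intro i
  have h2 : Ideal.span (Set.range f) ≤ Ideal.span (Set.range (Function.update f i₀ h)) := by
    rw [← span_sup_update f i₀ h g (by rw [hf, mul_comm])]; exact le_sup_left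
  by_cases hi : i = i₀
  · subst hi
    have := h1 i
    rw [Function.update_self] at this
    exact h2 this
  · have := h1 i
    rw [Function.update_of_ne hi, mul_comm] at this
    exact H.colon i₀ g h hf this

theorem prod_split (c : ι → ℕ) (i₀ : ι) (k : ℕ) (hk : c i₀ = k + 1) :
    ∏ i, c i = ∏ i, Function.update c i₀ 1 i + ∏ i, Function.update c i₀ k i := by
  rw [← Finset.mul_prod_erase _ c (Finset.mem_univ i₀),
    ← Finset.mul_prod_erase _ (Function.update c i₀ 1) (Finset.mem_univ i₀),
    ← Finset.mul_prod_erase _ (Function.update c i₀ k) (Finset.mem_univ i₀)]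
  have : ∀ m, ∏ x ∈ Finset.univ.erase i₀, Function.update c i₀ m x =
      ∏ x ∈ Finset.univ.erase i₀, c x := by
    intro m
    apply Finset.prod_congr rfl
    intro x hx
    rw [Function.update_of_ne (Finset.ne_of_mem_erase hx)]
  rw [this, this, Function.update_self, Function.update_self, hk]
  ring

theorem sum_update_lt (c : ι → ℕ) (i₀ : ι) (k : ℕ) (hk : k < c i₀) :
    ∑ i, Function.update c i₀ k i < ∑ i, c i := by
  apply Finset.sum_lt_sum
  · intro i _
    by_cases hi : i = i₀
    · subst hi; simp [hk.le]
    · simp [Function.update_of_ne hi]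
  · exact ⟨i₀, Finset.mem_univ _, by simpa using hk⟩

theorem pow_update (x : ι → R) (c : ι → ℕ) (i₀ : ι) (k : ℕ) :
    (fun i => x i ^ Function.update c i₀ k i) =
      Function.update (fun i => x i ^ c i) i₀ (x i₀ ^ k) := by
  funext i
  by_cases hi : i = i₀
  · subst hi; simp
  · simp [Function.update_of_ne hi]

theorem lech_lower [IsLocalRing R] (x : ι → R) (hx : ∀ i, x i ∈ maximalIdeal R) (n : ℕ) :
    ∀ c : ι → ℕ, ∑ i, c i = n → (∀ i, 1 ≤ c i) → LechInd (fun i => x i ^ c i) →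
      ((∏ i, c i : ℕ) : ℕ∞) ≤ colen (Ideal.span (Set.range (fun i => x i ^ c i))) := by
  induction n using Nat.strong_induction_on with
  | _ n ih =>
  intro c hn hc H
  by_cases h1 : ∀ i, c i = 1
  · have : ∏ i, c i = 1 := Finset.prod_eq_one (fun i _ => h1 i)
    rw [this, Nat.cast_one, ← colen_max (R := R)]
    apply colen_anti
    rw [Ideal.span_le]
    rintro _ ⟨i, rfl⟩
    simpa [h1] using hx i
  · push Not at h1
    obtain ⟨i₀, hi⟩ := h1
    obtain ⟨k, hk, hk1⟩ : ∃ k, c i₀ = k + 1 ∧ 1 ≤ k :=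
      ⟨c i₀ - 1, by have := hc i₀; omega, by have := hc i₀; omega⟩
    have hf : (fun i => x i ^ c i) i₀ = x i₀ ^ 1 * x i₀ ^ k := by
      simp only [hk]; ring
    have hf' : (fun i => x i ^ c i) i₀ = x i₀ ^ k * x i₀ ^ 1 := by
      simp only [hk]; ring
    have e := colen_colon (I := Ideal.span (Set.range (fun i => x i ^ c i)))
      (C := Ideal.span (Set.range (Function.update (fun i => x i ^ c i) i₀ (x i₀ ^ k))))
      (g := x i₀ ^ 1) (fun r => ⟨update_mul_mem _ i₀ _ _ hf, H.colon i₀ _ _ hf⟩)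
    rw [e, span_sup_update _ i₀ _ _ hf, ← pow_update, ← pow_update, prod_split c i₀ k hk,
      Nat.cast_add]
    have hb : ∀ m, 1 ≤ m → ∀ i, 1 ≤ Function.update c i₀ m i := by
      intro m hm i
      by_cases hi : i = i₀
      · subst hi; simpa using hm
      · simpa [Function.update_of_ne hi] using hc i
    apply add_le_add
    · exact ih _ (hn ▸ sum_update_lt c i₀ 1 (by omega)) _ rfl (hb 1 le_rfl)
        (by rw [pow_update]; exact H.update i₀ _ _ hf')
    · exact ih _ (hn ▸ sum_update_lt c i₀ k (by omega)) _ rfl (hb k hk1)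
        (by rw [pow_update]; exact H.update i₀ _ _ hf)

theorem lech_upper [IsLocalRing R] (x : ι → R) (hx : maximalIdeal R = Ideal.span (Set.range x))
    (n : ℕ) : ∀ c : ι → ℕ, ∑ i, c i = n → (∀ i, 1 ≤ c i) →
      colen (Ideal.span (Set.range (fun i => x i ^ c i))) ≤ ((∏ i, c i : ℕ) : ℕ∞) := by
  induction n using Nat.strong_induction_on with
  | _ n ih =>
  intro c hn hc
  by_cases h1 : ∀ i, c i = 1
  · have : ∏ i, c i = 1 := Finset.prod_eq_one (fun i _ => h1 i)
    rw [this, Nat.cast_one, ← colen_max (R := R)]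
    apply colen_anti
    rw [hx]
    simp [h1]
  · push Not at h1
    obtain ⟨i₀, hi⟩ := h1
    obtain ⟨k, hk, hk1⟩ : ∃ k, c i₀ = k + 1 ∧ 1 ≤ k :=
      ⟨c i₀ - 1, by have := hc i₀; omega, by have := hc i₀; omega⟩
    have hf : (fun i => x i ^ c i) i₀ = x i₀ ^ 1 * x i₀ ^ k := by
      simp only [hk]; ring
    have e := colen_le_add (I := Ideal.span (Set.range (fun i => x i ^ c i)))
      (C := Ideal.span (Set.range (Function.update (fun i => x i ^ c i) i₀ (x i₀ ^ k))))
      (g := x i₀ ^ 1) (fun r => update_mul_mem _ i₀ _ _ hf)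
    refine e.trans ?_
    rw [span_sup_update _ i₀ _ _ hf, ← pow_update, ← pow_update, prod_split c i₀ k hk,
      Nat.cast_add]
    have hb : ∀ m, 1 ≤ m → ∀ i, 1 ≤ Function.update c i₀ m i := by
      intro m hm i
      by_cases hi : i = i₀
      · subst hi; simpa using hm
      · simpa [Function.update_of_ne hi] using hc i
    apply add_le_add
    · exact ih _ (hn ▸ sum_update_lt c i₀ 1 (by omega)) _ rfl (hb 1 le_rfl)
    · exact ih _ (hn ▸ sum_update_lt c i₀ k (by omega)) _ rfl (hb k hk1)

end lech

section chev

variable {R : Type u} [CommRing R] [IsLocalRing R] [IsNoetherianRing R]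

theorem krull_closed {I : Ideal R} (hI : I ≠ ⊤) (a : Ideal R) (x : R)
    (h : ∀ n, x ∈ a ⊔ I ^ n) : x ∈ a := by
  have h1 := Ideal.iInf_pow_smul_eq_bot_of_isLocalRing (M := R ⧸ a) (I := I) hI
  have h2 : Submodule.mkQ a x ∈ (⨅ i : ℕ, I ^ i • ⊤ : Submodule R (R ⧸ a)) := by
    rw [Submodule.mem_iInf]
    intro n
    obtain ⟨y, hy, z, hz, rfl⟩ := Submodule.mem_sup.1 (h n)
    have : Submodule.mkQ a (y + z) = z • Submodule.mkQ a 1 := by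
      rw [map_add, ← map_smul, smul_eq_mul, mul_one, add_eq_right]
      exact Ideal.Quotient.eq_zero_iff_mem.2 hy
    rw [this]
    exact Submodule.smul_mem_smul hz trivial
  rw [h1, Submodule.mem_bot] at h2
  exact Ideal.Quotient.eq_zero_iff_mem.1 h2

theorem stab_pow (b : ℕ → Ideal R) (hb : Antitone b) (k : ℕ) :
    ∃ N, ∀ n, N ≤ n → b N ⊔ maximalIdeal R ^ k ≤ b n ⊔ maximalIdeal R ^ k := by
  have hart : IsArtinianRing (R ⧸ maximalIdeal R ^ k) := artinian_quot (by
    intro x hx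
    exact ⟨k, Ideal.pow_mem_pow hx k⟩)
  let F : ℕ →o (Ideal (R ⧸ maximalIdeal R ^ k))ᵒᵈ :=
    { toFun := fun n => OrderDual.toDual ((b n).map (Ideal.Quotient.mk _))
      monotone' := fun i j hij => Ideal.map_mono (hb hij) }
  obtain ⟨N, hN⟩ := IsArtinian.monotone_stabilizes F
  refine ⟨N, fun n hn => ?_⟩
  have h1 : (b N).map (Ideal.Quotient.mk (maximalIdeal R ^ k)) =
    (b n).map (Ideal.Quotient.mk (maximalIdeal R ^ k)) := hN n hn
  have h2 := congrArg (Ideal.comap (Ideal.Quotient.mk (maximalIdeal R ^ k))) h1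
  rw [Ideal.comap_map_of_surjective _ Ideal.Quotient.mk_surjective,
    Ideal.comap_map_of_surjective _ Ideal.Quotient.mk_surjective] at h2
  have h3 : Ideal.comap (Ideal.Quotient.mk (maximalIdeal R ^ k)) ⊥ = maximalIdeal R ^ k := by
    rw [← RingHom.ker_eq_comap_bot, Ideal.mk_ker]
  rw [h3] at h2
  exact h2.le

theorem chevalley [IsAdicComplete (maximalIdeal R) R] (b : ℕ → Ideal R) (hb : Antitone b)
    (K : Ideal R) (s : ℕ) (hs : maximalIdeal R ^ s ≤ K) (hK : ∀ w, (∀ n, w ∈ b n) → w ∈ K) :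
    ∃ n, b n ≤ K := by
  by_contra hcon
  push Not at hcon
  choose N hN using stab_pow b hb
  have hN' : ∀ k n, b (N k) ≤ b n ⊔ maximalIdeal R ^ k := by
    intro k n
    rcases le_total (N k) n with h | h
    · exact le_sup_left.trans (hN k n h)
    · exact (hb h).trans le_sup_left
  obtain ⟨w0, hw0, hw0K⟩ := SetLike.not_le_iff_exists.1 (hcon (N s))
  have step : ∀ k (w : R), (∀ n, w ∈ b n ⊔ maximalIdeal R ^ k) →
      ∃ w' : R, (∀ n, w' ∈ b n ⊔ maximalIdeal R ^ (k + 1)) ∧ w' - w ∈ maximalIdeal R ^ k := by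
    intro k w hw
    obtain ⟨β, hβ, μ, hμ, rfl⟩ := Submodule.mem_sup.1 (hw (N (k + 1)))
    exact ⟨β, fun n => hN' _ n hβ, by simpa using hμ⟩
  choose! nxt hn1 hn2 using step
  let w : ℕ → R := fun j => Nat.rec w0 (fun i v => nxt (s + i) v) j
  have hw : ∀ j n, w j ∈ b n ⊔ maximalIdeal R ^ (s + j) := by
    intro j
    induction j with
    | zero => exact fun n => hN' s n hw0
    | succ j ih => exact hn1 (s + j) (w j) ih
  have hd : ∀ j, w (j + 1) - w j ∈ maximalIdeal R ^ (s + j) := fun j =>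
    hn2 (s + j) (w j) (hw j)
  have hd' : ∀ j k, w (j + k) - w j ∈ maximalIdeal R ^ (s + j) := by
    intro j k
    induction k with
    | zero => simp
    | succ k ih =>
      have := Ideal.add_mem _ (Ideal.pow_le_pow_right (by omega : s + j ≤ s + (j + k)) (hd (j + k))) ih
      simpa [add_assoc] using this
  obtain ⟨L, hL⟩ := IsPrecomplete.prec (I := maximalIdeal R) (M := R) inferInstance (f := w) (by
    intro i j hij
    obtain ⟨k, rfl⟩ := Nat.exists_eq_add_of_le hij
    rw [SModEq.sub_mem, smul_eq_mul, Ideal.mul_top, ← neg_sub]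
    exact Ideal.neg_mem_iff _ |>.2 (Ideal.pow_le_pow_right (by omega) (hd' i k)))
  simp only [SModEq.sub_mem, smul_eq_mul, Ideal.mul_top] at hL
  have hLb : ∀ n, L ∈ b n := by
    intro n
    refine krull_closed (maximalIdeal.isMaximal R).ne_top _ _ (fun k => ?_)
    have h1 := sup_le_sup_left (Ideal.pow_le_pow_right (by omega : k ≤ s + k)) (b n) (hw k n)
    have h2 : w k - L ∈ b n ⊔ maximalIdeal R ^ k := Ideal.mem_sup_right (hL k)
    have := Ideal.sub_mem _ h1 h2
    simpa using this
  apply hw0K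
  have h1 := hK L hLb
  have h2 : w s - L ∈ K := hs (hL s)
  have h3 : w s - w 0 ∈ K := by
    have := hd' 0 s
    rw [zero_add, add_zero] at this
    exact hs this
  have := Ideal.sub_mem _ (Ideal.add_mem _ h1 h2) h3
  have e : L + (w s - L) - (w s - w 0) = w0 := by
    change L + (w s - L) - (w s - w0) = w0
    ring
  rwa [e] at this

end chev

section dims

variable {R : Type u} [CommRing R] [IsLocalRing R] [IsNoetherianRing R]

/-- natural number dimension of the quotient by an ideal -/
noncomputable def dn (P : Ideal R) : ℕ := ((ringKrullDim (R ⧸ P)).unbotD 0).toNat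

theorem dn_spec {P : Ideal R} (hP : P ≠ ⊤) : ringKrullDim (R ⧸ P) = dn P := by
  have : Nontrivial (R ⧸ P) := Ideal.Quotient.nontrivial_iff.2 hP
  have : IsLocalRing (R ⧸ P) :=
    IsLocalRing.of_surjective' (Ideal.Quotient.mk P) Ideal.Quotient.mk_surjective
  have h1 : ringKrullDim (R ⧸ P) ≠ ⊤ := ringKrullDim_ne_top
  have h2 : ringKrullDim (R ⧸ P) ≠ ⊥ := ringKrullDim_ne_bot
  unfold dn
  obtain ⟨m, hm⟩ := WithBot.ne_bot_iff_exists.1 h2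
  rw [← hm] at h1 ⊢
  have h3 : m ≠ ⊤ := by rintro rfl; exact h1 rfl
  obtain ⟨k, rfl⟩ := ENat.ne_top_iff_exists.1 h3
  rfl

theorem dn_lt {P Q : Ideal R} [hP : P.IsPrime] (hQ : Q ≠ ⊤) (h : P < Q) : dn Q + 1 ≤ dn P := by
  obtain ⟨r, hr, hrP⟩ := SetLike.exists_of_lt h
  have := ringKrullDim_succ_le_of_surjective (Ideal.Quotient.factor h.le)
    (Ideal.Quotient.factor_surjective h.le) (r := Ideal.Quotient.mk P r)
    (mem_nonZeroDivisors_of_ne_zero (by rwa [Ne, Ideal.Quotient.eq_zero_iff_mem]))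
    (by rw [Ideal.Quotient.factor_mk, Ideal.Quotient.eq_zero_iff_mem]; exact hr)
  rw [dn_spec hQ, dn_spec hP.ne_top] at this
  exact_mod_cast this

theorem dn_le {P Q : Ideal R} [hP : P.IsPrime] (hQ : Q ≠ ⊤) (h : P ≤ Q) : dn Q ≤ dn P := by
  rcases h.eq_or_lt with rfl | h
  · exact le_rfl
  · have := dn_lt hQ h; omega

theorem dn_zero {P : Ideal R} [hP : P.IsPrime] (h : dn P = 0) : P = maximalIdeal R := by
  rcases (le_maximalIdeal hP.ne_top).eq_or_lt with h1 | h1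
  · exact h1
  · have := dn_lt (maximalIdeal.isMaximal R).ne_top h1; omega

theorem dn_max : dn (maximalIdeal R) = 0 := by
  have h := dn_spec (maximalIdeal.isMaximal R).ne_top
  have h2 : ringKrullDim (R ⧸ maximalIdeal R) = 0 :=
    ringKrullDim_eq_zero_of_isField ((Ideal.Quotient.maximal_ideal_iff_isField_quotient _).1
      (maximalIdeal.isMaximal R))
  rw [h2] at h
  exact_mod_cast h.symm

theorem exists_prime_dn {I : Ideal R} {n : ℕ} (h : (n : WithBot ℕ∞) ≤ ringKrullDim (R ⧸ I)) :
    ∃ P : Ideal R, P.IsPrime ∧ I ≤ P ∧ n ≤ dn P := by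
  rw [ringKrullDim_quotient, Order.le_krullDim_iff] at h
  obtain ⟨l, hl⟩ := h
  have key : ∀ k (hk : k ≤ n), k ≤ dn (l ⟨n - k, by omega⟩).1.asIdeal := by
    intro k
    induction k with
    | zero => simp
    | succ k ih =>
      intro hk
      have h1 := ih (by omega)
      have h2 : l ⟨n - (k + 1), by omega⟩ < l ⟨n - k, by omega⟩ := by
        apply l.strictMono
        simp only [Fin.mk_lt_mk]; omega
      have h3 : (l ⟨n - (k + 1), by omega⟩).1.asIdeal < (l ⟨n - k, by omega⟩).1.asIdeal := h2
      have := (l ⟨n - (k + 1), by omega⟩).1.isPrime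
      have := dn_lt (l ⟨n - k, by omega⟩).1.isPrime.ne_top h3
      omega
  exact ⟨_, (l ⟨n - n, by omega⟩).1.isPrime, (l ⟨n - n, by omega⟩).2, key n le_rfl⟩

theorem exists_prime_drop {p : Ideal R} [hp : p.IsPrime] {e : ℕ} (he : dn p = e + 1) {y : R}
    (hy : y ∈ maximalIdeal R) : ∃ P : Ideal R, P.IsPrime ∧ p ≤ P ∧ y ∈ P ∧ e ≤ dn P := by
  have : Nontrivial (R ⧸ p) := Ideal.Quotient.nontrivial_iff.2 hp.ne_top
  have : IsLocalRing (R ⧸ p) :=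
    IsLocalRing.of_surjective' (Ideal.Quotient.mk p) Ideal.Quotient.mk_surjective
  have := IsLocalHom.of_surjective (Ideal.Quotient.mk p) Ideal.Quotient.mk_surjective
  have h1 := ringKrullDim_le_ringKrullDim_quotient_add_card (R := R ⧸ p)
    {Ideal.Quotient.mk p y} (by
      rw [Finset.coe_singleton, Set.singleton_subset_iff]
      have : Ideal.Quotient.mk p y ∈ maximalIdeal (R ⧸ p) := by
        rw [mem_maximalIdeal, mem_nonunits_iff] at hy ⊢
        intro h; exact hy (isUnit_of_map_unit _ _ h)
      rw [SetLike.mem_coe, IsLocalRing.ringJacobson_eq_maximalIdeal]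
      exact this)
  have e1 : Ideal.span (((({Ideal.Quotient.mk p y} : Finset (R ⧸ p))) : Set (R ⧸ p))) =
      (Ideal.span {y}).map (Ideal.Quotient.mk p) := by
    rw [Ideal.map_span, Set.image_singleton, Finset.coe_singleton]
  rw [e1, ringKrullDim_eq_of_ringEquiv (DoubleQuot.quotQuotEquivQuotSup p (Ideal.span {y})),
    dn_spec hp.ne_top, he, Finset.card_singleton] at h1
  have hne : p ⊔ Ideal.span {y} ≠ ⊤ := by
    intro h
    have : p ⊔ Ideal.span {y} ≤ maximalIdeal R := sup_le (le_maximalIdeal hp.ne_top)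
      ((Ideal.span_singleton_le_iff_mem _).2 hy)
    rw [h] at this
    exact (maximalIdeal.isMaximal R).ne_top (top_le_iff.1 this)
  have h2 : (e : WithBot ℕ∞) ≤ ringKrullDim (R ⧸ (p ⊔ Ideal.span {y})) := by
    rw [dn_spec hne] at h1 ⊢
    norm_cast at h1 ⊢
    omega
  obtain ⟨P, hP, hpP, hn⟩ := exists_prime_dn h2
  exact ⟨P, hP, le_sup_left.trans hpP, hpP (Ideal.mem_sup_right (Ideal.mem_span_singleton_self y)), hn⟩

end dims

section chain

variable {R : Type u} [CommRing R] [IsNoetherianRing R]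

/-- `P` is an associated prime of `R/a`, elementwise. -/
def AP (a P : Ideal R) : Prop := P.IsPrime ∧ ∃ x, ∀ r, r ∈ P ↔ r * x ∈ a

theorem AP_iff (a P : Ideal R) : AP a P ↔ P ∈ associatedPrimes R (R ⧸ a) := by
  change _ ↔ IsAssociatedPrime P (R ⧸ a)
  rw [isAssociatedPrime_iff]
  have key : ∀ (x r : R), r ∈ (⊥ : Submodule R (R ⧸ a)).colon {Submodule.mkQ a x} ↔ r * x ∈ a := by
    intro x r
    rw [Submodule.mem_colon_singleton, Submodule.mem_bot, ← map_smul, smul_eq_mul]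
    exact Ideal.Quotient.eq_zero_iff_mem
  constructor
  · rintro ⟨h, x, hx⟩
    refine ⟨h, Submodule.mkQ a x, ?_⟩
    ext r
    rw [hx, key]
  · rintro ⟨h, x, hx⟩
    obtain ⟨x, rfl⟩ := Submodule.mkQ_surjective a x
    refine ⟨h, x, fun r => ?_⟩
    rw [hx, key]

theorem AP_finite (a : Ideal R) : {P | AP a P}.Finite := by
  have : {P | AP a P} = associatedPrimes R (R ⧸ a) := by
    ext P; exact AP_iff a P
  rw [this]
  exact associatedPrimes.finite R (R ⧸ a)

theorem AP.le {a P : Ideal R} (h : AP a P) : a ≤ P := by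
  obtain ⟨_, x, hx⟩ := h
  intro r hr
  exact (hx r).2 (Ideal.mul_mem_right _ _ hr)

theorem exists_AP {a : Ideal R} {w : R} (hw : w ∉ a) : ∃ P, AP a P ∧ ∀ r, r * w ∈ a → r ∈ P := by
  obtain ⟨P, hP, hle⟩ := exists_le_isAssociatedPrime_of_isNoetherianRing R (Submodule.mkQ a w)
    (fun h => hw (Ideal.Quotient.eq_zero_iff_mem.1 h))
  refine ⟨P, (AP_iff a P).2 hP, fun r hr => hle ?_⟩
  rw [Submodule.mem_colon_singleton, Submodule.mem_bot, ← map_smul, smul_eq_mul]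
  exact Ideal.Quotient.eq_zero_iff_mem.2 hr

theorem nzd_of_AP {a : Ideal R} {y : R} (h : ∀ P, AP a P → y ∉ P) : ∀ r, y * r ∈ a → r ∈ a := by
  intro r hr
  by_contra hra
  obtain ⟨P, hP, h1⟩ := exists_AP hra
  exact h P hP (h1 y hr)

theorem nzd_pow {a : Ideal R} {y : R} (h : ∀ r, y * r ∈ a → r ∈ a) (n : ℕ) :
    ∀ r, y ^ n * r ∈ a → r ∈ a := by
  induction n with
  | zero => intro r hr; simpa using hr
  | succ n ih =>
    intro r hr
    rw [pow_succ, mul_assoc] at hr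
    exact h r (ih _ hr)

theorem AP_pow {a : Ideal R} {y : R} (h : ∀ r, y * r ∈ a → r ∈ a) (n : ℕ) {P : Ideal R}
    (hP : AP (a ⊔ Ideal.span {y ^ (n + 1)}) P) : AP (a ⊔ Ideal.span {y}) P := by
  have hle := hP.le
  obtain ⟨hp, x, hx⟩ := hP
  have hy : y ∈ P := hp.mem_of_pow_mem (n + 1) (hle (Ideal.mem_sup_right
    (Ideal.mem_span_singleton_self _)))
  obtain ⟨α, hα, β, hβ, hαβ⟩ := Submodule.mem_sup.1 ((hx y).1 hy)
  obtain ⟨t, rfl⟩ := Ideal.mem_span_singleton'.1 hβ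
  have h1 : x - y ^ n * t ∈ a := by
    apply h
    have : y * (x - y ^ n * t) = α := by
      rw [mul_sub, ← hαβ]; ring
    rwa [this]
  refine ⟨hp, t, fun r => ?_⟩
  rw [hx r]
  constructor
  · intro h2
    obtain ⟨γ, hγ, β, hβ, hγβ⟩ := Submodule.mem_sup.1 h2
    obtain ⟨u, rfl⟩ := Ideal.mem_span_singleton'.1 hβ
    have h3 : r * t - u * y ∈ a := by
      apply nzd_pow h n
      have : y ^ n * (r * t - u * y) = γ - r * (x - y ^ n * t) := by
        rw [mul_sub r, ← hγβ]; ring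
      rw [this]
      exact Ideal.sub_mem _ hγ (Ideal.mul_mem_left _ _ h1)
    exact Submodule.mem_sup.2 ⟨_, h3, u * y, Ideal.mem_span_singleton'.2 ⟨u, rfl⟩, by ring⟩
  · intro h2
    obtain ⟨γ, hγ, β, hβ, hγβ⟩ := Submodule.mem_sup.1 h2
    obtain ⟨u, rfl⟩ := Ideal.mem_span_singleton'.1 hβ
    refine Submodule.mem_sup.2 ⟨r * (x - y ^ n * t) + y ^ n * γ, ?_, u * y ^ (n + 1),
      Ideal.mem_span_singleton'.2 ⟨u, rfl⟩, ?_⟩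
    · exact Ideal.add_mem _ (Ideal.mul_mem_left _ _ h1) (Ideal.mul_mem_left _ _ hγ)
    · have : r * x = r * (x - y ^ n * t) + y ^ n * (r * t) := by ring
      rw [this, ← hγβ]; ring

/-- saturation of `I` with respect to `z` -/
def satI (I : Ideal R) (z : R) : Ideal R where
  carrier := {w | ∃ N : ℕ, z ^ N * w ∈ I}
  add_mem' := by
    rintro a b ⟨N, hN⟩ ⟨M, hM⟩
    refine ⟨N + M, ?_⟩
    have : z ^ (N + M) * (a + b) = z ^ M * (z ^ N * a) + z ^ N * (z ^ M * b) := by ring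
    rw [this]
    exact Ideal.add_mem _ (Ideal.mul_mem_left _ _ hN) (Ideal.mul_mem_left _ _ hM)
  zero_mem' := ⟨0, by simp⟩
  smul_mem' := by
    rintro c a ⟨N, hN⟩
    refine ⟨N, ?_⟩
    have : z ^ N * (c • a) = c * (z ^ N * a) := by rw [smul_eq_mul]; ring
    rw [this]
    exact Ideal.mul_mem_left _ _ hN

theorem le_satI (I : Ideal R) (z : R) : I ≤ satI I z := fun w hw => ⟨0, by simpa using hw⟩

theorem satI_mono {I J : Ideal R} (h : I ≤ J) (z : R) : satI I z ≤ satI J z :=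
  fun _ ⟨N, hN⟩ => ⟨N, h hN⟩

theorem satI_bound (I : Ideal R) (z : R) : ∃ N : ℕ, ∀ w ∈ satI I z, z ^ N * w ∈ I := by
  obtain ⟨S, hS⟩ := (inferInstance : IsNoetherianRing R).noetherian (satI I z)
  have h1 : ∀ w : R, ∃ N : ℕ, w ∈ satI I z → z ^ N * w ∈ I := by
    intro w
    by_cases h : w ∈ satI I z
    · obtain ⟨N, hN⟩ := h
      exact ⟨N, fun _ => hN⟩
    · exact ⟨0, fun h' => absurd h' h⟩
  choose f hf using h1
  refine ⟨∑ s ∈ S, f s, fun w hw => ?_⟩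
  have hle : satI I z ≤ Submodule.comap (LinearMap.mulLeft R (z ^ ∑ s ∈ S, f s)) I := by
    rw [← hS, Submodule.span_le]
    intro s hs
    have hs' : s ∈ satI I z := by rw [← hS]; exact Submodule.subset_span hs
    change z ^ (∑ s ∈ S, f s) * s ∈ I
    obtain ⟨k, hk⟩ := Nat.exists_eq_add_of_le (Finset.single_le_sum (f := f) (fun _ _ => Nat.zero_le _) hs)
    rw [hk, pow_add, mul_comm (z ^ f s), mul_assoc]
    exact Ideal.mul_mem_left _ _ (hf s hs')
  exact hle hw

theorem AP_satI {I P : Ideal R} {z : R} (h : AP (satI I z) P) : AP I P ∧ z ∉ P := by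
  obtain ⟨hp, x, hx⟩ := h
  obtain ⟨N, hN⟩ := satI_bound I z
  have hx1 : x ∉ satI I z := by
    intro h
    exact hp.ne_top ((Ideal.eq_top_iff_one _).2 ((hx 1).2 (by simpa using h)))
  constructor
  · refine ⟨hp, z ^ N * x, fun r => ?_⟩
    rw [hx]
    constructor
    · intro h
      have := hN _ h
      rwa [mul_left_comm] at this
    · intro h
      exact ⟨N, by rwa [mul_left_comm]⟩
  · intro hz
    obtain ⟨M, hM⟩ := (hx z).1 hz
    exact hx1 ⟨M + 1, by rwa [pow_succ, mul_assoc]⟩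

theorem avoid (S1 S2 : Set (Ideal R)) (h1 : S1.Finite) (h2 : S2.Finite)
    (hp : ∀ P ∈ S2, P.IsPrime) (hS : ∀ P ∈ S2, ∀ Q ∈ S1, ¬ Q ≤ P) :
    ∃ z : R, (∀ Q ∈ S1, z ∈ Q) ∧ ∀ P ∈ S2, z ∉ P := by
  have h := (Ideal.subset_union_prime_finite h2 (f := id) ⊤ ⊤ (fun i hi _ _ => hp i hi)
    (I := h1.toFinset.inf id)).not.2 (by
      rintro ⟨P, hP, hle⟩
      obtain ⟨Q, hQ, hQP⟩ := (Ideal.IsPrime.inf_le' (hp P hP)).1 hle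
      exact hS P hP Q (h1.mem_toFinset.1 hQ) hQP)
  obtain ⟨z, hz, hz2⟩ := Set.not_subset.1 h
  refine ⟨z, fun Q hQ => ?_, fun P hP hzP => hz2 (Set.mem_biUnion hP hzP)⟩
  exact (Finset.inf_le (f := id) (h1.mem_toFinset.2 hQ)) hz

variable [IsLocalRing R]

theorem Ch.le {xs : List R} {a J : Ideal R} (h : Ch xs a J) :
    a ≤ J ∧ Ideal.span {y | y ∈ xs} ≤ J := by
  induction h with
  | nil a => exact ⟨le_rfl, by simp⟩
  | nzd x xs a J hx h ih =>
    refine ⟨le_sup_left.trans ih.1, ?_⟩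
    have h2 := span_cons_sup x xs a
    exact le_sup_left.trans (h2.le.trans (sup_le ih.2 ih.1))
  | sat v xs a a' J haa' N hN h ih => exact ⟨haa'.trans ih.1, ih.2⟩

theorem le_radical_of {I : Ideal R} (h : ∀ P : Ideal R, P.IsPrime → I ≤ P → P = maximalIdeal R) :
    maximalIdeal R ≤ I.radical := by
  rw [Ideal.radical_eq_sInf]
  refine le_sInf ?_
  rintro P ⟨h1, h2⟩
  rw [h P h2 h1]

theorem local_inter {a P : Ideal R} [hP : P.IsPrime] {y z w : R} (hy : y ∈ P) (hz : z ∉ P)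
    (hw : ∀ n, w ∈ satI (a ⊔ Ideal.span {y ^ n}) z) : ∃ s, s ∉ P ∧ s * w ∈ a := by
  let S := Localization.AtPrime P
  have : IsNoetherianRing S := IsLocalization.isNoetherianRing P.primeCompl S inferInstance
  have hu : ∀ s, s ∉ P → IsUnit (algebraMap R S s) := fun s hs =>
    IsLocalization.map_units S (⟨s, hs⟩ : P.primeCompl)
  have h1 : algebraMap R S w ∈ a.map (algebraMap R S) := by
    apply krull_closed (I := Ideal.span {algebraMap R S y})
    · intro h
      rw [Ideal.span_singleton_eq_top] at h
      exact (IsLocalization.AtPrime.isUnit_to_map_iff S P y).1 h hy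
    · intro n
      obtain ⟨N, hN⟩ := hw n
      have h2 := Ideal.mem_map_of_mem (algebraMap R S) hN
      rw [Ideal.map_sup, Ideal.map_span, Set.image_singleton, map_mul, map_pow, map_pow,
        Ideal.unit_mul_mem_iff_mem _ ((hu z hz).pow N)] at h2
      rwa [Ideal.span_singleton_pow]
  obtain ⟨m, hm, hmw⟩ := (IsLocalization.algebraMap_mem_map_algebraMap_iff P.primeCompl S a w).1 h1
  exact ⟨m, hm, hmw⟩

theorem chain_claim [IsAdicComplete (maximalIdeal R) R] (K : Ideal R) (s : ℕ)
    (hs : maximalIdeal R ^ s ≤ K) (e : ℕ) : ∀ (a b : Ideal R) (y : R), b ≤ a → a ≤ K →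
    (∀ P, AP a P → dn P = e + 1) → (∀ P : Ideal R, P.IsPrime → b ≤ P → dn P ≤ e + 1) →
    y ∈ maximalIdeal R → (∀ P : Ideal R, P.IsPrime → b ≤ P → dn P = e + 1 → y ∉ P) →
    ∃ (n : ℕ) (xs : List R) (J : Ideal R), 1 ≤ n ∧ xs.length = e ∧ J ≤ K ∧ Ch (y ^ n :: xs) a J ∧
      maximalIdeal R ≤ (Ideal.span {x | x ∈ y ^ n :: xs} ⊔ b).radical := by
  induction e with
  | zero =>
    intro a b y hba haK hAP hb hy hyP
    have hnz : ∀ r, y * r ∈ a → r ∈ a := nzd_of_AP (fun P hP =>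
      hyP P hP.1 (hba.trans hP.le) (hAP P hP))
    refine ⟨s + 1, [], a ⊔ Ideal.span {y ^ (s + 1)}, by omega, rfl, ?_, ?_, ?_⟩
    · refine sup_le haK ((Ideal.span_singleton_le_iff_mem _).2 (hs ?_))
      exact Ideal.pow_le_pow_right (Nat.le_succ s) (Ideal.pow_mem_pow hy _)
    · exact Ch.nzd _ _ _ _ (nzd_pow hnz _) (Ch.nil _)
    · apply le_radical_of
      intro P hP hle
      have hyP' : y ∈ P := hP.mem_of_pow_mem (s + 1)
        (hle (Ideal.mem_sup_left (Ideal.subset_span (by simp))))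
      have h1 := hb P hP (le_sup_right.trans hle)
      have h2 : dn P ≠ 1 := fun h => hyP P hP (le_sup_right.trans hle) h hyP'
      exact dn_zero (by omega)
  | succ e ih =>
    intro a b y hba haK hAP hb hy hyP
    have hnz : ∀ r, y * r ∈ a → r ∈ a := nzd_of_AP (fun P hP =>
      hyP P hP.1 (hba.trans hP.le) (hAP P hP))
    have hdim : ∀ P : Ideal R, P.IsPrime → b ≤ P → y ∈ P → dn P ≤ e + 1 := by
      intro P hP hbP hy'
      have h1 := hb P hP hbP
      have h2 : dn P ≠ e + 1 + 1 := fun h => hyP P hP hbP h hy'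
      omega
    obtain ⟨z, hz1, hz2⟩ := avoid
      ({P | AP (a ⊔ Ideal.span {y}) P ∧ dn P < e + 1} ∪ {maximalIdeal R})
      {P | P ∈ (b ⊔ Ideal.span {y}).minimalPrimes ∧ dn P = e + 1}
      (((AP_finite _).subset (fun P hP => hP.1)).union (Set.finite_singleton _))
      ((Ideal.finite_minimalPrimes_of_isNoetherianRing R _).subset (fun P hP => hP.1))
      (fun P hP => hP.1.1.1) (by
        rintro P ⟨hP, hPd⟩ Q hQ hQP
        have hPt : P ≠ ⊤ := hP.1.1.ne_top
        rcases hQ with ⟨hQ, hQd⟩ | hQ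
        · have := hQ.1
          have := dn_le hPt hQP
          omega
        · rw [Set.mem_singleton_iff] at hQ
          subst hQ
          have := dn_le hPt hQP
          rw [dn_max] at this
          omega)
    have hzm : z ∈ maximalIdeal R := hz1 _ (Or.inr rfl)
    have hzP : ∀ P : Ideal R, P.IsPrime → b ≤ P → y ∈ P → dn P = e + 1 → z ∉ P := by
      intro P hP hbP hyP' hPd
      obtain ⟨Q, hQ, hQP⟩ := Ideal.exists_minimalPrimes_le (I := b ⊔ Ideal.span {y}) (J := P)
        (sup_le hbP ((Ideal.span_singleton_le_iff_mem _).2 hyP'))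
      have := hQ.1.1
      have hQd : dn Q ≤ e + 1 := hdim Q this (le_sup_left.trans hQ.1.2)
        (hQ.1.2 (Ideal.mem_sup_right (Ideal.mem_span_singleton_self y)))
      rcases hQP.eq_or_lt with rfl | hlt
      · exact hz2 Q ⟨hQ, hPd⟩
      · have := dn_lt hP.ne_top hlt
        omega
    have hanti : Antitone (fun n => satI (a ⊔ Ideal.span {y ^ n}) z) := by
      intro i j hij
      refine satI_mono (sup_le_sup_left ?_ a) z
      exact Ideal.span_singleton_le_span_singleton.2 (pow_dvd_pow y hij)
    obtain ⟨n, hn⟩ := chevalley (fun n => satI (a ⊔ Ideal.span {y ^ n}) z) hanti K s hs (by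
      intro w hw
      apply haK
      by_contra hwa
      obtain ⟨p, hp, hpw⟩ := exists_AP hwa
      have := hp.1
      obtain ⟨P, hP, hpP, hyP', hPd⟩ := exists_prime_drop (hAP p hp) hy
      have hbP : b ≤ P := hba.trans (hp.le.trans hpP)
      have hPd' : dn P = e + 1 := le_antisymm (hdim P hP hbP hyP') hPd
      obtain ⟨t, ht, htw⟩ := local_inter hyP' (hzP P hP hbP hyP' hPd') hw
      exact ht (hpP (hpw t htw)))
    have hn' : satI (a ⊔ Ideal.span {y ^ (n + 1)}) z ≤ K := (hanti (Nat.le_succ n)).trans hn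
    have hyof : ∀ P : Ideal R, P.IsPrime → b ⊔ Ideal.span {y ^ (n + 1)} ≤ P → b ≤ P ∧ y ∈ P := by
      intro P hP h
      exact ⟨le_sup_left.trans h, hP.mem_of_pow_mem (n + 1)
        (h (Ideal.mem_sup_right (Ideal.mem_span_singleton_self _)))⟩
    obtain ⟨n', xs, J, hn1, hlen, hJK, hCh, hrad⟩ := ih
      (satI (a ⊔ Ideal.span {y ^ (n + 1)}) z) (b ⊔ Ideal.span {y ^ (n + 1)}) z
      ((sup_le_sup_right hba _).trans (le_satI _ _)) hn'
      (by
        intro P hP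
        obtain ⟨h1, h2⟩ := AP_satI hP
        have h3 := AP_pow hnz n h1
        have h4 : ¬ dn P < e + 1 := fun h => h2 (hz1 P (Or.inl ⟨h3, h⟩))
        have h5 := hdim P h1.1 (hba.trans (le_sup_left.trans h1.le))
          (h3.le (Ideal.mem_sup_right (Ideal.mem_span_singleton_self y)))
        omega)
      (fun P hP h => hdim P hP (hyof P hP h).1 (hyof P hP h).2)
      hzm
      (fun P hP h hd => hzP P hP (hyof P hP h).1 (hyof P hP h).2 hd)
    refine ⟨n + 1, z ^ n' :: xs, J, by omega, by simp [hlen], hJK, ?_, ?_⟩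
    · refine Ch.nzd _ _ _ _ (nzd_pow hnz _) ?_
      obtain ⟨N, hN⟩ := satI_bound (a ⊔ Ideal.span {y ^ (n + 1)}) z
      refine Ch.sat _ _ _ _ _ (le_satI _ z) N (fun w hw => ?_) hCh
      obtain ⟨k, hk⟩ := Nat.exists_eq_add_of_le (Nat.le_mul_of_pos_left N (by omega : 0 < n'))
      rw [← pow_mul, hk, pow_add z N k, mul_comm (z ^ N), mul_assoc]
      exact Ideal.mul_mem_left _ _ (hN w hw)
    · rw [span_cons_sup]
      exact hrad

theorem chain_exists [IsAdicComplete (maximalIdeal R) R] (d : ℕ) (hd : ringKrullDim R = d)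
    (hunm : ∀ P ∈ associatedPrimes R R, ringKrullDim (R ⧸ P) = d)
    (K : Ideal R) (s : ℕ) (hs : maximalIdeal R ^ s ≤ K) :
    ∃ (J : Ideal R) (t : ℕ), J ≤ K ∧ maximalIdeal R ^ t ≤ J ∧
      ∀ (φ : R →+* R) (q : ℕ), (∀ x, φ x = x ^ q) →
        q ^ d * (Module.length R (R ⧸ J)).toNat ≤ (Module.length R (R ⧸ J.map φ)).toNat := by
  have hle : ∀ P : Ideal R, P.IsPrime → dn P ≤ d := by
    intro P hP
    have := ringKrullDim_quotient_le P
    rw [dn_spec hP.ne_top, hd] at this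
    exact_mod_cast this
  have hAP : ∀ P : Ideal R, AP ⊥ P → dn P = d := by
    intro P hP
    have h1 := hP.1
    rw [AP_iff, LinearEquiv.AssociatedPrimes.eq (Submodule.quotEquivOfEqBot (⊥ : Ideal R) rfl)] at hP
    have := hunm P hP
    rw [dn_spec h1.ne_top] at this
    exact_mod_cast this
  have fin : ∀ (xs : List R) (J : Ideal R), xs.length = d → J ≤ K → Ch xs ⊥ J →
      maximalIdeal R ≤ (Ideal.span {x | x ∈ xs}).radical → 
      ∃ (J : Ideal R) (t : ℕ), J ≤ K ∧ maximalIdeal R ^ t ≤ J ∧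
      ∀ (φ : R →+* R) (q : ℕ), (∀ x, φ x = x ^ q) →
        q ^ d * (Module.length R (R ⧸ J)).toNat ≤ (Module.length R (R ⧸ J.map φ)).toNat := by
    intro xs J hl hJ hC hr
    obtain ⟨t, ht⟩ := Ideal.exists_pow_le_of_le_radical_of_fg hr
      ((inferInstance : IsNoetherianRing R).noetherian _)
    refine ⟨J, t, hJ, ht.trans hC.le.2, fun φ q hφ => ?_⟩
    rw [← hl]
    exact ch_main hC hr φ q hφ
  rcases d with _ | e
  · refine fin [] ⊥ rfl bot_le (Ch.nil _) ?_
    apply le_radical_of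
    intro P hP _
    exact dn_zero (Nat.le_zero.1 (hle P hP))
  · obtain ⟨y, hy1, hy2⟩ := avoid {maximalIdeal R}
      {P | P ∈ (⊥ : Ideal R).minimalPrimes ∧ dn P = e + 1} (Set.finite_singleton _)
      ((Ideal.finite_minimalPrimes_of_isNoetherianRing R _).subset (fun P hP => hP.1))
      (fun P hP => hP.1.1.1) (by
        rintro P ⟨hP, hPd⟩ Q hQ hQP
        rw [Set.mem_singleton_iff] at hQ
        subst hQ
        have := dn_le hP.1.1.ne_top hQP
        rw [dn_max] at this
        omega)
    obtain ⟨n, xs, J, hn, hl, hJ, hC, hr⟩ := chain_claim K s hs e ⊥ ⊥ y le_rfl bot_le hAP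
      (fun P hP _ => hle P hP) (hy1 _ rfl) (by
        intro P hP _ hPd
        obtain ⟨Q, hQ, hQP⟩ := Ideal.exists_minimalPrimes_le (I := (⊥ : Ideal R)) (J := P) bot_le
        have := hQ.1.1
        rcases hQP.eq_or_lt with rfl | hlt
        · exact hy2 Q ⟨hQ, hPd⟩
        · have h1 := dn_lt hP.ne_top hlt
          have h2 := hle Q this
          omega)
    rw [sup_bot_eq] at hr
    exact fin _ J (by simp [hl]) hJ hC hr

end chain

section final

variable {R : Type u} [CommRing R] [IsNoetherianRing R] [IsLocalRing R]

/-- `I` contains a power of the maximal ideal -/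
def MP (I : Ideal R) : Prop := ∃ t : ℕ, maximalIdeal R ^ t ≤ I

/-- colength as a natural number -/
noncomputable def ell (I : Ideal R) : ℕ := (colen I).toNat

theorem MP.ne_top {I : Ideal R} (h : MP I) : colen I ≠ ⊤ := by
  obtain ⟨t, ht⟩ := h
  obtain ⟨k, hk, _⟩ := filtration ⊤ t I le_top ht
  rw [hk, colen_top, zero_add]
  exact ENat.coe_ne_top k

theorem MP.cast {I : Ideal R} (h : MP I) : ((ell I : ℕ) : ℕ∞) = colen I :=
  ENat.coe_toNat h.ne_top

theorem MP.mono {I J : Ideal R} (h : MP I) (hIJ : I ≤ J) : MP J := by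
  obtain ⟨t, ht⟩ := h
  exact ⟨t, ht.trans hIJ⟩

theorem MP.max : MP (maximalIdeal R) := ⟨1, by simp⟩

theorem MP.map {I : Ideal R} (h : MP I) (φ : R →+* R) (q : ℕ) (hφ : ∀ x, φ x = x ^ q) :
    MP (I.map φ) := by
  obtain ⟨s, hs⟩ := h
  have h1 : maximalIdeal R ≤ ((maximalIdeal R).map φ).radical := by
    intro x hx
    exact ⟨q, by rw [← hφ]; exact Ideal.mem_map_of_mem φ hx⟩
  obtain ⟨t, ht⟩ := Ideal.exists_pow_le_of_le_radical_of_fg h1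
    ((inferInstance : IsNoetherianRing R).noetherian _)
  refine ⟨t * s, ?_⟩
  rw [pow_mul]
  refine (Ideal.pow_right_mono ht s).trans ?_
  rw [← Ideal.map_pow]
  exact Ideal.map_mono hs

theorem filt_ell {I K : Ideal R} (hI : MP I) (h : I ≤ K) : ∃ k : ℕ, ell I = ell K + k ∧
    ∀ (φ : R →+* R) (q : ℕ), (∀ x, φ x = x ^ q) →
      ell (I.map φ) ≤ ell (K.map φ) + k * ell ((maximalIdeal R).map φ) := by
  obtain ⟨s, hs⟩ := hI
  obtain ⟨k, hk, h2⟩ := filtration K s I h hs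
  have hI : MP I := ⟨s, hs⟩
  have hK := hI.mono h
  refine ⟨k, ?_, fun φ q hφ => ?_⟩
  · rw [← hI.cast, ← hK.cast] at hk
    exact_mod_cast hk
  · have h3 := h2 φ
    rw [← (hI.map φ q hφ).cast, ← (hK.map φ q hφ).cast, ← (MP.max.map φ q hφ).cast] at h3
    exact_mod_cast h3

theorem ell_top : ell (⊤ : Ideal R) = 0 := by simp [ell, colen_top]

theorem ell_max : ell (maximalIdeal R) = 1 := by simp [ell, colen_max]

theorem ell_upper {I : Ideal R} (hI : MP I) (φ : R →+* R) (q : ℕ) (hφ : ∀ x, φ x = x ^ q) :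
    ell (I.map φ) ≤ ell I * ell ((maximalIdeal R).map φ) := by
  obtain ⟨k, hk, h⟩ := filt_ell hI le_top
  have := h φ q hφ
  rw [ell_top, zero_add] at hk
  rw [Ideal.map_top, ell_top, zero_add] at this
  rwa [hk]

theorem limit_ell (p d : ℕ) (hp : 2 ≤ p) (φ : ℕ → R →+* R) (hφ : ∀ e x, φ e x = x ^ p ^ e)
    (hJ : ∀ K : Ideal R, MP K → ∃ J : Ideal R, J ≤ K ∧ MP J ∧ ∀ e,
      (p ^ e) ^ d * ell J ≤ ell (J.map (φ e)))
    (hL : Tendsto (fun e : ℕ => (ell ((maximalIdeal R).map (φ e)) : ℝ) / (p : ℝ) ^ (e * d))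
      atTop (nhds 1)) (K : Ideal R) (hK : MP K) :
    Tendsto (fun e : ℕ => (ell (K.map (φ e)) : ℝ) / (p : ℝ) ^ (e * d)) atTop (nhds (ell K)) := by
  obtain ⟨J, hJK, hJ, hJe⟩ := hJ K hK
  obtain ⟨k, hk, h⟩ := filt_ell hJ hJK
  have hpos : ∀ e : ℕ, (0 : ℝ) < (p : ℝ) ^ (e * d) := fun e => by
    have : (0 : ℝ) < p := by exact_mod_cast (by omega : 0 < p)
    positivity
  have hlo : Tendsto (fun e : ℕ => ((ell K : ℝ) + k) - k *
      ((ell ((maximalIdeal R).map (φ e)) : ℝ) / (p : ℝ) ^ (e * d))) atTop (nhds (ell K)) := by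
    have := (tendsto_const_nhds (x := ((ell K : ℝ) + k))).sub (hL.const_mul (k : ℝ))
    simpa using this
  have hup : Tendsto (fun e : ℕ => (ell K : ℝ) *
      ((ell ((maximalIdeal R).map (φ e)) : ℝ) / (p : ℝ) ^ (e * d))) atTop (nhds (ell K)) := by
    have := hL.const_mul (ell K : ℝ)
    simpa using this
  refine tendsto_of_tendsto_of_tendsto_of_le_of_le hlo hup ?_ ?_
  · intro e
    have h1 := (hJe e).trans (h (φ e) _ (hφ e))
    rw [hk, ← pow_mul] at h1
    have h2 : (p : ℝ) ^ (e * d) * ((ell K : ℝ) + k) ≤ ell (K.map (φ e)) +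
      k * ell ((maximalIdeal R).map (φ e)) := by exact_mod_cast h1
    change _ ≤ _ / _
    rw [le_div_iff₀ (hpos e), sub_mul, mul_assoc, div_mul_cancel₀ _ (hpos e).ne']
    linarith
  · intro e
    have h1 := ell_upper hK (φ e) _ (hφ e)
    change _ / _ ≤ _ * (_ / _)
    rw [← mul_div_assoc]
    have h2 : (ell (K.map (φ e)) : ℝ) ≤ (ell K : ℝ) * ell ((maximalIdeal R).map (φ e)) := by
      exact_mod_cast h1
    exact div_le_div_of_nonneg_right h2 (hpos e).le

theorem ell_frob (p d : ℕ) (hp : 2 ≤ p) (φ : ℕ → R →+* R) (hφ : ∀ e x, φ e x = x ^ p ^ e)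
    (hJ : ∀ K : Ideal R, MP K → ∃ J : Ideal R, J ≤ K ∧ MP J ∧ ∀ e,
      (p ^ e) ^ d * ell J ≤ ell (J.map (φ e)))
    (hL : Tendsto (fun e : ℕ => (ell ((maximalIdeal R).map (φ e)) : ℝ) / (p : ℝ) ^ (e * d))
      atTop (nhds 1)) (K : Ideal R) (hK : MP K) : ell (K.map (φ 1)) = p ^ d * ell K := by
  have h1 := limit_ell p d hp φ hφ hJ hL _ (hK.map (φ 1) _ (hφ 1))
  have h2 := ((limit_ell p d hp φ hφ hJ hL K hK).comp (tendsto_add_atTop_nat 1)).const_mul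
    ((p : ℝ) ^ d)
  have hp0 : (p : ℝ) ≠ 0 := by exact_mod_cast (by omega : p ≠ 0)
  have h3 : (fun e : ℕ => (ell ((K.map (φ 1)).map (φ e)) : ℝ) / (p : ℝ) ^ (e * d)) =
      fun e => (p : ℝ) ^ d * (((fun e : ℕ => (ell (K.map (φ e)) : ℝ) / (p : ℝ) ^ (e * d)) ∘
        (fun e => e + 1)) e) := by
    funext e
    have h4 : (φ e).comp (φ 1) = φ (e + 1) := by
      ext x
      rw [RingHom.comp_apply, hφ, hφ, hφ, ← pow_mul]
      congr 1
      ring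
    rw [Ideal.map_map, h4, Function.comp_apply]
    have h5 : (p : ℝ) ^ ((e + 1) * d) = (p : ℝ) ^ (e * d) * (p : ℝ) ^ d := by
      rw [← pow_add]; congr 1; ring
    rw [h5]
    field_simp
  rw [h3] at h1
  have := tendsto_nhds_unique h1 h2
  exact_mod_cast this

theorem one_le_colen {C : Ideal R} (h : C ≠ ⊤) : 1 ≤ colen C := by
  rw [← colen_max (R := R)]
  exact colen_anti (le_maximalIdeal h)

/-- the colon ideal `(I : g)` -/
def col (I : Ideal R) (g : R) : Ideal R := Submodule.comap (LinearMap.mulRight R g) I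

theorem mem_col {I : Ideal R} {g r : R} : r ∈ col I g ↔ r * g ∈ I := Iff.rfl

theorem colen_col (I : Ideal R) (g : R) :
    colen I = colen (I ⊔ Ideal.span {g}) + colen (col I g) := colen_colon (fun _ => Iff.rfl)

theorem exists_min_gens : ∃ (n : ℕ) (x : Fin n → R), maximalIdeal R = Ideal.span (Set.range x) ∧
    ∀ i, x i ∉ maximalIdeal R ^ 2 ⊔ Ideal.span (x '' {i}ᶜ) := by
  classical
  have hex : ∃ n : ℕ, ∃ x : Fin n → R, maximalIdeal R = Ideal.span (Set.range x) := by
    obtain ⟨n, x, hx⟩ := Submodule.fg_iff_exists_fin_generating_family.1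
      ((inferInstance : IsNoetherianRing R).noetherian (maximalIdeal R))
    exact ⟨n, x, hx.symm⟩
  obtain ⟨x, hx⟩ := Nat.find_spec hex
  refine ⟨Nat.find hex, x, hx, ?_⟩
  have hmin := fun m => Nat.find_min hex (m := m)
  generalize Nat.find hex = n at x hx hmin
  intro i hi
  rcases n with _ | k
  · exact i.elim0
  · apply hmin k (Nat.lt_succ_self k)
    refine ⟨x ∘ i.succAbove, ?_⟩
    rw [Set.range_comp, Fin.range_succAbove]
    apply le_antisymm
    · refine Submodule.le_of_le_smul_of_le_jacobson_bot (I := maximalIdeal R)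
        ((inferInstance : IsNoetherianRing R).noetherian _)
        (IsLocalRing.jacobson_eq_maximalIdeal _ bot_ne_top).ge ?_
      rw [smul_eq_mul, ← pow_two, sup_comm]
      nth_rw 1 [hx]
      rw [Ideal.span_le]
      rintro _ ⟨j, rfl⟩
      by_cases hj : j = i
      · subst hj; exact hi
      · exact Ideal.mem_sup_right (Ideal.subset_span ⟨j, hj, rfl⟩)
    · rw [hx]
      exact Ideal.span_mono (Set.image_subset_range _ _)

theorem colen_sq_ge {n : ℕ} (x : Fin n → R) (hx : maximalIdeal R = Ideal.span (Set.range x))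
    (hmin : ∀ i, x i ∉ maximalIdeal R ^ 2 ⊔ Ideal.span (x '' {i}ᶜ)) :
    ((n + 1 : ℕ) : ℕ∞) ≤ colen (maximalIdeal R ^ 2) := by
  have key : ∀ S : Finset (Fin n), colen (maximalIdeal R ^ 2 ⊔ Ideal.span (x '' (S : Set (Fin n)))) +
      (S.card : ℕ∞) ≤ colen (maximalIdeal R ^ 2) := by
    intro S
    induction S using Finset.induction_on with
    | empty => simp
    | insert i S hi ih =>
      refine le_trans ?_ ih
      rw [colen_col (maximalIdeal R ^ 2 ⊔ Ideal.span (x '' (S : Set (Fin n)))) (x i),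
        Finset.card_insert_of_notMem hi, Finset.coe_insert, Set.image_insert_eq,
        Ideal.span_insert, sup_comm (Ideal.span {x i}), sup_assoc]
      have h1 : 1 ≤ colen (col (maximalIdeal R ^ 2 ⊔ Ideal.span (x '' (S : Set (Fin n)))) (x i)) := by
        apply one_le_colen
        intro h
        have h2 := (Ideal.eq_top_iff_one _).1 h
        rw [mem_col, one_mul] at h2
        have hsub : ((S : Set (Fin n))) ⊆ {i}ᶜ := by
          intro j hj hji
          rw [Set.mem_singleton_iff] at hji
          subst hji
          exact hi hj
        have h3 : maximalIdeal R ^ 2 ⊔ Ideal.span (x '' (S : Set (Fin n))) ≤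
            maximalIdeal R ^ 2 ⊔ Ideal.span (x '' {i}ᶜ) :=
          sup_le_sup_left (Ideal.span_mono (Set.image_mono hsub)) _
        exact hmin i (h3 h2)
      push_cast
      rw [add_comm (S.card : ℕ∞) 1, ← add_assoc]
      gcongr
  have h := key Finset.univ
  rw [Finset.coe_univ, Set.image_univ, ← hx, sup_eq_right.2 (Ideal.pow_le_self two_ne_zero),
    colen_max, Finset.card_univ, Fintype.card_fin] at h
  push_cast
  rwa [add_comm]

theorem lechInd_of {n : ℕ} (f : Fin n → R) (Q : Ideal R) (hQ : Q = Ideal.span (Set.range f))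
    (hMP : MP Q) (hge : (n + 1) * ell Q ≤ ell (Q ^ 2)) : LechInd f := by
  classical
  intro a ha j
  rw [← hQ]
  by_contra haj
  have hMP2 : MP (Q ^ 2) := by
    obtain ⟨t, ht⟩ := hMP
    refine ⟨t * 2, ?_⟩
    rw [pow_mul]
    exact Ideal.pow_right_mono ht 2
  have hfQ : ∀ i, f i ∈ Q := fun i => by rw [hQ]; exact Ideal.subset_span ⟨i, rfl⟩
  have hcol : ∀ (I : Ideal R) i, Q ^ 2 ≤ I → Q ≤ col I (f i) := by
    intro I i hI r hr
    rw [mem_col]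
    apply hI
    rw [pow_two]
    exact Ideal.mul_mem_mul hr (hfQ i)
  have key : ∀ S : Finset (Fin n), colen (Q ^ 2) ≤ colen (Q ^ 2 ⊔ Ideal.span (f '' (S : Set (Fin n)))) +
      (S.card : ℕ∞) * colen Q := by
    intro S
    induction S using Finset.induction_on with
    | empty => simp
    | insert i S hi ih =>
      refine le_trans ih ?_
      rw [colen_col (Q ^ 2 ⊔ Ideal.span (f '' (S : Set (Fin n)))) (f i),
        Finset.card_insert_of_notMem hi, Finset.coe_insert, Set.image_insert_eq,
        Ideal.span_insert, sup_comm (Ideal.span {f i}), sup_assoc]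
      have h1 := colen_anti (hcol (Q ^ 2 ⊔ Ideal.span (f '' (S : Set (Fin n)))) i le_sup_left)
      push_cast
      rw [add_comm (S.card : ℕ∞) 1, add_mul, one_mul, ← add_assoc]
      gcongr
  have h := key (Finset.univ.erase j)
  set I := Q ^ 2 ⊔ Ideal.span (f '' ((Finset.univ.erase j : Finset (Fin n)) : Set (Fin n))) with hI
  have hsup : I ⊔ Ideal.span {f j} = Q := by
    apply le_antisymm
    · refine sup_le (sup_le (Ideal.pow_le_self two_ne_zero) ?_) ?_
      · rw [Ideal.span_le]; rintro _ ⟨i, _, rfl⟩; exact hfQ i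
      · rw [Ideal.span_singleton_le_iff_mem]; exact hfQ j
    · nth_rw 1 [hQ]
      rw [Ideal.span_le]
      rintro _ ⟨i, rfl⟩
      by_cases hij : i = j
      · subst hij; exact Ideal.mem_sup_right (Ideal.mem_span_singleton_self _)
      · exact Ideal.mem_sup_left (Ideal.mem_sup_right (Ideal.subset_span ⟨i, by simp [hij], rfl⟩))
  have haC : a j ∈ col I (f j) := by
    rw [mem_col]
    rw [← Finset.add_sum_erase _ _ (Finset.mem_univ j)] at ha
    rw [eq_neg_of_add_eq_zero_left ha]
    refine (Ideal.neg_mem_iff _).2 (Ideal.sum_mem _ fun i hi => ?_)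
    exact Ideal.mul_mem_left _ _ (Ideal.mem_sup_right (Ideal.subset_span ⟨i, hi, rfl⟩))
  have hQC := hcol I j le_sup_left
  have hMPC : MP (col I (f j)) := hMP.mono hQC
  -- strictness
  have hlt : ell (col I (f j)) + 1 ≤ ell Q := by
    have h1 := colen_col Q (a j)
    have h2 : 1 ≤ colen (col Q (a j)) := by
      apply one_le_colen
      intro h
      have h2 := (Ideal.eq_top_iff_one _).1 h
      rw [mem_col, one_mul] at h2
      exact haj h2
    have h3 : colen (col I (f j)) ≤ colen (Q ⊔ Ideal.span {a j}) :=
      colen_anti (sup_le hQC ((Ideal.span_singleton_le_iff_mem _).2 haC))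
    have h4 : colen (col I (f j)) + 1 ≤ colen Q := by rw [h1]; gcongr
    rw [← hMP.cast, ← hMPC.cast] at h4
    exact_mod_cast h4
  rw [colen_col I (f j), hsup, ← hMP.cast, ← hMP2.cast, ← hMPC.cast,
    Finset.card_erase_of_mem (Finset.mem_univ j), Finset.card_univ, Fintype.card_fin] at h
  have h' : ell (Q ^ 2) ≤ ell Q + ell (col I (f j)) + (n - 1) * ell Q := by exact_mod_cast h
  have hn : 0 < n := j.pos
  obtain ⟨k, rfl⟩ : ∃ k, n = k + 1 := ⟨n - 1, by omega⟩
  rw [Nat.add_sub_cancel] at h'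
  nlinarith

theorem regular_of_lim (p d : ℕ) (hp : 2 ≤ p) (φ : ℕ → R →+* R) (hφ : ∀ e x, φ e x = x ^ p ^ e)
    (hd : ringKrullDim R = d)
    (hJ : ∀ K : Ideal R, MP K → ∃ J : Ideal R, J ≤ K ∧ MP J ∧ ∀ e,
      (p ^ e) ^ d * ell J ≤ ell (J.map (φ e)))
    (hL : Tendsto (fun e : ℕ => (ell ((maximalIdeal R).map (φ e)) : ℝ) / (p : ℝ) ^ (e * d))
      atTop (nhds 1)) : IsRegularLocal R := by
  obtain ⟨n, x, hx, hmin⟩ := exists_min_gens (R := R)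
  have hsq := colen_sq_ge x hx hmin
  have hMP2 : MP (maximalIdeal R ^ 2) := ⟨2, le_rfl⟩
  rw [← hMP2.cast] at hsq
  have hsq' : n + 1 ≤ ell (maximalIdeal R ^ 2) := by exact_mod_cast hsq
  have h1 := ell_frob p d hp φ hφ hJ hL _ MP.max
  have h2 := ell_frob p d hp φ hφ hJ hL _ hMP2
  rw [ell_max, mul_one] at h1
  rw [Ideal.map_pow] at h2
  have hQ : (maximalIdeal R).map (φ 1) = Ideal.span (Set.range fun i => x i ^ p) := by
    nth_rw 1 [hx]
    rw [Ideal.map_span, ← Set.range_comp]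
    congr 2
    funext i
    simp [hφ]
  have hMPQ := (MP.max (R := R)).map (φ 1) _ (hφ 1)
  have hind : LechInd (fun i => x i ^ p) := by
    refine lechInd_of _ _ hQ hMPQ ?_
    rw [h1, h2, mul_comm]
    exact Nat.mul_le_mul_left _ hsq'
  have h3 := lech_lower x (fun i => by rw [hx]; exact Ideal.subset_span ⟨i, rfl⟩) _
    (fun _ => p) rfl (fun _ => by omega) hind
  rw [← hQ, ← hMPQ.cast, h1, Finset.prod_const, Finset.card_univ, Fintype.card_fin] at h3
  have h4 : p ^ n ≤ p ^ d := by exact_mod_cast h3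
  have h5 : n ≤ d := (Nat.pow_le_pow_iff_right (by omega)).1 h4
  refine ⟨inferInstance, d, fun i => if h : (i : ℕ) < n then x ⟨i, h⟩ else 0, hd, ?_⟩
  rw [hx]
  apply le_antisymm
  · rw [Ideal.span_le]
    rintro _ ⟨i, rfl⟩
    refine Ideal.subset_span ⟨⟨i, by omega⟩, ?_⟩
    simp
  · rw [Ideal.span_le]
    rintro _ ⟨i, rfl⟩
    dsimp only
    split_ifs with h
    · exact Ideal.subset_span ⟨_, rfl⟩
    · exact Ideal.zero_mem _

theorem ell_of_regular (p d : ℕ) (hp : 2 ≤ p) (φ : ℕ → R →+* R) (hφ : ∀ e x, φ e x = x ^ p ^ e)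
    (hJ : ∀ K : Ideal R, MP K → ∃ J : Ideal R, J ≤ K ∧ MP J ∧ ∀ e,
      (p ^ e) ^ d * ell J ≤ ell (J.map (φ e)))
    (x : Fin d → R) (hx : maximalIdeal R = Ideal.span (Set.range x)) (e : ℕ) :
    ell ((maximalIdeal R).map (φ e)) = p ^ (e * d) := by
  have hMPQ := (MP.max (R := R)).map (φ e) _ (hφ e)
  apply le_antisymm
  · have hQ : (maximalIdeal R).map (φ e) = Ideal.span (Set.range fun i => x i ^ p ^ e) := by
      nth_rw 1 [hx]
      rw [Ideal.map_span, ← Set.range_comp]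
      congr 2
      funext i
      simp [hφ]
    have h := lech_upper x hx _ (fun _ => p ^ e) rfl (fun _ => Nat.one_le_pow _ _ (by omega))
    rw [← hQ, ← hMPQ.cast, Finset.prod_const, Finset.card_univ, Fintype.card_fin, ← pow_mul] at h
    exact_mod_cast h
  · obtain ⟨J, hJm, hJ, h⟩ := hJ _ MP.max
    have h1 := (h e).trans (ell_upper hJ (φ e) _ (hφ e))
    have h2 : 1 ≤ ell J := by
      have := one_le_colen (C := J) (by
        rintro rfl
        exact (maximalIdeal.isMaximal R).ne_top (top_le_iff.1 hJm))
      rw [← hJ.cast] at this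
      exact_mod_cast this
    rw [mul_comm, ← pow_mul] at h1
    exact Nat.le_of_mul_le_mul_left h1 h2

end final

theorem regular_iff_hilbert_kunz_one (A : Type*) [CommRing A] [IsLocalRing A]
    [IsNoetherianRing A] (p : ℕ) [Fact p.Prime] [CharP A p]
    (hcomp : IsAdicComplete (IsLocalRing.maximalIdeal A) A)
    (d : ℕ) (hd : ringKrullDim A = d)
    (hunmixed : ∀ P ∈ associatedPrimes A A, ringKrullDim (A ⧸ P) = d)
    (L : ℝ)
    (hL : Filter.Tendsto
      (fun e : ℕ =>
        ((moduleLength A (A ⧸ (IsLocalRing.maximalIdeal A).bracketPow (p ^ e))).toNat : ℝ) /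
          (p : ℝ) ^ (e * d))
      Filter.atTop (nhds L)) :
    IsRegularLocal A ↔ L = 1 := by
  have hp : 2 ≤ p := (Fact.out : p.Prime).two_le
  have hφ : ∀ (e : ℕ) (x : A), iterateFrobenius A p e x = x ^ p ^ e :=
    fun e x => iterateFrobenius_def p e x
  have hJ : ∀ K : Ideal A, MP K → ∃ J : Ideal A, J ≤ K ∧ MP J ∧ ∀ e,
      (p ^ e) ^ d * ell J ≤ ell (J.map (iterateFrobenius A p e)) := by
    rintro K ⟨s, hs⟩
    obtain ⟨J, t, hJK, ht, h⟩ := chain_exists d hd hunmixed K s hs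
    exact ⟨J, hJK, ⟨t, ht⟩, fun e => h _ _ (hφ e)⟩
  have hlen : ∀ e : ℕ,
      (moduleLength A (A ⧸ (IsLocalRing.maximalIdeal A).bracketPow (p ^ e))).toNat =
        ell ((maximalIdeal A).map (iterateFrobenius A p e)) := by
    intro e
    have h1 : (maximalIdeal A).map (iterateFrobenius A p e) =
        (maximalIdeal A).bracketPow (p ^ e) := by
      unfold Ideal.map Ideal.bracketPow
      congr 1
    rw [h1, ell, colen, Module.length_eq_height]
    rfl
  simp only [hlen] at hL
  constructor
  · rintro ⟨_, d', x, hd', hx⟩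
    rw [hd] at hd'
    have : d = d' := by exact_mod_cast hd'
    subst this
    have h1 : ∀ e, ((ell ((maximalIdeal A).map (iterateFrobenius A p e)) : ℕ) : ℝ) /
        (p : ℝ) ^ (e * d) = 1 := by
      intro e
      rw [ell_of_regular p d hp _ hφ hJ x hx e]
      have : (p : ℝ) ≠ 0 := by exact_mod_cast (by omega : p ≠ 0)
      push_cast
      exact div_self (pow_ne_zero _ this)
    simp only [h1] at hL
    exact tendsto_nhds_unique hL tendsto_const_nhds
  · rintro rfl
    exact regular_of_lim p d hp _ hφ hd hJ hL
end
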